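/- arXiv:0802.3320 — 6 statements merged into one kernel-verified Lean document; each statement's English description precedes it below -/
import Mathlib

section
/- For every integer n and every natural number k, the function f(r, z) = (cos r)^{|n|} · P_k^{0,|n|}(cos 2r) · e^{inz} (of the real variables r ∈ (0, π/2) and z ∈ ℝ, with values in ℂ) satisfies L f = -(4k(k+|n|+1) + 2|n|) · f, where L is the differential operator L f = ∂²f/∂r² + 2·cot(2r)·∂f/∂r + tan²(r)·∂²f/∂z². -/
open Real

/-- The Jacobi polynomial `P_k^{0,m}` defined by the Rodrigues-type formula. -/
noncomputable def jacobiP (k m : ℕ) (x : ℝ) : ℝ :=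
  ((-1 : ℝ) ^ k / (2 ^ k * (Nat.factorial k : ℝ) * (1 + x) ^ m)) *
    iteratedDeriv k (fun y : ℝ => (1 + y) ^ m * (1 - y ^ 2) ^ k) x

/-- The function `f(r,z) = (cos r)^{|n|} P_k^{0,|n|}(cos 2r) e^{inz}`. -/
noncomputable def eigenFun (n : ℤ) (k : ℕ) (r z : ℝ) : ℂ :=
  (((Real.cos r) ^ n.natAbs * jacobiP k n.natAbs (Real.cos (2 * r)) : ℝ) : ℂ) *
    Complex.exp ((n : ℂ) * (z : ℂ) * Complex.I)

open Polynomial in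
lemma jac_poly (m k : ℕ) (j : ℕ) :
    (1 - X ^ 2 : ℝ[X]) * derivative^[j+2] ((1 + X) ^ m * (1 - X ^ 2) ^ k : ℝ[X]) =
      (C (m:ℝ) - C ((m:ℝ) + 2 * k) * X + C (2 * ((j:ℝ) + 1)) * X) *
        derivative^[j+1] ((1 + X) ^ m * (1 - X ^ 2) ^ k : ℝ[X]) +
      C (((j:ℝ) + 1) * (j - (m + 2 * k))) * derivative^[j] ((1 + X) ^ m * (1 - X ^ 2) ^ k : ℝ[X]) := by
  induction j with
  | zero =>
    have h0 : (1 - X ^ 2 : ℝ[X]) * derivative ((1 + X) ^ m * (1 - X ^ 2) ^ k : ℝ[X]) =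
        (C (m:ℝ) - C ((m:ℝ) + 2 * k) * X) * ((1 + X) ^ m * (1 - X ^ 2) ^ k : ℝ[X]) := by
      have h1 : (1 + X) * derivative ((1 + X : ℝ[X]) ^ m) = (m : ℝ[X]) * (1 + X) ^ m := by
        cases m with
        | zero => simp
        | succ m => simp [derivative_pow]; ring
      have h2 : (1 - X ^ 2) * derivative ((1 - X ^ 2 : ℝ[X]) ^ k)
          = -(2 * (k : ℝ[X])) * X * (1 - X ^ 2) ^ k := by
        cases k with
        | zero => simp
        | succ k =>
          have hC : (C 2 : ℝ[X]) = 2 := map_ofNat C 2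
          simp [derivative_pow, hC]; ring
      rw [derivative_mul]
      simp only [map_add, map_mul, map_natCast, map_ofNat]
      linear_combination (1 - X) * (1 - X ^ 2) ^ k * h1 + (1 + X) ^ m * h2
    have h := congrArg derivative h0
    simp only [Function.iterate_succ_apply', Function.iterate_zero_apply] at *
    generalize ((1 + X) ^ m * (1 - X ^ 2) ^ k : ℝ[X]) = p at *
    simp only [derivative_mul, derivative_sub, derivative_add, derivative_C, derivative_X, derivative_X_pow, derivative_one] at h
    have hC : (C 2 : ℝ[X]) = 2 := map_ofNat C 2
    simp [hC] at h ⊢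
    linear_combination h
  | succ j ih =>
    have h := congrArg derivative ih
    simp only [Function.iterate_succ_apply'] at *
    generalize derivative^[j] ((1 + X) ^ m * (1 - X ^ 2) ^ k : ℝ[X]) = p at *
    simp only [derivative_mul, derivative_sub, derivative_add, derivative_C, derivative_X, derivative_X_pow, derivative_one] at h
    have hC : (C 2 : ℝ[X]) = 2 := map_ofNat C 2
    simp [hC] at h ⊢
    linear_combination h

open Polynomial in
lemma iter_poly (p : ℝ[X]) (k : ℕ) :
    iteratedDeriv k (fun y => p.eval y) = fun y => (derivative^[k] p).eval y := by
  induction k with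
  | zero => simp
  | succ k ih =>
    rw [iteratedDeriv_succ, ih]
    funext y
    rw [Polynomial.deriv, Function.iterate_succ_apply']

open Polynomial in
lemma eigen_form (n : ℤ) (k : ℕ) : ∃ (K : ℝ) (g : ℝ[X]),
    (∀ x : ℝ, (1 - x ^ 2) * (derivative (derivative g)).eval x =
      ((n.natAbs : ℝ) - (n.natAbs - 2) * x) * (derivative g).eval x
        - ((k:ℝ) + 1) * (n.natAbs + k) * g.eval x) ∧
    ∀ r z : ℝ, Real.cos r ≠ 0 → eigenFun n k r z =
      (((Real.cos r ^ n.natAbs)⁻¹ * g.eval (Real.cos (2 * r)) : ℝ) : ℂ) *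
        (K * Complex.exp ((n : ℂ) * (z : ℂ) * Complex.I)) := by
  set m := n.natAbs with hm
  refine ⟨(-1 : ℝ) ^ k / (2 ^ k * (Nat.factorial k : ℝ) * 2 ^ m),
    derivative^[k] ((1 + X) ^ m * (1 - X ^ 2) ^ k : ℝ[X]), ?_, ?_⟩
  · intro x
    have h := congrArg (Polynomial.eval x) (jac_poly m k k)
    simp only [Function.iterate_succ_apply'] at h
    generalize derivative^[k] ((1 + X) ^ m * (1 - X ^ 2) ^ k : ℝ[X]) = p at *
    simp at h
    linear_combination h
  · intro r z hc
    have h := iter_poly ((1 + X) ^ m * (1 - X ^ 2) ^ k : ℝ[X]) k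
    simp only [eval_mul, eval_pow, eval_add, eval_sub, eval_one, eval_X] at h
    unfold eigenFun jacobiP
    rw [← hm, h, ← mul_assoc (Complex.ofReal _), ← Complex.ofReal_mul]
    congr 2
    have : 1 + Real.cos (2 * r) = 2 * Real.cos r ^ 2 := by rw [Real.cos_two_mul]; ring
    rw [this]
    field_simp
    rw [mul_pow, ← pow_mul, ← pow_mul, mul_comm m 2]
    ring

/-- For every `n : ℤ` and `k : ℕ`, the function
`f(r,z) = (cos r)^{|n|} P_k^{0,|n|}(cos 2r) e^{inz}` satisfies
`L f = -(4k(k+|n|+1) + 2|n|) f`, where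
`L f = ∂²f/∂r² + 2 cot(2r) ∂f/∂r + tan²(r) ∂²f/∂z²`. -/
theorem stmt_0 (n : ℤ) (k : ℕ) (r : ℝ) (hr : r ∈ Set.Ioo 0 (Real.pi / 2)) (z : ℝ) :
    deriv (fun r' => deriv (fun r'' => eigenFun n k r'' z) r') r
      + 2 * ((Real.cos (2 * r) / Real.sin (2 * r) : ℝ) : ℂ) *
          deriv (fun r' => eigenFun n k r' z) r
      + ((Real.tan r ^ 2 : ℝ) : ℂ) *
          deriv (fun z' => deriv (fun z'' => eigenFun n k r z'') z') z
    = -(4 * (k : ℂ) * ((k : ℂ) + (n.natAbs : ℂ) + 1) + 2 * (n.natAbs : ℂ)) *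
        eigenFun n k r z := by
  obtain ⟨K, g, hg, hf⟩ := eigen_form n k
  have hn : ((n:ℂ)) ^ 2 = ((n.natAbs : ℝ) : ℂ) ^ 2 := by
    have : (n:ℤ)^2 = (n.natAbs : ℤ)^2 := (Int.natAbs_sq n).symm
    have h := congrArg (Int.cast : ℤ → ℂ) this
    simp only [Int.cast_pow, Int.cast_natCast] at h
    rw [h, Complex.ofReal_natCast]
  -- the z-part
  have hz1 : ∀ (A : ℂ) (z : ℝ), HasDerivAt
      (fun z : ℝ => A * Complex.exp ((n : ℂ) * (z : ℂ) * Complex.I))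
      ((A * (n * Complex.I)) * Complex.exp ((n : ℂ) * (z : ℂ) * Complex.I)) z := by
    intro A z
    have h1 : HasDerivAt (fun z : ℝ => (n : ℂ) * (z : ℂ) * Complex.I) (n * 1 * Complex.I) z :=
      ((Complex.ofRealCLM.hasDerivAt (x := z)).const_mul (n:ℂ)).mul_const Complex.I
    refine ((h1.cexp).const_mul A).congr_deriv ?_
    ring
  have hz2 : deriv (fun z' => deriv (fun z'' => eigenFun n k r z'') z') z
      = -((n.natAbs : ℝ) : ℂ) ^ 2 * eigenFun n k r z := by
    unfold eigenFun
    simp_rw [fun A z => (hz1 A z).deriv]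
    generalize Complex.ofReal _ = B
    generalize Complex.exp _ = F
    linear_combination (-1 : ℂ) * B * F * hn + B * F * (n:ℂ) ^ 2 * Complex.I_sq
  rw [hz2]
  have hS : ∀ x ∈ Set.Ioo 0 (Real.pi / 2), Real.cos x ≠ 0 ∧ Real.sin x ≠ 0 := by
    intro x hx
    exact ⟨(Real.cos_pos_of_mem_Ioo ⟨by linarith [hx.1, Real.pi_pos], hx.2⟩).ne',
      (Real.sin_pos_of_pos_of_lt_pi hx.1 (by linarith [hx.2, Real.pi_pos])).ne'⟩
  set m := n.natAbs with hm
  set E : ℂ := K * Complex.exp ((n : ℂ) * (z : ℂ) * Complex.I) with hE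
  have hA : ∀ x, Real.cos x ≠ 0 → HasDerivAt (fun x => (Real.cos x ^ m)⁻¹)
      (m * (Real.sin x / Real.cos x) * (Real.cos x ^ m)⁻¹) x := by
    intro x hx
    refine (((Real.hasDerivAt_cos x).pow m).inv (pow_ne_zero _ hx)).congr_deriv ?_
    clear_value m
    rcases m with _ | m
    · simp
    · simp only [Pi.pow_apply, Nat.add_sub_cancel]
      field_simp
      try ring
  have h2 : ∀ (p : Polynomial ℝ) x, HasDerivAt (fun x => p.eval (Real.cos (2 * x)))
      (p.derivative.eval (Real.cos (2 * x)) * (-2 * Real.sin (2 * x))) x := by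
    intro p x
    have h3 : HasDerivAt (fun x => Real.cos (2 * x)) (-2 * Real.sin (2 * x)) x := by
      refine (((hasDerivAt_id x).const_mul (2:ℝ)).cos).congr_deriv ?_
      simp only [id]; ring
    exact (p.hasDerivAt _).comp x h3
  have hS2 : ∀ x, HasDerivAt (fun x => Real.sin (2 * x)) (2 * Real.cos (2 * x)) x := by
    intro x
    refine (((hasDerivAt_id x).const_mul (2:ℝ)).sin).congr_deriv ?_
    simp only [id]; ring
  have hT : ∀ x, Real.cos x ≠ 0 → HasDerivAt (fun x => Real.sin x / Real.cos x)
      (1 / Real.cos x ^ 2) x := by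
    intro x hx
    refine ((Real.hasDerivAt_sin x).div (Real.hasDerivAt_cos x) hx).congr_deriv ?_
    rw [← Real.sin_sq_add_cos_sq x]; ring
  have hev : ∀ x ∈ Set.Ioo 0 (Real.pi / 2), ∀ᶠ y in nhds x, y ∈ Set.Ioo 0 (Real.pi / 2) :=
    fun x hx => isOpen_Ioo.mem_nhds hx
  have hd1 : ∀ x ∈ Set.Ioo 0 (Real.pi / 2), deriv (fun r'' => eigenFun n k r'' z) x =
      (((Real.cos x ^ m)⁻¹ * (m * (Real.sin x / Real.cos x) * g.eval (Real.cos (2 * x)) +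
        g.derivative.eval (Real.cos (2 * x)) * (-2 * Real.sin (2 * x))) : ℝ) : ℂ) * E := by
    intro x hx
    have he : (fun r'' => eigenFun n k r'' z) =ᶠ[nhds x]
      fun x => (((Real.cos x ^ m)⁻¹ * g.eval (Real.cos (2 * x)) : ℝ) : ℂ) * E := by
      filter_upwards [hev x hx] with y hy
      exact hf y z (hS y hy).1
    rw [he.deriv_eq]
    refine ((((hA x (hS x hx).1).mul (h2 g x)).ofReal_comp).mul_const E).deriv.trans ?_
    congr 2
    ring
  have hd2 : deriv (fun r' => deriv (fun r'' => eigenFun n k r'' z) r') r =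
      ((m * (Real.sin r / Real.cos r) * (Real.cos r ^ m)⁻¹ *
        (m * (Real.sin r / Real.cos r) * g.eval (Real.cos (2 * r)) +
        g.derivative.eval (Real.cos (2 * r)) * (-2 * Real.sin (2 * r))) +
       (Real.cos r ^ m)⁻¹ * ((m * (1 / Real.cos r ^ 2)) * g.eval (Real.cos (2 * r)) +
        m * (Real.sin r / Real.cos r) *
          (g.derivative.eval (Real.cos (2 * r)) * (-2 * Real.sin (2 * r))) +
        (g.derivative.derivative.eval (Real.cos (2 * r)) * (-2 * Real.sin (2 * r)) *
          (-2 * Real.sin (2 * r)) +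
         g.derivative.eval (Real.cos (2 * r)) * (-2 * (2 * Real.cos (2 * r))))) : ℝ) : ℂ) * E := by
    have he : (fun r' => deriv (fun r'' => eigenFun n k r'' z) r') =ᶠ[nhds r] _ :=
      (hev r hr).mono hd1
    rw [he.deriv_eq]
    have hc := (hS r hr).1
    exact ((((hA r hc).mul ((((hT r hc).const_mul (m:ℝ)).mul (h2 g r)).add
      ((h2 g.derivative r).mul ((hS2 r).const_mul (-2))))).ofReal_comp).mul_const E).deriv
  rw [hd2, hd1 r hr, hf r z (hS r hr).1]
  obtain ⟨hc, hs⟩ := hS r hr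
  have hode := hg (Real.cos (2 * r))
  generalize g.eval (Real.cos (2 * r)) = G0 at *
  generalize g.derivative.eval (Real.cos (2 * r)) = G1 at *
  generalize g.derivative.derivative.eval (Real.cos (2 * r)) = G2 at *
  generalize (Real.cos r ^ m)⁻¹ = A
  suffices hreal : (m * (Real.sin r / Real.cos r) * A *
        (m * (Real.sin r / Real.cos r) * G0 + G1 * (-2 * Real.sin (2 * r))) +
       A * ((m * (1 / Real.cos r ^ 2)) * G0 +
        m * (Real.sin r / Real.cos r) * (G1 * (-2 * Real.sin (2 * r))) +
        (G2 * (-2 * Real.sin (2 * r)) * (-2 * Real.sin (2 * r)) +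
         G1 * (-2 * (2 * Real.cos (2 * r))))))
      + 2 * (Real.cos (2 * r) / Real.sin (2 * r)) *
        (A * (m * (Real.sin r / Real.cos r) * G0 + G1 * (-2 * Real.sin (2 * r))))
      + Real.tan r ^ 2 * (-(m:ℝ) ^ 2 * (A * G0))
      = -(4 * (k:ℝ) * (k + m + 1) + 2 * m) * (A * G0) by
    have := congrArg (fun t : ℝ => (t : ℂ) * E) hreal
    simp only [Complex.ofReal_add, Complex.ofReal_mul, Complex.ofReal_neg, Complex.ofReal_pow,
      Complex.ofReal_natCast, Complex.ofReal_ofNat, Complex.ofReal_one] at this ⊢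
    linear_combination this
  have hS2e : Real.sin (2 * r) ^ 2 = 1 - Real.cos (2 * r) ^ 2 := by
    rw [← Real.sin_sq_add_cos_sq (2 * r)]; ring
  have e0 : (1 / Real.cos r ^ 2) + 2 * (Real.cos (2 * r) / Real.sin (2 * r)) *
      (Real.sin r / Real.cos r) = 2 := by
    rw [Real.sin_two_mul, Real.cos_two_mul]; field_simp; ring
  have e1 : (Real.sin r / Real.cos r) * Real.sin (2 * r) = 1 - Real.cos (2 * r) := by
    rw [Real.sin_two_mul, Real.cos_two_mul]; field_simp
    rw [Real.sin_sq]; ring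
  have e2 : Real.cos (2 * r) / Real.sin (2 * r) * Real.sin (2 * r) = Real.cos (2 * r) := by
    apply div_mul_cancel₀
    rw [Real.sin_two_mul]; positivity
  rw [Real.tan_eq_sin_div_cos]
  linear_combination A * m * G0 * e0 - 4 * m * A * G1 * e1 - 4 * A * G1 * e2
    + 4 * A * G2 * hS2e + 4 * A * hode
end

section
/- For every smooth function f : ℂ-valued, of the variables (r, θ, z) ∈ (0, π/2) × ℝ × ℝ, one has the operator identity (X + iY)(L f) = (L - 4iZ + 4)((X + iY) f), where X, Y, Z are the explicit first-order differential operators given in the context and L = X² + Y². -/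
open Real

/-- Partial derivative in `r` of a function of `(r, θ, z)`. -/
noncomputable def Dr (f : ℝ → ℝ → ℝ → ℂ) (r θ z : ℝ) : ℂ := deriv (fun r' => f r' θ z) r

/-- Partial derivative in `θ` of a function of `(r, θ, z)`. -/
noncomputable def Dtheta (f : ℝ → ℝ → ℝ → ℂ) (r θ z : ℝ) : ℂ := deriv (fun θ' => f r θ' z) θ

/-- Partial derivative in `z` of a function of `(r, θ, z)`. -/
noncomputable def Dz (f : ℝ → ℝ → ℝ → ℂ) (r θ z : ℝ) : ℂ := deriv (fun z' => f r θ z') z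

/-- The left-invariant vector field `X` on `SU(2)` in cylindric coordinates. -/
noncomputable def Xop (f : ℝ → ℝ → ℝ → ℂ) (r θ z : ℝ) : ℂ :=
  (Real.cos (2 * z - θ) : ℂ) * Dr f r θ z +
    (Real.sin (2 * z - θ) : ℂ) * ((Real.tan r : ℂ) * Dz f r θ z +
      ((Real.tan r + 1 / Real.tan r : ℝ) : ℂ) * Dtheta f r θ z)

/-- The left-invariant vector field `Y` on `SU(2)` in cylindric coordinates. -/
noncomputable def Yop (f : ℝ → ℝ → ℝ → ℂ) (r θ z : ℝ) : ℂ :=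
  -(Real.sin (2 * z - θ) : ℂ) * Dr f r θ z +
    (Real.cos (2 * z - θ) : ℂ) * ((Real.tan r : ℂ) * Dz f r θ z +
      ((Real.tan r + 1 / Real.tan r : ℝ) : ℂ) * Dtheta f r θ z)

/-- The left-invariant vector field `Z = ∂/∂z`. -/
noncomputable def Zop (f : ℝ → ℝ → ℝ → ℂ) (r θ z : ℝ) : ℂ := Dz f r θ z

/-- The sublaplacian `L = X² + Y²`. -/
noncomputable def Lop (f : ℝ → ℝ → ℝ → ℂ) (r θ z : ℝ) : ℂ :=
  Xop (Xop f) r θ z + Yop (Yop f) r θ z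

/-- The complex gradient `X + iY`. -/
noncomputable def Wop (f : ℝ → ℝ → ℝ → ℂ) (r θ z : ℝ) : ℂ :=
  Xop f r θ z + Complex.I * Yop f r θ z


/-- The coordinate domain. -/
def Dom : Set (ℝ × ℝ × ℝ) :=
  Set.Ioo 0 (Real.pi / 2) ×ˢ (Set.univ : Set ℝ) ×ˢ (Set.univ : Set ℝ)

/-- Uncurried function. -/
def unc (f : ℝ → ℝ → ℝ → ℂ) : ℝ × ℝ × ℝ → ℂ := fun p => f p.1 p.2.1 p.2.2

/-- Smoothness on the domain. -/
def Sm (f : ℝ → ℝ → ℝ → ℂ) : Prop := ContDiffOn ℝ (⊤ : ℕ∞) (unc f) Dom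

lemma two_le : (2 : WithTop ℕ∞) ≤ ((⊤ : ℕ∞) : WithTop ℕ∞) := by
  have : ((2 : ℕ∞) : WithTop ℕ∞) ≤ ((⊤ : ℕ∞) : WithTop ℕ∞) := WithTop.coe_le_coe.2 le_top
  exact this

lemma isOpen_Dom : IsOpen Dom := isOpen_Ioo.prod (isOpen_univ.prod isOpen_univ)

lemma mem_Dom {r : ℝ} (hr : r ∈ Set.Ioo 0 (Real.pi / 2)) (θ z : ℝ) : (r, θ, z) ∈ Dom :=
  ⟨hr, trivial, trivial⟩

lemma Sm.contDiffAt {g : ℝ → ℝ → ℝ → ℂ} (hg : Sm g) {p : ℝ × ℝ × ℝ} (hp : p ∈ Dom) :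
    ContDiffAt ℝ (⊤ : ℕ∞) (unc g) p := ContDiffOn.contDiffAt hg (isOpen_Dom.mem_nhds hp)

lemma Sm.hasF {g : ℝ → ℝ → ℝ → ℂ} (hg : Sm g) {p : ℝ × ℝ × ℝ} (hp : p ∈ Dom) :
    HasFDerivAt (unc g) (fderiv ℝ (unc g) p) p :=
  ((hg.contDiffAt hp).differentiableAt (by simp)).hasFDerivAt

lemma hasR' {g : ℝ → ℝ → ℝ → ℂ} (hg : Sm g) {r θ z : ℝ} (hr : r ∈ Set.Ioo 0 (Real.pi / 2)) :
    HasDerivAt (fun r' => g r' θ z) (fderiv ℝ (unc g) (r, θ, z) (1, 0, 0)) r :=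
  HasFDerivAt.comp_hasDerivAt (f := fun r' : ℝ => (r', θ, z)) r (hg.hasF (mem_Dom hr θ z))
    ((hasDerivAt_id r).prodMk ((hasDerivAt_const r θ).prodMk (hasDerivAt_const r z)))

lemma hasT' {g : ℝ → ℝ → ℝ → ℂ} (hg : Sm g) {r θ z : ℝ} (hr : r ∈ Set.Ioo 0 (Real.pi / 2)) :
    HasDerivAt (fun θ' => g r θ' z) (fderiv ℝ (unc g) (r, θ, z) (0, 1, 0)) θ :=
  HasFDerivAt.comp_hasDerivAt (f := fun θ' : ℝ => (r, θ', z)) θ (hg.hasF (mem_Dom hr θ z))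
    ((hasDerivAt_const θ r).prodMk ((hasDerivAt_id θ).prodMk (hasDerivAt_const θ z)))

lemma hasZ' {g : ℝ → ℝ → ℝ → ℂ} (hg : Sm g) {r θ z : ℝ} (hr : r ∈ Set.Ioo 0 (Real.pi / 2)) :
    HasDerivAt (fun z' => g r θ z') (fderiv ℝ (unc g) (r, θ, z) (0, 0, 1)) z :=
  HasFDerivAt.comp_hasDerivAt (f := fun z' : ℝ => (r, θ, z')) z (hg.hasF (mem_Dom hr θ z))
    ((hasDerivAt_const z r).prodMk ((hasDerivAt_const z θ).prodMk (hasDerivAt_id z)))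

lemma hasR {g : ℝ → ℝ → ℝ → ℂ} (hg : Sm g) {r : ℝ} (hr : r ∈ Set.Ioo 0 (Real.pi / 2)) (θ z : ℝ) :
    HasDerivAt (fun r' => g r' θ z) (Dr g r θ z) r := (hasR' hg hr).differentiableAt.hasDerivAt

lemma hasT {g : ℝ → ℝ → ℝ → ℂ} (hg : Sm g) {r : ℝ} (hr : r ∈ Set.Ioo 0 (Real.pi / 2)) (θ z : ℝ) :
    HasDerivAt (fun θ' => g r θ' z) (Dtheta g r θ z) θ := (hasT' hg hr).differentiableAt.hasDerivAt

lemma hasZ {g : ℝ → ℝ → ℝ → ℂ} (hg : Sm g) {r : ℝ} (hr : r ∈ Set.Ioo 0 (Real.pi / 2)) (θ z : ℝ) :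
    HasDerivAt (fun z' => g r θ z') (Dz g r θ z) z := (hasZ' hg hr).differentiableAt.hasDerivAt

lemma eqR {g : ℝ → ℝ → ℝ → ℂ} (hg : Sm g) {p : ℝ × ℝ × ℝ} (hp : p ∈ Dom) :
    unc (Dr g) p = fderiv ℝ (unc g) p (1, 0, 0) := (hasR' hg hp.1).deriv

lemma eqT {g : ℝ → ℝ → ℝ → ℂ} (hg : Sm g) {p : ℝ × ℝ × ℝ} (hp : p ∈ Dom) :
    unc (Dtheta g) p = fderiv ℝ (unc g) p (0, 1, 0) := (hasT' hg hp.1).deriv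

lemma eqZ {g : ℝ → ℝ → ℝ → ℂ} (hg : Sm g) {p : ℝ × ℝ × ℝ} (hp : p ∈ Dom) :
    unc (Dz g) p = fderiv ℝ (unc g) p (0, 0, 1) := (hasZ' hg hp.1).deriv

lemma smF {g : ℝ → ℝ → ℝ → ℂ} (hg : Sm g) (v : ℝ × ℝ × ℝ) :
    ContDiffOn ℝ (⊤ : ℕ∞) (fun p => fderiv ℝ (unc g) p v) Dom :=
  (ContDiffOn.fderiv_of_isOpen hg isOpen_Dom (by simp)).clm_apply contDiffOn_const

lemma Sm.r {g : ℝ → ℝ → ℝ → ℂ} (hg : Sm g) : Sm (Dr g) :=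
  (smF hg (1, 0, 0)).congr fun _ hp => eqR hg hp

lemma Sm.t {g : ℝ → ℝ → ℝ → ℂ} (hg : Sm g) : Sm (Dtheta g) :=
  (smF hg (0, 1, 0)).congr fun _ hp => eqT hg hp

lemma Sm.z {g : ℝ → ℝ → ℝ → ℂ} (hg : Sm g) : Sm (Dz g) :=
  (smF hg (0, 0, 1)).congr fun _ hp => eqZ hg hp

lemma fd2 {g h : ℝ → ℝ → ℝ → ℂ} (hg : Sm g) (v w : ℝ × ℝ × ℝ)
    (hh : ∀ p ∈ Dom, unc h p = fderiv ℝ (unc g) p v) {p : ℝ × ℝ × ℝ} (hp : p ∈ Dom) :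
    fderiv ℝ (unc h) p w = fderiv ℝ (fderiv ℝ (unc g)) p w v := by
  have he : unc h =ᶠ[nhds p] fun q => fderiv ℝ (unc g) q v := by
    filter_upwards [isOpen_Dom.mem_nhds hp] with q hq using hh q hq
  rw [he.fderiv_eq]
  have hd : DifferentiableAt ℝ (fderiv ℝ (unc g)) p :=
    ((ContDiffOn.fderiv_of_isOpen (m := 1) hg isOpen_Dom (by norm_num; exact two_le)).contDiffAt
      (isOpen_Dom.mem_nhds hp)).differentiableAt (by simp)
  rw [fderiv_clm_apply hd (differentiableAt_const v)]
  simp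

lemma symm2 {g : ℝ → ℝ → ℝ → ℂ} (hg : Sm g) (v w : ℝ × ℝ × ℝ) {p : ℝ × ℝ × ℝ} (hp : p ∈ Dom) :
    fderiv ℝ (fderiv ℝ (unc g)) p w v = fderiv ℝ (fderiv ℝ (unc g)) p v w :=
  (ContDiffAt.isSymmSndFDerivAt (hg.contDiffAt hp) (by simp; exact two_le)) w v

lemma comm_tr {g : ℝ → ℝ → ℝ → ℂ} (hg : Sm g) {r : ℝ} (hr : r ∈ Set.Ioo 0 (Real.pi / 2))
    (θ z : ℝ) : Dtheta (Dr g) r θ z = Dr (Dtheta g) r θ z := by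
  have hp := mem_Dom hr θ z
  have h1 := eqT hg.r hp
  have h2 := eqR hg.t hp
  rw [fd2 hg _ _ (fun p hp => eqR hg hp) hp] at h1
  rw [fd2 hg _ _ (fun p hp => eqT hg hp) hp] at h2
  exact h1.trans ((symm2 hg _ _ hp).trans h2.symm)

lemma comm_zr {g : ℝ → ℝ → ℝ → ℂ} (hg : Sm g) {r : ℝ} (hr : r ∈ Set.Ioo 0 (Real.pi / 2))
    (θ z : ℝ) : Dz (Dr g) r θ z = Dr (Dz g) r θ z := by
  have hp := mem_Dom hr θ z
  have h1 := eqZ hg.r hp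
  have h2 := eqR hg.z hp
  rw [fd2 hg _ _ (fun p hp => eqR hg hp) hp] at h1
  rw [fd2 hg _ _ (fun p hp => eqZ hg hp) hp] at h2
  exact h1.trans ((symm2 hg _ _ hp).trans h2.symm)

lemma comm_zt {g : ℝ → ℝ → ℝ → ℂ} (hg : Sm g) {r : ℝ} (hr : r ∈ Set.Ioo 0 (Real.pi / 2))
    (θ z : ℝ) : Dz (Dtheta g) r θ z = Dtheta (Dz g) r θ z := by
  have hp := mem_Dom hr θ z
  have h1 := eqZ hg.t hp
  have h2 := eqT hg.z hp
  rw [fd2 hg _ _ (fun p hp => eqT hg hp) hp] at h1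
  rw [fd2 hg _ _ (fun p hp => eqZ hg hp) hp] at h2
  exact h1.trans ((symm2 hg _ _ hp).trans h2.symm)

lemma cos_ne {r : ℝ} (hr : r ∈ Set.Ioo 0 (Real.pi / 2)) : Real.cos r ≠ 0 :=
  ne_of_gt (Real.cos_pos_of_mem_Ioo ⟨by linarith [hr.1, Real.pi_pos], hr.2⟩)

lemma tan_ne {r : ℝ} (hr : r ∈ Set.Ioo 0 (Real.pi / 2)) : Real.tan r ≠ 0 :=
  ne_of_gt (Real.tan_pos_of_pos_of_lt_pi_div_two hr.1 hr.2)

/-- `B = tan r ∂z + (tan r + cot r) ∂θ`. -/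
noncomputable def Bop (f : ℝ → ℝ → ℝ → ℂ) (r θ z : ℝ) : ℂ :=
  (Real.tan r : ℂ) * Dz f r θ z + ((Real.tan r + 1 / Real.tan r : ℝ) : ℂ) * Dtheta f r θ z

lemma tanSm {p : ℝ × ℝ × ℝ} (hp : p ∈ Dom) :
    ContDiffAt ℝ (⊤ : ℕ∞) (fun p : ℝ × ℝ × ℝ => Real.tan p.1) p :=
  (Real.contDiffAt_tan.2 (cos_ne hp.1)).comp p contDiffAt_fst

lemma ofRealSm {u : ℝ × ℝ × ℝ → ℝ} {p : ℝ × ℝ × ℝ} (hu : ContDiffAt ℝ (⊤ : ℕ∞) u p) :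
    ContDiffAt ℝ (⊤ : ℕ∞) (fun p => (u p : ℂ)) p :=
  Complex.ofRealCLM.contDiff.contDiffAt.comp p hu

lemma Sm.b {g : ℝ → ℝ → ℝ → ℂ} (hg : Sm g) : Sm (Bop g) := by
  intro p hp
  refine ContDiffAt.contDiffWithinAt ?_
  exact ((ofRealSm (tanSm hp)).mul (hg.z.contDiffAt hp)).add
    ((ofRealSm ((tanSm hp).add (contDiffAt_const.div (tanSm hp) (tan_ne hp.1)))).mul
      (hg.t.contDiffAt hp))

lemma Sm.X {g : ℝ → ℝ → ℝ → ℂ} (hg : Sm g) : Sm (Xop g) := by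
  intro p hp
  refine ContDiffAt.contDiffWithinAt ?_
  have hc : ContDiffAt ℝ (⊤ : ℕ∞) (fun p : ℝ × ℝ × ℝ => Real.cos (2 * p.2.2 - p.2.1)) p := by
    fun_prop
  have hs : ContDiffAt ℝ (⊤ : ℕ∞) (fun p : ℝ × ℝ × ℝ => Real.sin (2 * p.2.2 - p.2.1)) p := by
    fun_prop
  exact ((ofRealSm hc).mul (hg.r.contDiffAt hp)).add ((ofRealSm hs).mul (hg.b.contDiffAt hp))

lemma Sm.Y {g : ℝ → ℝ → ℝ → ℂ} (hg : Sm g) : Sm (Yop g) := by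
  intro p hp
  refine ContDiffAt.contDiffWithinAt ?_
  have hc : ContDiffAt ℝ (⊤ : ℕ∞) (fun p : ℝ × ℝ × ℝ => Real.cos (2 * p.2.2 - p.2.1)) p := by
    fun_prop
  have hs : ContDiffAt ℝ (⊤ : ℕ∞) (fun p : ℝ × ℝ × ℝ => Real.sin (2 * p.2.2 - p.2.1)) p := by
    fun_prop
  exact ((ofRealSm hs).neg.mul (hg.r.contDiffAt hp)).add ((ofRealSm hc).mul (hg.b.contDiffAt hp))

/-! Derivatives of coefficients -/

lemma dtan {r : ℝ} (hr : r ∈ Set.Ioo 0 (Real.pi / 2)) :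
    HasDerivAt (fun r => (Real.tan r : ℂ)) (((1 + Real.tan r ^ 2 : ℝ)) : ℂ) r := by
  have h := (Real.hasDerivAt_tan (cos_ne hr)).ofReal_comp
  convert h using 2
  rw [← Real.inv_one_add_tan_sq (cos_ne hr)]
  simp

lemma dtc {r : ℝ} (hr : r ∈ Set.Ioo 0 (Real.pi / 2)) :
    HasDerivAt (fun r => ((Real.tan r + 1 / Real.tan r : ℝ) : ℂ))
      ((Real.tan r ^ 2 - 1 / Real.tan r ^ 2 : ℝ) : ℂ) r := by
  have h0 := Real.hasDerivAt_tan (cos_ne hr)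
  have h := (h0.add ((hasDerivAt_const r (1 : ℝ)).div h0 (tan_ne hr))).ofReal_comp
  refine h.congr_deriv (congrArg _ ?_)
  rw [← Real.inv_one_add_tan_sq (cos_ne hr)]
  have := tan_ne hr
  field_simp
  ring

lemma dcz (θ z : ℝ) : HasDerivAt (fun z => (Real.cos (2 * z - θ) : ℂ))
    (-2 * (Real.sin (2 * z - θ) : ℂ)) z := by
  have h := ((((hasDerivAt_id z).const_mul 2).sub_const θ).cos).ofReal_comp
  refine h.congr_deriv ?_
  simp only [id]; push_cast; ring

lemma dsz (θ z : ℝ) : HasDerivAt (fun z => (Real.sin (2 * z - θ) : ℂ))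
    (2 * (Real.cos (2 * z - θ) : ℂ)) z := by
  have h := ((((hasDerivAt_id z).const_mul 2).sub_const θ).sin).ofReal_comp
  refine h.congr_deriv ?_
  simp only [id]; push_cast; ring

lemma dct (θ z : ℝ) : HasDerivAt (fun θ => (Real.cos (2 * z - θ) : ℂ))
    ((Real.sin (2 * z - θ) : ℂ)) θ := by
  have h := (((hasDerivAt_id θ).const_sub (2 * z)).cos).ofReal_comp
  refine h.congr_deriv ?_
  simp only [id]; push_cast; ring

lemma dst (θ z : ℝ) : HasDerivAt (fun θ => (Real.sin (2 * z - θ) : ℂ))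
    (-(Real.cos (2 * z - θ) : ℂ)) θ := by
  have h := (((hasDerivAt_id θ).const_sub (2 * z)).sin).ofReal_comp
  refine h.congr_deriv ?_
  simp only [id]; push_cast; ring

lemma DrB {g : ℝ → ℝ → ℝ → ℂ} (hg : Sm g) {r : ℝ}
    (hr : r ∈ Set.Ioo 0 (Real.pi / 2)) (θ z : ℝ) : Dr (Bop g) r θ z = ((1 + Real.tan r ^ 2 : ℝ) : ℂ) * Dz g r θ z
    + (Real.tan r : ℂ) * Dr (Dz g) r θ z
    + (((Real.tan r ^ 2 - 1 / Real.tan r ^ 2 : ℝ) : ℂ) * Dtheta g r θ z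
    + ((Real.tan r + 1 / Real.tan r : ℝ) : ℂ) * Dr (Dtheta g) r θ z) :=
  (((dtan hr).mul (hasR hg.z hr θ z)).add ((dtc hr).mul (hasR hg.t hr θ z))).deriv

lemma DrX {g : ℝ → ℝ → ℝ → ℂ} (hg : Sm g) {r : ℝ}
    (hr : r ∈ Set.Ioo 0 (Real.pi / 2)) (θ z : ℝ) : Dr (Xop g) r θ z = (Real.cos (2 * z - θ) : ℂ) * Dr (Dr g) r θ z
    + (Real.sin (2 * z - θ) : ℂ) * Dr (Bop g) r θ z :=
  (((hasR hg.r hr θ z).const_mul _).add ((hasR hg.b hr θ z).const_mul _)).deriv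

lemma DrY {g : ℝ → ℝ → ℝ → ℂ} (hg : Sm g) {r : ℝ}
    (hr : r ∈ Set.Ioo 0 (Real.pi / 2)) (θ z : ℝ) : Dr (Yop g) r θ z = -(Real.sin (2 * z - θ) : ℂ) * Dr (Dr g) r θ z
    + (Real.cos (2 * z - θ) : ℂ) * Dr (Bop g) r θ z :=
  (((hasR hg.r hr θ z).const_mul _).add ((hasR hg.b hr θ z).const_mul _)).deriv

lemma DzX {g : ℝ → ℝ → ℝ → ℂ} (hg : Sm g) {r : ℝ}
    (hr : r ∈ Set.Ioo 0 (Real.pi / 2)) (θ z : ℝ) : Dz (Xop g) r θ z = -2 * (Real.sin (2 * z - θ) : ℂ) * Dr g r θ z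
    + (Real.cos (2 * z - θ) : ℂ) * Dz (Dr g) r θ z
    + (2 * (Real.cos (2 * z - θ) : ℂ) * Bop g r θ z
    + (Real.sin (2 * z - θ) : ℂ) * Dz (Bop g) r θ z) :=
  (((dcz θ z).mul (hasZ hg.r hr θ z)).add ((dsz θ z).mul (hasZ hg.b hr θ z))).deriv

lemma DzY {g : ℝ → ℝ → ℝ → ℂ} (hg : Sm g) {r : ℝ}
    (hr : r ∈ Set.Ioo 0 (Real.pi / 2)) (θ z : ℝ) : Dz (Yop g) r θ z = -(2 * (Real.cos (2 * z - θ) : ℂ)) * Dr g r θ z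
    + -(Real.sin (2 * z - θ) : ℂ) * Dz (Dr g) r θ z
    + (-2 * (Real.sin (2 * z - θ) : ℂ) * Bop g r θ z
    + (Real.cos (2 * z - θ) : ℂ) * Dz (Bop g) r θ z) :=
  (((dsz θ z).neg.mul (hasZ hg.r hr θ z)).add ((dcz θ z).mul (hasZ hg.b hr θ z))).deriv

lemma DtX {g : ℝ → ℝ → ℝ → ℂ} (hg : Sm g) {r : ℝ}
    (hr : r ∈ Set.Ioo 0 (Real.pi / 2)) (θ z : ℝ) : Dtheta (Xop g) r θ z = (Real.sin (2 * z - θ) : ℂ) * Dr g r θ z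
    + (Real.cos (2 * z - θ) : ℂ) * Dtheta (Dr g) r θ z
    + (-(Real.cos (2 * z - θ) : ℂ) * Bop g r θ z
    + (Real.sin (2 * z - θ) : ℂ) * Dtheta (Bop g) r θ z) :=
  (((dct θ z).mul (hasT hg.r hr θ z)).add ((dst θ z).mul (hasT hg.b hr θ z))).deriv

lemma DtY {g : ℝ → ℝ → ℝ → ℂ} (hg : Sm g) {r : ℝ}
    (hr : r ∈ Set.Ioo 0 (Real.pi / 2)) (θ z : ℝ) : Dtheta (Yop g) r θ z = -(-(Real.cos (2 * z - θ) : ℂ)) * Dr g r θ z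
    + -(Real.sin (2 * z - θ) : ℂ) * Dtheta (Dr g) r θ z
    + ((Real.sin (2 * z - θ) : ℂ) * Bop g r θ z
    + (Real.cos (2 * z - θ) : ℂ) * Dtheta (Bop g) r θ z) :=
  (((dst θ z).neg.mul (hasT hg.r hr θ z)).add ((dct θ z).mul (hasT hg.b hr θ z))).deriv

lemma DzB {g : ℝ → ℝ → ℝ → ℂ} (hg : Sm g) {r : ℝ}
    (hr : r ∈ Set.Ioo 0 (Real.pi / 2)) (θ z : ℝ) : Dz (Bop g) r θ z = (Real.tan r : ℂ) * Dz (Dz g) r θ z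
    + ((Real.tan r + 1 / Real.tan r : ℝ) : ℂ) * Dz (Dtheta g) r θ z :=
  (((hasZ hg.z hr θ z).const_mul _).add ((hasZ hg.t hr θ z).const_mul _)).deriv

lemma Xop_eq (g : ℝ → ℝ → ℝ → ℂ) (r θ z : ℝ) : Xop g r θ z =
    (Real.cos (2 * z - θ) : ℂ) * Dr g r θ z + (Real.sin (2 * z - θ) : ℂ) * Bop g r θ z := rfl

lemma Yop_eq (g : ℝ → ℝ → ℝ → ℂ) (r θ z : ℝ) : Yop g r θ z =
    -(Real.sin (2 * z - θ) : ℂ) * Dr g r θ z + (Real.cos (2 * z - θ) : ℂ) * Bop g r θ z := rfl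

lemma commZX {g : ℝ → ℝ → ℝ → ℂ} (hg : Sm g) {r : ℝ}
    (hr : r ∈ Set.Ioo 0 (Real.pi / 2)) (θ z : ℝ) : Dz (Xop g) r θ z = Xop (Dz g) r θ z + 2 * Yop g r θ z := by
  rw [DzX hg hr, Xop_eq, Yop_eq, DzB hg hr, comm_zr hg hr, comm_zt hg hr, Bop, Bop]
  ring

lemma commZY {g : ℝ → ℝ → ℝ → ℂ} (hg : Sm g) {r : ℝ}
    (hr : r ∈ Set.Ioo 0 (Real.pi / 2)) (θ z : ℝ) : Dz (Yop g) r θ z = Yop (Dz g) r θ z - 2 * Xop g r θ z := by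
  rw [DzY hg hr, Xop_eq, Yop_eq, DzB hg hr, comm_zr hg hr, comm_zt hg hr, Bop, Bop]
  ring

lemma commXY {g : ℝ → ℝ → ℝ → ℂ} (hg : Sm g) {r : ℝ}
    (hr : r ∈ Set.Ioo 0 (Real.pi / 2)) (θ z : ℝ) : Xop (Yop g) r θ z = Yop (Xop g) r θ z + 2 * Dz g r θ z := by
  have ht : (Real.tan r : ℂ) ≠ 0 := by exact_mod_cast tan_ne hr
  have hcs : (Real.cos (2 * z - θ) : ℂ) ^ 2 = 1 - (Real.sin (2 * z - θ) : ℂ) ^ 2 := by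
    exact_mod_cast Real.cos_sq' _
  rw [Xop, Yop, DrX hg hr, DrY hg hr, DzX hg hr, DzY hg hr, DtX hg hr, DtY hg hr, DrB hg hr,
    comm_zr hg hr, comm_tr hg hr, Bop]
  push_cast at hcs ht ⊢
  generalize Complex.cos (2 * z - θ) = c at *
  generalize Complex.sin (2 * z - θ) = s at *
  generalize Complex.tan r = t at *
  have htu : t * t⁻¹ = 1 := mul_inv_cancel₀ ht
  generalize hu : t⁻¹ = u at *
  simp only [one_div, ← inv_pow, hu]
  linear_combination (c ^ 2 + s ^ 2) * Dz g r θ z * htu + 2 * Dz g r θ z * hcs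

lemma X_lin {g h : ℝ → ℝ → ℝ → ℂ} (hg : Sm g) (hh : Sm h) {r : ℝ}
    (hr : r ∈ Set.Ioo 0 (Real.pi / 2)) (θ z : ℝ) (a b : ℂ) : Xop (fun r θ z => a * g r θ z + b * h r θ z) r θ z
    = a * Xop g r θ z + b * Xop h r θ z := by
  have h1 : Dr (fun r θ z => a * g r θ z + b * h r θ z) r θ z = _ :=
    (((hasR hg hr θ z).const_mul a).add ((hasR hh hr θ z).const_mul b)).deriv
  have h2 : Dtheta (fun r θ z => a * g r θ z + b * h r θ z) r θ z = _ :=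
    (((hasT hg hr θ z).const_mul a).add ((hasT hh hr θ z).const_mul b)).deriv
  have h3 : Dz (fun r θ z => a * g r θ z + b * h r θ z) r θ z = _ :=
    (((hasZ hg hr θ z).const_mul a).add ((hasZ hh hr θ z).const_mul b)).deriv
  rw [Xop, h1, h2, h3, Xop, Xop]
  ring

lemma Y_lin {g h : ℝ → ℝ → ℝ → ℂ} (hg : Sm g) (hh : Sm h) {r : ℝ}
    (hr : r ∈ Set.Ioo 0 (Real.pi / 2)) (θ z : ℝ) (a b : ℂ) : Yop (fun r θ z => a * g r θ z + b * h r θ z) r θ z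
    = a * Yop g r θ z + b * Yop h r θ z := by
  have h1 : Dr (fun r θ z => a * g r θ z + b * h r θ z) r θ z = _ :=
    (((hasR hg hr θ z).const_mul a).add ((hasR hh hr θ z).const_mul b)).deriv
  have h2 : Dtheta (fun r θ z => a * g r θ z + b * h r θ z) r θ z = _ :=
    (((hasT hg hr θ z).const_mul a).add ((hasT hh hr θ z).const_mul b)).deriv
  have h3 : Dz (fun r θ z => a * g r θ z + b * h r θ z) r θ z = _ :=
    (((hasZ hg hr θ z).const_mul a).add ((hasZ hh hr θ z).const_mul b)).deriv
  rw [Yop, h1, h2, h3, Yop, Yop]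
  ring

lemma Z_lin {g h : ℝ → ℝ → ℝ → ℂ} (hg : Sm g) (hh : Sm h) {r : ℝ}
    (hr : r ∈ Set.Ioo 0 (Real.pi / 2)) (θ z : ℝ) (a b : ℂ) : Dz (fun r θ z => a * g r θ z + b * h r θ z) r θ z
    = a * Dz g r θ z + b * Dz h r θ z :=
  (((hasZ hg hr θ z).const_mul a).add ((hasZ hh hr θ z).const_mul b)).deriv

/-- Agreement on the domain. -/
def EqD (g h : ℝ → ℝ → ℝ → ℂ) : Prop :=
  ∀ r ∈ Set.Ioo 0 (Real.pi / 2), ∀ θ z, g r θ z = h r θ z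

lemma EqD.r {g h : ℝ → ℝ → ℝ → ℂ} (e : EqD g h) : EqD (Dr g) (Dr h) := by
  intro r hr θ z
  apply Filter.EventuallyEq.deriv_eq
  filter_upwards [isOpen_Ioo.mem_nhds hr] with x hx using e x hx θ z

lemma EqD.t {g h : ℝ → ℝ → ℝ → ℂ} (e : EqD g h) : EqD (Dtheta g) (Dtheta h) := by
  intro r hr θ z
  simp only [Dtheta, e r hr]

lemma EqD.z {g h : ℝ → ℝ → ℝ → ℂ} (e : EqD g h) : EqD (Dz g) (Dz h) := by
  intro r hr θ z
  simp only [Dz, e r hr]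

lemma EqD.X {g h : ℝ → ℝ → ℝ → ℂ} (e : EqD g h) : EqD (Xop g) (Xop h) := by
  intro r hr θ z
  simp only [Xop, e.r r hr, e.t r hr, e.z r hr]

lemma EqD.Y {g h : ℝ → ℝ → ℝ → ℂ} (e : EqD g h) : EqD (Yop g) (Yop h) := by
  intro r hr θ z
  simp only [Yop, e.r r hr, e.t r hr, e.z r hr]

/-- For every smooth function `f` of `(r, θ, z) ∈ (0, π/2) × ℝ × ℝ`,
one has `(X + iY)(L f) = (L - 4iZ + 4)((X + iY) f)`. -/
theorem stmt_1 (f : ℝ → ℝ → ℝ → ℂ)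
    (hf : ContDiffOn ℝ (⊤ : ℕ∞) (fun p : ℝ × ℝ × ℝ => f p.1 p.2.1 p.2.2)
      (Set.Ioo 0 (Real.pi / 2) ×ˢ (Set.univ : Set ℝ) ×ˢ (Set.univ : Set ℝ)))
    (r : ℝ) (hr : r ∈ Set.Ioo 0 (Real.pi / 2)) (θ z : ℝ) :
    Xop (Lop f) r θ z + Complex.I * Yop (Lop f) r θ z =
      Lop (Wop f) r θ z - 4 * Complex.I * Zop (Wop f) r θ z + 4 * Wop f r θ z := by
  have hf : Sm f := hf
  have eL : EqD (Lop f)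
      (fun r θ z => 1 * Xop (Xop f) r θ z + 1 * Yop (Yop f) r θ z) := by
    intro r _ θ z; simp [Lop]
  have eW : EqD (Wop f) (fun r θ z => 1 * Xop f r θ z + Complex.I * Yop f r θ z) := by
    intro r _ θ z; simp [Wop]
  have eXW : EqD (Xop (Wop f))
      (fun r θ z => 1 * Xop (Xop f) r θ z + Complex.I * Xop (Yop f) r θ z) :=
    fun r hr θ z => (eW.X r hr θ z).trans (X_lin hf.X hf.Y hr θ z _ _)
  have eYW : EqD (Yop (Wop f))
      (fun r θ z => 1 * Yop (Xop f) r θ z + Complex.I * Yop (Yop f) r θ z) :=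
    fun r hr θ z => (eW.Y r hr θ z).trans (Y_lin hf.X hf.Y hr θ z _ _)
  have eXY : EqD (Xop (Yop f)) (fun r θ z => 1 * Yop (Xop f) r θ z + 2 * Dz f r θ z) :=
    fun r hr θ z => by simpa using commXY hf hr θ z
  have eYX : EqD (Yop (Xop f)) (fun r θ z => 1 * Xop (Yop f) r θ z + (-2) * Dz f r θ z) :=
    fun r hr θ z => by have := commXY hf hr θ z; simp only [this]; ring
  have e1 := (eL.X r hr θ z).trans (X_lin hf.X.X hf.Y.Y hr θ z _ _)
  have e2 := (eL.Y r hr θ z).trans (Y_lin hf.X.X hf.Y.Y hr θ z _ _)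
  have e3 := (eXW.X r hr θ z).trans (X_lin hf.X.X hf.Y.X hr θ z _ _)
  have e4 := (eYW.Y r hr θ z).trans (Y_lin hf.X.Y hf.Y.Y hr θ z _ _)
  have e5 := (eW.z r hr θ z).trans (Z_lin hf.X hf.Y hr θ z _ _)
  have e6 := (eXY.Y r hr θ z).trans (Y_lin hf.X.Y hf.z hr θ z _ _)
  have e7 := (eYX.X r hr θ z).trans (X_lin hf.Y.X hf.z hr θ z _ _)
  have e8 := commXY hf.Y hr θ z
  have e9 := commXY hf.X hr θ z
  have e10 := commZX hf hr θ z
  have e11 := commZY hf hr θ z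
  have e12 : Lop (Wop f) r θ z = Xop (Xop (Wop f)) r θ z + Yop (Yop (Wop f)) r θ z := rfl
  have e13 : Wop f r θ z = Xop f r θ z + Complex.I * Yop f r θ z := rfl
  have hI : Complex.I ^ 2 = -1 := Complex.I_sq
  rw [e12, Zop, e1, e2, e3, e4, e5, e13]
  linear_combination e8 + e6 - Complex.I * e9 + Complex.I * e7 - 2 * e11 + 2 * Complex.I * e10
    + 4 * Dz (Yop f) r θ z * hI
end

section
/- For t > 0, the double series defining p_t(r, z) converges, and the function (t, r, z) ↦ p_t(r, z) satisfies the heat equation ∂p_t/∂t = ∂²p_t/∂r² + 2·cot(2r)·∂p_t/∂r + tan²(r)·∂²p_t/∂z² for all t > 0, r ∈ (0, π/2), z ∈ ℝ. -/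
open Real

/-- The general term of the double series defining the subelliptic heat kernel on `SU(2)`. -/
noncomputable def heatTerm (t r z : ℝ) (n : ℤ) (k : ℕ) : ℂ :=
  (((2 * (k : ℝ) + (n.natAbs : ℝ) + 1) *
      Real.exp (-(4 * (k : ℝ) * ((k : ℝ) + (n.natAbs : ℝ) + 1) + 2 * (n.natAbs : ℝ)) * t) *
      (Real.cos r) ^ n.natAbs * jacobiP k n.natAbs (Real.cos (2 * r)) : ℝ) : ℂ) *
    Complex.exp ((n : ℂ) * (z : ℂ) * Complex.I)

/-- The subelliptic heat kernel `p_t(r,z)` on `SU(2)` in cylindric coordinates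
(the double series is real-valued). -/
noncomputable def heatP (t r z : ℝ) : ℝ := (∑' n : ℤ, ∑' k : ℕ, heatTerm t r z n k).re


namespace SU2

/-- trigonometric monomial -/
noncomputable def G (a b : ℕ) (r : ℝ) : ℝ := Real.cos r ^ a * Real.sin r ^ b
noncomputable def G1 (a b : ℕ) (r : ℝ) : ℝ := b * G (a + 1) (b - 1) r - a * G (a - 1) (b + 1) r
noncomputable def G2 (a b : ℕ) (r : ℝ) : ℝ := b * G1 (a + 1) (b - 1) r - a * G1 (a - 1) (b + 1) r

lemma hasDerivAt_G (a b : ℕ) (r : ℝ) : HasDerivAt (G a b) (G1 a b r) r := by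
  have h := ((Real.hasDerivAt_cos r).pow a).mul ((Real.hasDerivAt_sin r).pow b)
  refine h.congr_deriv ?_
  simp only [G1, G, Pi.pow_apply]
  ring

lemma hasDerivAt_G1 (a b : ℕ) (r : ℝ) : HasDerivAt (G1 a b) (G2 a b r) r :=
  ((hasDerivAt_G (a + 1) (b - 1) r).const_mul (b : ℝ)).sub
    ((hasDerivAt_G (a - 1) (b + 1) r).const_mul (a : ℝ))

lemma abs_G_le (a b : ℕ) (r : ℝ) : |G a b r| ≤ 1 := by
  unfold G
  rw [abs_mul, abs_pow, abs_pow]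
  exact mul_le_one₀ (pow_le_one₀ (abs_nonneg _) (Real.abs_cos_le_one r)) (by positivity)
    (pow_le_one₀ (abs_nonneg _) (Real.abs_sin_le_one r))

lemma abs_G1_le (a b : ℕ) (r : ℝ) : |G1 a b r| ≤ a + b := by
  unfold G1
  refine (abs_sub _ _).trans ?_
  rw [abs_mul, abs_mul, Nat.abs_cast, Nat.abs_cast]
  have h1 := mul_le_mul_of_nonneg_left (abs_G_le (a + 1) (b - 1) r) (Nat.cast_nonneg (α := ℝ) b)
  have h2 := mul_le_mul_of_nonneg_left (abs_G_le (a - 1) (b + 1) r) (Nat.cast_nonneg (α := ℝ) a)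
  linarith

lemma abs_G2_le (a b : ℕ) (r : ℝ) : |G2 a b r| ≤ ((a : ℝ) + b) ^ 2 := by
  unfold G2
  refine (abs_sub _ _).trans ?_
  rw [abs_mul, abs_mul, Nat.abs_cast, Nat.abs_cast]
  have h1 : (b : ℝ) * |G1 (a + 1) (b - 1) r| ≤ b * (a + b) := by
    rcases b with _ | b
    · simp
    · have := abs_G1_le (a + 1) b r
      apply mul_le_mul_of_nonneg_left _ (Nat.cast_nonneg _)
      simp only [Nat.add_sub_cancel]
      push_cast at this ⊢
      linarith
  have h2 : (a : ℝ) * |G1 (a - 1) (b + 1) r| ≤ a * (a + b) := by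
    rcases a with _ | a
    · simp
    · have := abs_G1_le a (b + 1) r
      apply mul_le_mul_of_nonneg_left _ (Nat.cast_nonneg _)
      simp only [Nat.add_sub_cancel]
      push_cast at this ⊢
      linarith
  nlinarith

lemma cast_mul_pow_pred (a : ℕ) (c : ℝ) (hc : c ≠ 0) : (a : ℝ) * c ^ (a - 1) = a * c ^ a / c := by
  rcases a with _ | a
  · simp
  · simp only [Nat.add_sub_cancel, pow_succ]
    field_simp

lemma G1_eq (a b : ℕ) (r : ℝ) (hc : Real.cos r ≠ 0) (hs : Real.sin r ≠ 0) :
    G1 a b r = (b * (Real.cos r / Real.sin r) - a * (Real.sin r / Real.cos r)) * G a b r := by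
  have h1 := cast_mul_pow_pred a _ hc
  have h2 := cast_mul_pow_pred b _ hs
  unfold G1 G
  have : (b : ℝ) * (Real.cos r ^ (a + 1) * Real.sin r ^ (b - 1))
      - a * (Real.cos r ^ (a - 1) * Real.sin r ^ (b + 1))
      = Real.cos r ^ (a + 1) * (b * Real.sin r ^ (b - 1))
        - (a * Real.cos r ^ (a - 1)) * Real.sin r ^ (b + 1) := by ring
  rw [this, h1, h2]
  field_simp
  ring

lemma G2_eq (a b : ℕ) (r : ℝ) (hc : Real.cos r ≠ 0) (hs : Real.sin r ≠ 0) :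
    G2 a b r = (a * (a - 1) * (Real.sin r / Real.cos r) ^ 2 - (a * (b + 1) + b * (a + 1))
      + b * (b - 1) * (Real.cos r / Real.sin r) ^ 2) * G a b r := by
  have e1 : (b : ℝ) * G1 (a + 1) (b - 1) r = b * (((b : ℝ) - 1) * (Real.cos r / Real.sin r)
      - (a + 1) * (Real.sin r / Real.cos r)) * (Real.cos r / Real.sin r) * G a b r := by
    rcases b with _ | b
    · simp
    · rw [G1_eq _ _ _ hc hs]
      simp only [Nat.add_sub_cancel, G, pow_succ]
      push_cast
      field_simp
      ring
  have e2 : (a : ℝ) * G1 (a - 1) (b + 1) r = a * (((b : ℝ) + 1) * (Real.cos r / Real.sin r)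
      - (a - 1) * (Real.sin r / Real.cos r)) * (Real.sin r / Real.cos r) * G a b r := by
    rcases a with _ | a
    · simp
    · rw [G1_eq _ _ _ hc hs]
      simp only [Nat.add_sub_cancel, G, pow_succ]
      push_cast
      field_simp
      ring
  unfold G2
  rw [e1, e2]
  field_simp
  ring

noncomputable def cc (k m s : ℕ) : ℝ := (-1) ^ s * (k.choose s : ℝ) * ((m + k).choose s : ℝ)

noncomputable def F (k m : ℕ) (r : ℝ) : ℝ :=
  ∑ s ∈ Finset.range (k + 1), cc k m s * G (m + 2 * (k - s)) (2 * s) r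
noncomputable def F1 (k m : ℕ) (r : ℝ) : ℝ :=
  ∑ s ∈ Finset.range (k + 1), cc k m s * G1 (m + 2 * (k - s)) (2 * s) r
noncomputable def F2 (k m : ℕ) (r : ℝ) : ℝ :=
  ∑ s ∈ Finset.range (k + 1), cc k m s * G2 (m + 2 * (k - s)) (2 * s) r

lemma hasDerivAt_F (k m : ℕ) (r : ℝ) : HasDerivAt (F k m) (F1 k m r) r := by
  unfold F F1
  exact HasDerivAt.fun_sum fun s _ => (hasDerivAt_G _ _ r).const_mul _

lemma hasDerivAt_F1 (k m : ℕ) (r : ℝ) : HasDerivAt (F1 k m) (F2 k m r) r := by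
  unfold F1 F2
  exact HasDerivAt.fun_sum fun s _ => (hasDerivAt_G1 _ _ r).const_mul _

noncomputable def NN (k m : ℕ) : ℝ := 2 * k + m + 1

lemma one_le_NN (k m : ℕ) : 1 ≤ NN k m := by unfold NN; linarith [Nat.cast_nonneg (α := ℝ) k, Nat.cast_nonneg (α := ℝ) m]

lemma abs_cc_le (k m s : ℕ) (hs : s ≤ k) : |cc k m s| ≤ (k.choose s : ℝ) * NN k m ^ k := by
  unfold cc
  rw [abs_mul, abs_mul, abs_pow, abs_neg, abs_one, one_pow, one_mul, Nat.abs_cast, Nat.abs_cast]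
  apply mul_le_mul_of_nonneg_left _ (Nat.cast_nonneg _)
  calc ((m + k).choose s : ℝ) ≤ ((m + k : ℕ) : ℝ) ^ s := by exact_mod_cast Nat.choose_le_pow _ _
    _ ≤ NN k m ^ s := by
      apply pow_le_pow_left₀ (Nat.cast_nonneg _)
      unfold NN; push_cast; linarith [Nat.cast_nonneg (α := ℝ) k]
    _ ≤ NN k m ^ k := pow_le_pow_right₀ (one_le_NN k m) hs

lemma abs_sum_cc_le (k m : ℕ) (f : ℕ → ℝ) (B : ℝ) (hf : ∀ s ≤ k, |f s| ≤ B) :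
    |∑ s ∈ Finset.range (k + 1), cc k m s * f s| ≤ (2 * NN k m) ^ k * B := by
  refine (Finset.abs_sum_le_sum_abs _ _).trans ?_
  calc _ ≤ ∑ s ∈ Finset.range (k + 1), (k.choose s : ℝ) * (NN k m ^ k * B) := by
        apply Finset.sum_le_sum
        intro s hs
        have hs' : s ≤ k := by simpa [Nat.lt_succ_iff] using hs
        rw [abs_mul, ← mul_assoc]
        exact mul_le_mul (abs_cc_le k m s hs') (hf s hs') (abs_nonneg _)
          (mul_nonneg (Nat.cast_nonneg _) (pow_nonneg (by linarith [one_le_NN k m]) _))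
    _ = _ := by
        rw [← Finset.sum_mul, ← Nat.cast_sum, Nat.sum_range_choose]
        push_cast
        rw [mul_pow]; ring

lemma abs_F_le (k m : ℕ) (r : ℝ) : |F k m r| ≤ (2 * NN k m) ^ k := by
  unfold F
  simpa using abs_sum_cc_le k m _ 1 (fun s _ => abs_G_le (m + 2 * (k - s)) (2 * s) r)

lemma abs_F1_le (k m : ℕ) (r : ℝ) : |F1 k m r| ≤ (2 * NN k m) ^ k * NN k m := by
  refine abs_sum_cc_le k m _ _ (fun s hs => (abs_G1_le (m + 2 * (k - s)) (2 * s) r).trans ?_)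
  unfold NN; push_cast [Nat.cast_sub hs]; linarith

lemma abs_F2_le (k m : ℕ) (r : ℝ) : |F2 k m r| ≤ (2 * NN k m) ^ k * NN k m ^ 2 := by
  refine abs_sum_cc_le k m _ _ (fun s hs => (abs_G2_le (m + 2 * (k - s)) (2 * s) r).trans ?_)
  apply pow_le_pow_left₀ (by positivity)
  unfold NN; push_cast [Nat.cast_sub hs]; linarith

lemma cc_succ (k m j : ℕ) (hj : j + 1 ≤ k) :
    cc k m (j + 1) * ((j : ℝ) + 1) ^ 2 = - (cc k m j * ((k : ℝ) - j) * (m + k - j)) := by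
  have h1 : (k.choose (j + 1) : ℝ) * (j + 1) = k.choose j * ((k : ℝ) - j) := by
    have := Nat.choose_succ_right_eq k j
    rw [← Nat.cast_sub (by omega : j ≤ k)]
    exact_mod_cast this
  have h2 : ((m + k).choose (j + 1) : ℝ) * (j + 1) = (m + k).choose j * ((m : ℝ) + k - j) := by
    have := Nat.choose_succ_right_eq (m + k) j
    have e : (m : ℝ) + k - j = ((m + k - j : ℕ) : ℝ) := by
      rw [Nat.cast_sub (by omega : j ≤ m + k)]; push_cast; ring
    rw [e]
    exact_mod_cast this
  unfold cc
  calc _ = (-1) ^ (j + 1) * ((k.choose (j + 1) : ℝ) * (j + 1))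
      * (((m + k).choose (j + 1) : ℝ) * (j + 1)) := by ring
    _ = _ := by rw [h1, h2]; ring

noncomputable def lam (k m : ℕ) : ℝ := 4 * (k : ℝ) * ((k : ℝ) + m + 1) + 2 * m

lemma F_ode (k m : ℕ) (r : ℝ) (hc : Real.cos r ≠ 0) (hs : Real.sin r ≠ 0) :
    F2 k m r + 2 * (Real.cos (2 * r) / Real.sin (2 * r)) * F1 k m r
      - Real.tan r ^ 2 * (m : ℝ) ^ 2 * F k m r + lam k m * F k m r = 0 := by
  set T := (Real.sin r / Real.cos r) ^ 2 with hT
  have hT0 : T ≠ 0 := by rw [hT]; positivity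
  have key : ∀ j ≤ k, ∑ s ∈ Finset.range (j + 1),
      (cc k m s * G2 (m + 2 * (k - s)) (2 * s) r
      + 2 * (Real.cos (2 * r) / Real.sin (2 * r)) * (cc k m s * G1 (m + 2 * (k - s)) (2 * s) r)
      - Real.tan r ^ 2 * (m : ℝ) ^ 2 * (cc k m s * G (m + 2 * (k - s)) (2 * s) r)
      + lam k m * (cc k m s * G (m + 2 * (k - s)) (2 * s) r))
      = 4 * cc k m j * ((k : ℝ) - j) * (m + k - j) * (T + 1) * G (m + 2 * (k - j)) (2 * j) r := by
    have term : ∀ s ≤ k, (cc k m s * G2 (m + 2 * (k - s)) (2 * s) r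
      + 2 * (Real.cos (2 * r) / Real.sin (2 * r)) * (cc k m s * G1 (m + 2 * (k - s)) (2 * s) r)
      - Real.tan r ^ 2 * (m : ℝ) ^ 2 * (cc k m s * G (m + 2 * (k - s)) (2 * s) r)
      + lam k m * (cc k m s * G (m + 2 * (k - s)) (2 * s) r))
      = cc k m s * (4 * ((k : ℝ) - s) * (m + k - s) * (T + 1) + 4 * (s : ℝ) ^ 2 * (1 + 1 / T))
        * G (m + 2 * (k - s)) (2 * s) r := by
      intro s hsk
      rw [G2_eq _ _ _ hc hs, G1_eq _ _ _ hc hs, hT, Real.tan_eq_sin_div_cos, Real.cos_two_mul',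
        Real.sin_two_mul]
      unfold lam
      push_cast [Nat.cast_sub hsk]
      field_simp
      ring
    intro j
    induction j with
    | zero =>
      intro _
      rw [zero_add, Finset.sum_range_one, term 0 (Nat.zero_le _)]
      push_cast
      ring
    | succ j ih =>
      intro hj
      rw [Finset.sum_range_succ, ih (by omega), term (j + 1) hj]
      have hG : G (m + 2 * (k - (j + 1))) (2 * (j + 1)) r = T * G (m + 2 * (k - j)) (2 * j) r := by
        have : m + 2 * (k - j) = m + 2 * (k - (j + 1)) + 2 := by omega
        rw [this, hT]
        unfold G
        field_simp
        ring
      have hcc := cc_succ k m j hj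
      rw [hG]
      push_cast
      have e : ∀ g : ℝ, cc k m (j + 1) * (4 * ((k : ℝ) - (j + 1)) * (m + k - (j + 1)) * (T + 1)
        + 4 * ((j : ℝ) + 1) ^ 2 * (1 + 1 / T)) * (T * g)
        = 4 * cc k m (j + 1) * ((k : ℝ) - (j + 1)) * (m + k - (j + 1)) * (T + 1) * (T * g)
          + 4 * (cc k m (j + 1) * ((j : ℝ) + 1) ^ 2) * (T + 1) * g := by
        intro g; field_simp
      rw [e, hcc]
      ring
  have := key k le_rfl
  rw [sub_self, Finset.sum_add_distrib, Finset.sum_sub_distrib, Finset.sum_add_distrib,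
    ← Finset.mul_sum, ← Finset.mul_sum, ← Finset.mul_sum] at this
  unfold F F1 F2
  rw [this]
  ring

lemma jacobi_sum (k m : ℕ) (x : ℝ) : jacobiP k m x = ∑ s ∈ Finset.range (k + 1),
    cc k m s * ((1 + x) ^ (m + (k - s)) * (1 - x) ^ s) / (2 ^ k * (1 + x) ^ m) := by
  have hfun : (fun y : ℝ => (1 + y) ^ m * (1 - y ^ 2) ^ k)
      = fun y : ℝ => (fun y : ℝ => (1 + y) ^ (m + k)) y * (fun y : ℝ => (1 - y) ^ k) y := by
    funext y
    have : (1 - y ^ 2) = (1 + y) * (1 - y) := by ring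
    simp only [this, mul_pow, pow_add]; ring
  unfold jacobiP
  rw [hfun, iteratedDeriv_fun_mul (by fun_prop) (by fun_prop), Finset.mul_sum]
  apply Finset.sum_congr rfl
  intro s hs
  have hsk : s ≤ k := by simpa [Nat.lt_succ_iff] using hs
  have d1 : iteratedDeriv s (fun y : ℝ => (1 + y) ^ (m + k)) x
      = (m + k).descFactorial s * (1 + x) ^ (m + k - s) := by
    have := congrFun (iteratedDeriv_comp_const_add (n := s) (f := fun y : ℝ => y ^ (m + k))
      (s := (1 : ℝ))) x
    simp only [iteratedDeriv_pow] at this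
    exact this
  have d2 : iteratedDeriv (k - s) (fun y : ℝ => (1 - y) ^ k) x
      = (-1) ^ (k - s) * (k.descFactorial (k - s) * (1 - x) ^ (k - (k - s))) := by
    have := congrFun (iteratedDeriv_comp_const_sub (n := k - s) (f := fun y : ℝ => y ^ k)
      (s := (1 : ℝ))) x
    simp only [iteratedDeriv_pow, smul_eq_mul] at this
    exact this
  rw [d1, d2]
  have h1 : k - (k - s) = s := by omega
  have h2 : m + k - s = m + (k - s) := by omega
  rw [h1, h2]
  have h3 : ((-1 : ℝ)) ^ k * (-1) ^ (k - s) = (-1) ^ s := by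
    obtain ⟨d, rfl⟩ := Nat.exists_eq_add_of_le hsk
    rw [Nat.add_sub_cancel_left, pow_add, mul_assoc, ← mul_pow]; simp
  have h4 : ((m + k).descFactorial s : ℝ) = (s.factorial : ℝ) * (m + k).choose s := by
    exact_mod_cast Nat.descFactorial_eq_factorial_mul_choose _ _
  have h5 : (s.factorial : ℝ) * (k.descFactorial (k - s) : ℝ) = k.factorial := by
    have := Nat.factorial_mul_descFactorial (Nat.sub_le k s)
    rw [h1] at this
    exact_mod_cast this
  have hk : (k.factorial : ℝ) ≠ 0 := by positivity
  unfold cc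
  rw [← h3, h4]
  calc _ = (-1) ^ k * (-1) ^ (k - s) * (k.choose s : ℝ) * (m + k).choose s
        * ((1 + x) ^ (m + (k - s)) * (1 - x) ^ s)
        * ((s.factorial : ℝ) * (k.descFactorial (k - s) : ℝ) / k.factorial)
          / (2 ^ k * (1 + x) ^ m) := by
        rw [div_eq_mul_inv, div_eq_mul_inv, div_eq_mul_inv, mul_inv, mul_inv, mul_inv]
        ring
    _ = _ := by rw [h5, div_self hk, mul_one]

lemma cos_pow_mul_jacobi (k m : ℕ) (r : ℝ) :
    Real.cos r ^ m * jacobiP k m (Real.cos (2 * r)) = F k m r := by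
  unfold F
  by_cases h : Real.cos r = 0 ∧ m ≠ 0
  · obtain ⟨h, hm⟩ := h
    rw [h, zero_pow hm, zero_mul]
    symm
    apply Finset.sum_eq_zero
    intro s _
    unfold G
    rw [h, zero_pow (by omega)]
    ring
  · have hne : Real.cos r ^ m ≠ 0 := by
      by_cases hm : m = 0
      · simp [hm]
      · exact pow_ne_zero _ (fun h0 => h ⟨h0, hm⟩)
    have e1 : 1 + Real.cos (2 * r) = 2 * Real.cos r ^ 2 := by rw [Real.cos_two_mul]; ring
    have e2 : 1 - Real.cos (2 * r) = 2 * Real.sin r ^ 2 := by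
      rw [Real.cos_two_mul, Real.sin_sq]; ring
    rw [jacobi_sum, e1, e2, Finset.mul_sum]
    apply Finset.sum_congr rfl
    intro s hs
    have hsk : s ≤ k := by simpa [Nat.lt_succ_iff] using hs
    obtain ⟨d, rfl⟩ := Nat.exists_eq_add_of_le hsk
    rw [Nat.add_sub_cancel_left]
    unfold G
    simp only [mul_pow, pow_add, ← pow_mul, mul_comm 2 m, mul_comm 2 d]
    rw [pow_mul _ m 2]
    field_simp
    

lemma summable_exp_NN (t : ℝ) (ht : 0 < t) :
    Summable (fun p : ℤ × ℕ => Real.exp (-t * NN p.2 p.1.natAbs)) := by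
  have h1 : Summable (fun n : ℤ => Real.exp (-t * (n.natAbs : ℝ))) := by
    have h0 : Summable (fun n : ℕ => Real.exp (-t * (n : ℝ))) := by
      have := Real.summable_exp_nat_mul_iff.mpr (neg_lt_zero.mpr ht)
      simpa [mul_comm] using this
    refine Summable.of_nat_of_neg ?_ ?_
    · simpa using h0
    · simpa using h0
  have h2 : Summable (fun k : ℕ => Real.exp (-t * (2 * (k : ℝ) + 1))) := by
    have := (Real.summable_exp_nat_mul_iff.mpr
      (show -(2 * t) < 0 by linarith)).mul_left (Real.exp (-t))
    refine this.congr fun k => ?_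
    rw [← Real.exp_add]; ring_nf
  refine (h1.mul_of_nonneg h2 (fun _ => (Real.exp_pos _).le) (fun _ => (Real.exp_pos _).le)).congr
    fun p => ?_
  rw [← Real.exp_add, NN]
  ring_nf

noncomputable def U (t : ℝ) (p : ℤ × ℕ) : ℝ :=
  NN p.2 p.1.natAbs ^ 3 * (2 * NN p.2 p.1.natAbs) ^ p.2 * Real.exp (-lam p.2 p.1.natAbs * t)

lemma finite_NN_lt (M : ℝ) : {p : ℤ × ℕ | NN p.2 p.1.natAbs < M}.Finite := by
  obtain ⟨K, hK⟩ := exists_nat_gt M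
  refine ((Set.finite_Icc (-(K : ℤ)) K).prod (Set.finite_Iic K)).subset ?_
  rintro ⟨n, k⟩ h
  simp only [Set.mem_ofPred_eq, NN] at h
  have h' : ((2 * k + n.natAbs + 1 : ℕ) : ℝ) < K := by push_cast; linarith
  have h'' : 2 * k + n.natAbs + 1 < K := by exact_mod_cast h'
  simp only [Set.mem_prod, Set.mem_Icc, Set.mem_Iic]
  omega

lemma summable_U (t : ℝ) (ht : 0 < t) : Summable (U t) := by
  have ev1 : ∀ᶠ x : ℝ in Filter.atTop, x ^ 3 ≤ Real.exp (t * x) := by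
    filter_upwards [(isLittleO_pow_exp_pos_mul_atTop (k := 3) ht).bound one_pos] with x hx
    rw [one_mul, Real.norm_of_nonneg (Real.exp_pos _).le] at hx
    exact (le_abs_self _).trans hx
  have ev2 : ∀ᶠ x : ℝ in Filter.atTop, 2 * x ≤ Real.exp (2 * t * x) * Real.exp (-(4 * t)) := by
    filter_upwards [(isLittleO_pow_exp_pos_mul_atTop (k := 1) (show 0 < 2 * t by linarith)).bound
      (show 0 < Real.exp (-(4 * t)) / 2 by positivity)] with x hx
    rw [pow_one, Real.norm_of_nonneg (Real.exp_pos (2 * t * x)).le] at hx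
    have := (le_abs_self _).trans hx
    linarith
  obtain ⟨M, hM⟩ := Filter.eventually_atTop.mp (ev1.and ev2)
  refine ((summable_exp_NN t ht).mul_left (Real.exp (2 * t))).of_norm_bounded_eventually ?_
  refine Filter.mem_cofinite.mpr ((finite_NN_lt M).subset ?_)
  intro p hp
  simp only [Set.mem_compl_iff, Set.mem_ofPred_eq] at hp ⊢
  by_contra hlt
  apply hp
  obtain ⟨h1, h2⟩ := hM _ (not_lt.mp hlt)
  have hN := one_le_NN p.2 p.1.natAbs
  rw [Real.norm_of_nonneg (by unfold U; positivity)]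
  unfold U
  have h3 := pow_le_pow_left₀ (by linarith) h2 p.2
  have hlam : Real.exp (-lam p.2 p.1.natAbs * t) ≤
      Real.exp (-(2 * p.2 * NN p.2 p.1.natAbs + 2 * p.1.natAbs) * t) := by
    apply Real.exp_le_exp.mpr
    apply mul_le_mul_of_nonneg_right _ ht.le
    unfold lam NN
    have : (0 : ℝ) ≤ (p.2 : ℝ) * p.1.natAbs := by positivity
    have : (0 : ℝ) ≤ (p.2 : ℝ) := by positivity
    nlinarith
  calc _ ≤ Real.exp (t * NN p.2 p.1.natAbs) *
        (Real.exp (2 * t * NN p.2 p.1.natAbs) * Real.exp (-(4 * t))) ^ p.2 *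
        Real.exp (-(2 * p.2 * NN p.2 p.1.natAbs + 2 * p.1.natAbs) * t) := by
        gcongr
    _ = _ := by
        rw [← Real.exp_add, ← Real.exp_nat_mul, ← Real.exp_add, ← Real.exp_add, ← Real.exp_add]
        congr 1
        unfold NN
        ring

lemma bound_aux (N e x f c : ℝ) (k i j l : ℕ) (hN : 1 ≤ N) (he : 0 ≤ e) (hx : |x| ≤ N ^ i * e)
    (hf : |f| ≤ (2 * N) ^ k * N ^ j) (hc : |c| ≤ N ^ l) (h : i + j + l ≤ 2) :
    ‖N * x * f * c‖ ≤ N ^ 3 * (2 * N) ^ k * e := by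
  have hN0 : 0 ≤ N := by linarith
  rw [Real.norm_eq_abs, abs_mul, abs_mul, abs_mul, abs_of_nonneg hN0]
  calc N * |x| * |f| * |c| ≤ N * (N ^ i * e) * ((2 * N) ^ k * N ^ j) * N ^ l := by gcongr
    _ = N ^ (i + j + l) * (N * (2 * N) ^ k * e) := by rw [pow_add, pow_add]; ring
    _ ≤ N ^ 2 * (N * (2 * N) ^ k * e) := by
        gcongr
    _ = _ := by ring

lemma lam_nonneg (k m : ℕ) : 0 ≤ lam k m := by unfold lam; positivity

lemma lam_le (k m : ℕ) : lam k m ≤ NN k m ^ 2 := by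
  unfold lam NN; nlinarith [Nat.cast_nonneg (α := ℝ) m, Nat.cast_nonneg (α := ℝ) k]

lemma natAbs_le_NN (n : ℤ) (k : ℕ) : |(n : ℝ)| ≤ NN k n.natAbs := by
  have : |(n : ℝ)| = (n.natAbs : ℝ) := by rw [Nat.cast_natAbs]; push_cast; rfl
  rw [this]; unfold NN; linarith [Nat.cast_nonneg (α := ℝ) k]

/-- real general term with arbitrary factors -/
noncomputable def Q (E f c : ℤ × ℕ → ℝ) (p : ℤ × ℕ) : ℝ := NN p.2 p.1.natAbs * E p * f p * c p

noncomputable def E0 (t : ℝ) (p : ℤ × ℕ) : ℝ := Real.exp (-lam p.2 p.1.natAbs * t)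
noncomputable def E1 (t : ℝ) (p : ℤ × ℕ) : ℝ :=
  -lam p.2 p.1.natAbs * Real.exp (-lam p.2 p.1.natAbs * t)
noncomputable def f0 (r : ℝ) (p : ℤ × ℕ) : ℝ := F p.2 p.1.natAbs r
noncomputable def f1 (r : ℝ) (p : ℤ × ℕ) : ℝ := F1 p.2 p.1.natAbs r
noncomputable def f2 (r : ℝ) (p : ℤ × ℕ) : ℝ := F2 p.2 p.1.natAbs r
noncomputable def c0 (z : ℝ) (p : ℤ × ℕ) : ℝ := Real.cos (p.1 * z)
noncomputable def c1 (z : ℝ) (p : ℤ × ℕ) : ℝ := -(p.1 * Real.sin (p.1 * z))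
noncomputable def c2 (z : ℝ) (p : ℤ × ℕ) : ℝ := -((p.1 : ℝ) ^ 2 * Real.cos (p.1 * z))

lemma E0_le (t : ℝ) (p : ℤ × ℕ) : |E0 t p| ≤ NN p.2 p.1.natAbs ^ 0 *
    Real.exp (-lam p.2 p.1.natAbs * t) := by
  simp [E0]

lemma E1_le {t s : ℝ} (h : s ≤ t) (p : ℤ × ℕ) : |E1 t p| ≤ NN p.2 p.1.natAbs ^ 2 *
    Real.exp (-lam p.2 p.1.natAbs * s) := by
  have := lam_nonneg p.2 p.1.natAbs
  rw [E1, abs_mul, abs_neg, abs_of_nonneg this, Real.abs_exp]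
  apply mul_le_mul (lam_le _ _) _ (Real.exp_pos _).le (by positivity)
  apply Real.exp_le_exp.mpr
  nlinarith

lemma f0_le (r : ℝ) (p : ℤ × ℕ) : |f0 r p| ≤ (2 * NN p.2 p.1.natAbs) ^ p.2 *
    NN p.2 p.1.natAbs ^ 0 := by
  simpa [f0] using abs_F_le p.2 p.1.natAbs r
lemma f1_le (r : ℝ) (p : ℤ × ℕ) : |f1 r p| ≤ (2 * NN p.2 p.1.natAbs) ^ p.2 *
    NN p.2 p.1.natAbs ^ 1 := by
  simpa [f1] using abs_F1_le p.2 p.1.natAbs r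
lemma f2_le (r : ℝ) (p : ℤ × ℕ) : |f2 r p| ≤ (2 * NN p.2 p.1.natAbs) ^ p.2 *
    NN p.2 p.1.natAbs ^ 2 := abs_F2_le p.2 p.1.natAbs r

lemma c0_le (z : ℝ) (p : ℤ × ℕ) : |c0 z p| ≤ NN p.2 p.1.natAbs ^ 0 := by
  simpa [c0] using Real.abs_cos_le_one _
lemma c1_le (z : ℝ) (p : ℤ × ℕ) : |c1 z p| ≤ NN p.2 p.1.natAbs ^ 1 := by
  rw [c1, abs_neg, abs_mul, pow_one]
  have h1 := natAbs_le_NN p.1 p.2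
  have h2 := Real.abs_sin_le_one (p.1 * z)
  nlinarith [abs_nonneg (p.1 : ℝ)]
lemma c2_le (z : ℝ) (p : ℤ × ℕ) : |c2 z p| ≤ NN p.2 p.1.natAbs ^ 2 := by
  rw [c2, abs_neg, abs_mul, abs_pow]
  have h1 := pow_le_pow_left₀ (abs_nonneg _) (natAbs_le_NN p.1 p.2) 2
  have h2 := Real.abs_cos_le_one (p.1 * z)
  nlinarith [sq_nonneg |(p.1 : ℝ)|]

lemma Q_le (s : ℝ) (E f c : ℤ × ℕ → ℝ) (i j l : ℕ) (p : ℤ × ℕ)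
    (hE : |E p| ≤ NN p.2 p.1.natAbs ^ i * Real.exp (-lam p.2 p.1.natAbs * s))
    (hf : |f p| ≤ (2 * NN p.2 p.1.natAbs) ^ p.2 * NN p.2 p.1.natAbs ^ j)
    (hc : |c p| ≤ NN p.2 p.1.natAbs ^ l) (h : i + j + l ≤ 2) : ‖Q E f c p‖ ≤ U s p :=
  bound_aux _ _ _ _ _ _ i j l (one_le_NN _ _) (Real.exp_pos _).le hE hf hc h

lemma summable_Q (s : ℝ) (hs : 0 < s) (E f c : ℤ × ℕ → ℝ) (h : ∀ p, ‖Q E f c p‖ ≤ U s p) :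
    Summable (Q E f c) := .of_norm_bounded (summable_U s hs) h

lemma summable000 {t : ℝ} (ht : 0 < t) (r z : ℝ) : Summable (Q (E0 t) (f0 r) (c0 z)) :=
  summable_Q t ht _ _ _ fun p => Q_le t _ _ _ 0 0 0 p (E0_le t p) (f0_le r p) (c0_le z p) (by norm_num)
lemma summable010 {t : ℝ} (ht : 0 < t) (r z : ℝ) : Summable (Q (E0 t) (f1 r) (c0 z)) :=
  summable_Q t ht _ _ _ fun p => Q_le t _ _ _ 0 1 0 p (E0_le t p) (f1_le r p) (c0_le z p) (by norm_num)
lemma summable020 {t : ℝ} (ht : 0 < t) (r z : ℝ) : Summable (Q (E0 t) (f2 r) (c0 z)) :=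
  summable_Q t ht _ _ _ fun p => Q_le t _ _ _ 0 2 0 p (E0_le t p) (f2_le r p) (c0_le z p) (by norm_num)
lemma summable001 {t : ℝ} (ht : 0 < t) (r z : ℝ) : Summable (Q (E0 t) (f0 r) (c1 z)) :=
  summable_Q t ht _ _ _ fun p => Q_le t _ _ _ 0 0 1 p (E0_le t p) (f0_le r p) (c1_le z p) (by norm_num)
lemma summable002 {t : ℝ} (ht : 0 < t) (r z : ℝ) : Summable (Q (E0 t) (f0 r) (c2 z)) :=
  summable_Q t ht _ _ _ fun p => Q_le t _ _ _ 0 0 2 p (E0_le t p) (f0_le r p) (c2_le z p) (by norm_num)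

lemma deriv_r1 {t : ℝ} (ht : 0 < t) (r z : ℝ) :
    HasDerivAt (fun r => ∑' p, Q (E0 t) (f0 r) (c0 z) p) (∑' p, Q (E0 t) (f1 r) (c0 z) p) r :=
  hasDerivAt_tsum (g := fun p r => Q (E0 t) (f0 r) (c0 z) p)
    (g' := fun p r => Q (E0 t) (f1 r) (c0 z) p) (summable_U t ht)
    (fun p y => ((hasDerivAt_F p.2 p.1.natAbs y).const_mul _).mul_const _)
    (fun p y => Q_le t _ _ _ 0 1 0 p (E0_le t p) (f1_le y p) (c0_le z p) (by norm_num))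
    (summable000 ht r z) r

lemma deriv_r2 {t : ℝ} (ht : 0 < t) (r z : ℝ) :
    HasDerivAt (fun r => ∑' p, Q (E0 t) (f1 r) (c0 z) p) (∑' p, Q (E0 t) (f2 r) (c0 z) p) r :=
  hasDerivAt_tsum (g := fun p r => Q (E0 t) (f1 r) (c0 z) p)
    (g' := fun p r => Q (E0 t) (f2 r) (c0 z) p) (summable_U t ht)
    (fun p y => ((hasDerivAt_F1 p.2 p.1.natAbs y).const_mul _).mul_const _)
    (fun p y => Q_le t _ _ _ 0 2 0 p (E0_le t p) (f2_le y p) (c0_le z p) (by norm_num))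
    (summable010 ht r z) r

lemma hasDerivAt_c0 (p : ℤ × ℕ) (z : ℝ) : HasDerivAt (fun z => c0 z p) (c1 z p) z := by
  have := (Real.hasDerivAt_cos ((p.1 : ℝ) * z)).comp z ((hasDerivAt_id z).const_mul (p.1 : ℝ))
  refine this.congr_deriv ?_
  simp only [c1]; ring

lemma hasDerivAt_c1 (p : ℤ × ℕ) (z : ℝ) : HasDerivAt (fun z => c1 z p) (c2 z p) z := by
  have := (((Real.hasDerivAt_sin ((p.1 : ℝ) * z)).comp z
    ((hasDerivAt_id z).const_mul (p.1 : ℝ))).const_mul (p.1 : ℝ)).neg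
  refine this.congr_deriv ?_
  simp only [c2]; ring

lemma deriv_z1 {t : ℝ} (ht : 0 < t) (r z : ℝ) :
    HasDerivAt (fun z => ∑' p, Q (E0 t) (f0 r) (c0 z) p) (∑' p, Q (E0 t) (f0 r) (c1 z) p) z :=
  hasDerivAt_tsum (g := fun p z => Q (E0 t) (f0 r) (c0 z) p)
    (g' := fun p z => Q (E0 t) (f0 r) (c1 z) p) (summable_U t ht)
    (fun p y => (hasDerivAt_c0 p y).const_mul _)
    (fun p y => Q_le t _ _ _ 0 0 1 p (E0_le t p) (f0_le r p) (c1_le y p) (by norm_num))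
    (summable000 ht r z) z

lemma deriv_z2 {t : ℝ} (ht : 0 < t) (r z : ℝ) :
    HasDerivAt (fun z => ∑' p, Q (E0 t) (f0 r) (c1 z) p) (∑' p, Q (E0 t) (f0 r) (c2 z) p) z :=
  hasDerivAt_tsum (g := fun p z => Q (E0 t) (f0 r) (c1 z) p)
    (g' := fun p z => Q (E0 t) (f0 r) (c2 z) p) (summable_U t ht)
    (fun p y => (hasDerivAt_c1 p y).const_mul _)
    (fun p y => Q_le t _ _ _ 0 0 2 p (E0_le t p) (f0_le r p) (c2_le y p) (by norm_num))
    (summable001 ht r z) z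

lemma hasDerivAt_E0 (p : ℤ × ℕ) (t : ℝ) : HasDerivAt (fun t => E0 t p) (E1 t p) t := by
  have := (Real.hasDerivAt_exp (-lam p.2 p.1.natAbs * t)).comp t
    ((hasDerivAt_id t).const_mul (-lam p.2 p.1.natAbs))
  refine this.congr_deriv ?_
  simp only [E1]; ring

lemma deriv_t {t : ℝ} (ht : 0 < t) (r z : ℝ) :
    HasDerivAt (fun t => ∑' p, Q (E0 t) (f0 r) (c0 z) p) (∑' p, Q (E1 t) (f0 r) (c0 z) p) t :=
  hasDerivAt_tsum_of_isPreconnected (g := fun p t => Q (E0 t) (f0 r) (c0 z) p)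
    (g' := fun p t => Q (E1 t) (f0 r) (c0 z) p) (summable_U (t / 2) (by linarith))
    (isOpen_Ioi (a := t / 2)) isPreconnected_Ioi
    (fun p y _ => (((hasDerivAt_E0 p y).const_mul _).mul_const _).mul_const _)
    (fun p y hy => Q_le (t / 2) _ _ _ 2 0 0 p (E1_le (le_of_lt hy) p) (f0_le r p) (c0_le z p)
      (by norm_num))
    (show t ∈ Set.Ioi (t / 2) by simp only [Set.mem_Ioi]; linarith) (summable000 ht r z)
    (show t ∈ Set.Ioi (t / 2) by simp only [Set.mem_Ioi]; linarith)

lemma heatTerm_eq (t r z : ℝ) (p : ℤ × ℕ) : heatTerm t r z p.1 p.2 =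
    ((NN p.2 p.1.natAbs * E0 t p * f0 r p : ℝ) : ℂ) *
      Complex.exp (((p.1 * z : ℝ) : ℂ) * Complex.I) := by
  unfold heatTerm E0 f0 NN lam
  rw [← cos_pow_mul_jacobi]
  push_cast
  ring

lemma summable_heatTerm {t : ℝ} (ht : 0 < t) (r z : ℝ) :
    Summable (fun p : ℤ × ℕ => heatTerm t r z p.1 p.2) := by
  refine Summable.of_norm_bounded (summable_U t ht) fun p => ?_
  rw [heatTerm_eq, norm_mul, Complex.norm_exp_ofReal_mul_I, mul_one, Complex.norm_real]
  have := Q_le t (E0 t) (f0 r) (fun _ => 1) 0 0 0 p (E0_le t p) (f0_le r p) (by simp) (by norm_num)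
  simpa [Q] using this

lemma heatP_eq {t : ℝ} (ht : 0 < t) (r z : ℝ) :
    heatP t r z = ∑' p, Q (E0 t) (f0 r) (c0 z) p := by
  have hs := summable_heatTerm ht r z
  unfold heatP
  rw [← hs.tsum_prod, Complex.re_tsum hs]
  congr 1
  funext p
  rw [heatTerm_eq, Complex.re_ofReal_mul, Complex.exp_ofReal_mul_I_re]
  rfl

end SU2

/-- For `t > 0` the double series defining `p_t(r,z)` converges (absolutely), and
`p` satisfies the heat equation `∂p/∂t = ∂²p/∂r² + 2 cot(2r) ∂p/∂r + tan²(r) ∂²p/∂z²`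
for all `t > 0`, `r ∈ (0, π/2)`, `z ∈ ℝ`. -/
theorem stmt_2 :
    (∀ t : ℝ, 0 < t → ∀ r z : ℝ, Summable (fun nk : ℤ × ℕ => heatTerm t r z nk.1 nk.2)) ∧
    (∀ t : ℝ, 0 < t → ∀ r ∈ Set.Ioo 0 (Real.pi / 2), ∀ z : ℝ,
      deriv (fun t' => heatP t' r z) t =
        deriv (fun r' => deriv (fun r'' => heatP t r'' z) r') r
          + 2 * (Real.cos (2 * r) / Real.sin (2 * r)) * deriv (fun r' => heatP t r' z) r
          + Real.tan r ^ 2 * deriv (fun z' => deriv (fun z'' => heatP t r z'') z') z) := by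
  open SU2 in
  refine ⟨fun t ht r z => summable_heatTerm ht r z, ?_⟩
  intro t ht r hr z
  have hc : Real.cos r ≠ 0 :=
    (Real.cos_pos_of_mem_Ioo ⟨by linarith [hr.1, Real.pi_pos], hr.2⟩).ne'
  have hsin : Real.sin r ≠ 0 :=
    (Real.sin_pos_of_pos_of_lt_pi hr.1 (by linarith [hr.2, Real.pi_pos])).ne'
  have et : deriv (fun t' => heatP t' r z) t = ∑' p, Q (E1 t) (f0 r) (c0 z) p := by
    refine (HasDerivAt.congr_of_eventuallyEq (deriv_t ht r z) ?_).deriv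
    filter_upwards [lt_mem_nhds ht] with t' ht'
    exact heatP_eq ht' r z
  have er : (fun r' => heatP t r' z) = fun r' => ∑' p, Q (E0 t) (f0 r') (c0 z) p :=
    funext fun r' => heatP_eq ht r' z
  have ez : (fun z' => heatP t r z') = fun z' => ∑' p, Q (E0 t) (f0 r) (c0 z') p :=
    funext fun z' => heatP_eq ht r z'
  rw [et, er, ez]
  have er1 : (fun r' => deriv (fun r'' => ∑' p, Q (E0 t) (f0 r'') (c0 z) p) r')
      = fun r' => ∑' p, Q (E0 t) (f1 r') (c0 z) p := funext fun r' => (deriv_r1 ht r' z).deriv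
  have ez1 : (fun z' => deriv (fun z'' => ∑' p, Q (E0 t) (f0 r) (c0 z'') p) z')
      = fun z' => ∑' p, Q (E0 t) (f0 r) (c1 z') p := funext fun z' => (deriv_z1 ht r z').deriv
  rw [er1, ez1, (deriv_r1 ht r z).deriv, (deriv_r2 ht r z).deriv, (deriv_z2 ht r z).deriv]
  have s2 := summable020 ht r z
  have s1 := (summable010 ht r z).mul_left (2 * (Real.cos (2 * r) / Real.sin (2 * r)))
  have s3 := (summable002 ht r z).mul_left (Real.tan r ^ 2)
  rw [← tsum_mul_left, ← tsum_mul_left, ← s2.tsum_add s1, ← (s2.add s1).tsum_add s3]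
  congr 1
  funext p
  have ode := F_ode p.2 p.1.natAbs r hc hsin
  have hn : (p.1.natAbs : ℝ) ^ 2 = (p.1 : ℝ) ^ 2 := by
    rw [Nat.cast_natAbs]; push_cast; exact sq_abs _
  rw [hn] at ode
  simp only [Q, E0, E1, f0, f1, f2, c0, c2]
  linear_combination (-(NN p.2 p.1.natAbs * Real.exp (-lam p.2 p.1.natAbs * t)
    * Real.cos (p.1 * z))) * ode
end

section
/- For every smooth function f : [0, π/2] × ℝ → ℝ which is 2π-periodic in its second variable, one has lim_{t → 0⁺} (1/2π) ∫_0^{π/2} ∫_0^{2π} p_t(r, z) · f(r, z) · sin(2r) dz dr = f(0, 0). -/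
open Real

/-- second order expansion predicate -/
def TT (F : ℝ → ℂ) (f0 f1 f2 : ℂ) : Prop :=
  ∃ R : ℝ → ℂ, Continuous R ∧ ∀ τ : ℝ, F τ = f0 + f1 * τ + f2 * τ ^ 2 + τ ^ 3 * R τ

lemma TT_mul {F G : ℝ → ℂ} {f0 f1 f2 g0 g1 g2 : ℂ} (hF : TT F f0 f1 f2) (hG : TT G g0 g1 g2) :
    TT (fun τ => F τ * G τ) (f0 * g0) (f0 * g1 + f1 * g0) (f0 * g2 + f1 * g1 + f2 * g0) := by
  obtain ⟨R, hR, h⟩ := hF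
  obtain ⟨S, hS, k⟩ := hG
  refine ⟨fun τ => f1 * g2 + f2 * g1 + f2 * g2 * τ + (f0 + f1 * τ + f2 * τ ^ 2) * S τ
    + R τ * (g0 + g1 * τ + g2 * τ ^ 2) + τ ^ 3 * R τ * S τ, ?_, ?_⟩
  · fun_prop
  · intro τ
    simp only [h, k]; ring

lemma TT_pow {F : ℝ → ℂ} {A B C : ℂ} (hF : TT F A B C) (a : ℕ) :
    TT (fun τ => F τ ^ a) (A ^ a) (a * A ^ (a - 1) * B)
      (a * A ^ (a - 1) * C + (a * (a - 1 : ℂ) / 2) * A ^ (a - 2) * B ^ 2) := by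
  induction a with
  | zero => exact ⟨fun _ => 0, continuous_const, by intro τ; simp⟩
  | succ a ih =>
    have h := TT_mul ih hF
    obtain ⟨R, hR, h⟩ := h
    refine ⟨R, hR, fun τ => ?_⟩
    have h' := h τ
    simp only [pow_succ] at h' ⊢
    rw [h']
    rcases a with _ | a
    · simp
    · rcases a with _ | a
      · simp; ring
      · have e1 : a + 1 + 1 - 1 = a + 1 := rfl
        have e2 : a + 1 + 1 - 2 = a := rfl
        have e3 : a + 1 + 1 + 1 - 2 = a + 1 := rfl
        have e4 : a + 1 + 1 + 1 - 1 = a + 2 := rfl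
        rw [e1, e2, e3, e4]
        push_cast
        ring

/-- monomials -/
noncomputable def mon (a b : ℕ) (w : ℂ) : ℂ := w ^ a * (starRingEnd ℂ w) ^ b

noncomputable def pt (w : ℂ) (c : ℝ) (ξ : ℂ) (τ : ℝ) : ℂ := w * (1 - 2 * τ ^ 2) + τ * c * ξ

noncomputable def avg (u : ℂ → ℂ) (w : ℂ) (c : ℝ) (τ : ℝ) : ℂ :=
  u (pt w c 1 τ) + u (pt w c (-1) τ) + u (pt w c Complex.I τ) + u (pt w c (-Complex.I) τ)

def E2 (u v : ℂ → ℂ) : Prop := ∀ (w : ℂ) (c : ℝ), c ^ 2 = 4 * (1 - ‖w‖ ^ 2) →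
  ∃ R : ℝ → ℂ, Continuous R ∧ ∀ τ : ℝ, avg u w c τ = 4 * u w + 4 * τ ^ 2 * v w + τ ^ 3 * R τ

noncomputable def Lmon (a b : ℕ) (w : ℂ) : ℂ :=
  4 * a * b * (mon (a - 1) (b - 1) w * (1 - w * starRingEnd ℂ w)) - 2 * (a + b) * mon a b w

lemma TT_mon (a b : ℕ) (w : ℂ) (c : ℝ) (ξ : ℂ) :
    TT (fun τ => mon a b (pt w c ξ τ)) (mon a b w)
     (w ^ a * (b * (starRingEnd ℂ w) ^ (b - 1) * (c * starRingEnd ℂ ξ)) +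
       a * w ^ (a - 1) * (c * ξ) * (starRingEnd ℂ w) ^ b)
     (w ^ a * (b * (starRingEnd ℂ w) ^ (b - 1) * (-2 * starRingEnd ℂ w) +
        (b * (b - 1 : ℂ) / 2) * (starRingEnd ℂ w) ^ (b - 2) * (c * starRingEnd ℂ ξ) ^ 2)
      + (a * w ^ (a - 1) * (c * ξ)) * (b * (starRingEnd ℂ w) ^ (b - 1) * (c * starRingEnd ℂ ξ))
      + (a * w ^ (a - 1) * (-2 * w) + (a * (a - 1 : ℂ) / 2) * w ^ (a - 2) * (c * ξ) ^ 2)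
        * (starRingEnd ℂ w) ^ b) := by
  have h1 : TT (fun τ => pt w c ξ τ) w (c * ξ) (-2 * w) :=
    ⟨fun _ => 0, continuous_const, by intro τ; simp [pt]; ring⟩
  have h2 : TT (fun τ => starRingEnd ℂ (pt w c ξ τ)) (starRingEnd ℂ w) (c * starRingEnd ℂ ξ)
      (-2 * starRingEnd ℂ w) :=
    ⟨fun _ => 0, continuous_const, by
      intro τ
      have h2 : starRingEnd ℂ (2 : ℂ) = 2 := Complex.conj_ofNat 2
      simp [pt, h2]; ring⟩
  exact TT_mul (TT_pow h1 a) (TT_pow h2 b)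

lemma E2_mon (a b : ℕ) : E2 (mon a b) (Lmon a b) := by
  intro w c hc
  obtain ⟨R1, c1, h1⟩ := TT_mon a b w c 1
  obtain ⟨R2, c2, h2⟩ := TT_mon a b w c (-1)
  obtain ⟨R3, c3, h3⟩ := TT_mon a b w c Complex.I
  obtain ⟨R4, c4, h4⟩ := TT_mon a b w c (-Complex.I)
  refine ⟨fun τ => R1 τ + R2 τ + R3 τ + R4 τ, by fun_prop, fun τ => ?_⟩
  have hc' : (c : ℂ) ^ 2 = 4 * (1 - w * starRingEnd ℂ w) := by
    rw [Complex.mul_conj, Complex.normSq_eq_norm_sq]; exact_mod_cast hc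
  have hI : Complex.I ^ 2 = -1 := Complex.I_sq
  simp only [avg]
  simp only at h1 h2 h3 h4
  rw [h1, h2, h3, h4]
  have ha : (a : ℂ) * w ^ (a - 1) * w = a * w ^ a := by
    rcases a with _ | a
    · simp
    · simp [pow_succ]; ring
  have hb : (b : ℂ) * (starRingEnd ℂ w) ^ (b - 1) * starRingEnd ℂ w = b * (starRingEnd ℂ w) ^ b := by
    rcases b with _ | a
    · simp
    · simp [pow_succ]; ring
  simp only [Lmon, mon, map_one, map_neg, Complex.conj_I]
  generalize (starRingEnd ℂ w) = v at *
  generalize w ^ (a - 1) = x1 at *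
  generalize w ^ (a - 2) = x2 at *
  generalize v ^ (b - 1) = y1 at *
  generalize v ^ (b - 2) = y2 at *
  generalize w ^ a = x0 at *
  generalize v ^ b = y0 at *
  generalize Complex.I = i at *
  have e : (1 : ℂ) - w * v = c ^ 2 / 4 := by rw [hc']; ring
  rw [e]
  linear_combination (-8 * (τ : ℂ) ^ 2 * x0) * hb + (-8 * (τ : ℂ) ^ 2 * y0) * ha +
    (τ : ℂ) ^ 2 * c ^ 2 * (x0 * (b * (b - 1 : ℂ)) * y2 + y0 * (a * (a - 1 : ℂ)) * x2 - 2 * a * b * x1 * y1) * hI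

lemma E2_add {u v u' v' : ℂ → ℂ} (h : E2 u v) (h' : E2 u' v') :
    E2 (fun w => u w + u' w) (fun w => v w + v' w) := by
  intro w c hc
  obtain ⟨R, hR, e⟩ := h w c hc
  obtain ⟨R', hR', e'⟩ := h' w c hc
  refine ⟨fun τ => R τ + R' τ, by fun_prop, fun τ => ?_⟩
  have := e τ
  have := e' τ
  simp only [avg] at *
  linear_combination e τ + e' τ

lemma E2_smul {u v : ℂ → ℂ} (z : ℂ) (h : E2 u v) :
    E2 (fun w => z * u w) (fun w => z * v w) := by
  intro w c hc
  obtain ⟨R, hR, e⟩ := h w c hc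
  refine ⟨fun τ => z * R τ, by fun_prop, fun τ => ?_⟩
  simp only [avg] at *
  linear_combination z * e τ

lemma E2_sum {ι : Type*} (S : Finset ι) (c : ι → ℂ) (u v : ι → ℂ → ℂ) (h : ∀ i ∈ S, E2 (u i) (v i)) :
    E2 (fun w => ∑ i ∈ S, c i * u i w) (fun w => ∑ i ∈ S, c i * v i w) := by
  classical
  induction S using Finset.induction_on with
  | empty =>
    intro w c hc
    exact ⟨fun _ => 0, continuous_const, by simp [avg]⟩
  | insert i S hi ih =>
    have h1 := E2_add (E2_smul (c i) (h i (by simp))) (ih (fun j hj => h j (by simp [hj])))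
    simpa [Finset.sum_insert hi] using h1

lemma max_principle {u v : ℂ → ℂ} (h : E2 u v) {w : ℂ} (hw : ‖w‖ ≤ 1)
    (hmin : ∀ z : ℂ, ‖z‖ ≤ 1 → (u w).re ≤ (u z).re) : 0 ≤ (v w).re := by
  set c : ℝ := 2 * Real.sqrt (1 - ‖w‖ ^ 2) with hc
  have hnn : 0 ≤ 1 - ‖w‖ ^ 2 := by nlinarith [norm_nonneg w]
  have hc2 : c ^ 2 = 4 * (1 - ‖w‖ ^ 2) := by
    rw [hc, mul_pow, Real.sq_sqrt hnn]; norm_num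
  obtain ⟨R, hR, e⟩ := h w c hc2
  have hin : ∀ ξ : ℂ, ∀ᶠ τ : ℝ in nhdsWithin 0 (Set.Ioi 0), ‖pt w c ξ τ‖ ≤ 1 := by
    intro ξ
    apply Filter.Eventually.filter_mono nhdsWithin_le_nhds
    rcases lt_or_eq_of_le hw with hlt | heq
    · have hcont : Continuous (fun τ : ℝ => ‖pt w c ξ τ‖) := by unfold pt; fun_prop
      have h0 : ‖pt w c ξ 0‖ < 1 := by simpa [pt] using hlt
      have := hcont.continuousAt.eventually (gt_mem_nhds h0)
      filter_upwards [this] with τ hτ using hτ.le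
    · have hc0 : c = 0 := by rw [hc, heq]; simp
      have : ∀ᶠ τ : ℝ in nhds 0, |τ| < 1 := by
        have := (continuous_abs (G := ℝ)).continuousAt.eventually (gt_mem_nhds (show |(0:ℝ)| < 1 by simp))
        exact this
      filter_upwards [this] with τ hτ
      have e : pt w c ξ τ = w * ((1 - 2 * τ ^ 2 : ℝ) : ℂ) := by simp [pt, hc0]
      rw [e, norm_mul, heq, one_mul, Complex.norm_real, Real.norm_eq_abs, abs_le]
      have := sq_lt_one_iff_abs_lt_one τ |>.2 hτ
      constructor <;> nlinarith [sq_nonneg τ]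
  have key : ∀ᶠ τ : ℝ in nhdsWithin 0 (Set.Ioi 0), 0 ≤ 4 * (v w).re + τ * (R τ).re := by
    filter_upwards [hin 1, hin (-1), hin Complex.I, hin (-Complex.I), self_mem_nhdsWithin] with τ a1 a2 a3 a4 hτ
    have hτ : 0 < τ := hτ
    have b1 := hmin _ a1
    have b2 := hmin _ a2
    have b3 := hmin _ a3
    have b4 := hmin _ a4
    have e1 := congrArg Complex.re (e τ)
    have e2 : (4 * u w + 4 * (τ:ℂ) ^ 2 * v w + (τ:ℂ) ^ 3 * R τ).re = 4 * (u w).re + τ ^ 2 * (4 * (v w).re + τ * (R τ).re) := by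
      have : 4 * u w + 4 * (τ:ℂ) ^ 2 * v w + (τ:ℂ) ^ 3 * R τ = ((4 : ℝ) : ℂ) * u w + ((4 * τ ^ 2 : ℝ) : ℂ) * v w + ((τ ^ 3 : ℝ) : ℂ) * R τ := by
        push_cast; ring
      rw [this, Complex.add_re, Complex.add_re, Complex.re_ofReal_mul, Complex.re_ofReal_mul, Complex.re_ofReal_mul]
      ring
    rw [e2] at e1
    simp only [avg, Complex.add_re] at e1
    have : 0 ≤ τ ^ 2 * (4 * (v w).re + τ * (R τ).re) := by linarith
    exact nonneg_of_mul_nonneg_right this (by positivity)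
  have lim : Filter.Tendsto (fun τ : ℝ => 4 * (v w).re + τ * (R τ).re) (nhdsWithin 0 (Set.Ioi 0))
      (nhds (4 * (v w).re)) := by
    have hcont : Continuous (fun τ : ℝ => 4 * (v w).re + τ * (R τ).re) := by fun_prop
    have := hcont.tendsto 0
    simp at this
    exact this.mono_left nhdsWithin_le_nhds
  have := ge_of_tendsto lim key
  linarith

/-- coefficients of the shifted Jacobi polynomials -/
noncomputable def qc (n k i : ℕ) : ℝ := (-1) ^ (k + i) * (k.choose i) * ((n + k + i).choose k)

lemma qc_rec (n k i : ℕ) : ((n : ℝ) + i + 1) * (i + 1) * qc n k (i + 1) =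
    -((k : ℝ) - i) * (n + k + i + 1) * qc n k i := by
  unfold qc
  have h1 : ((k.choose (i+1) : ℕ) : ℝ) * (i + 1) = k.choose i * ((k : ℝ) - i) := by
    rcases le_or_gt i k with h | h
    · have := Nat.choose_succ_right_eq k i
      have h2 : (((k - i : ℕ)) : ℝ) = (k : ℝ) - i := by push_cast [h]; ring
      rw [← h2]; exact_mod_cast this
    · rw [Nat.choose_eq_zero_of_lt h, Nat.choose_eq_zero_of_lt (by omega)]; simp
  have h2 : (((n + k + (i + 1)).choose k : ℕ) : ℝ) * (n + i + 1) = (n + k + i).choose k * (n + k + i + 1) := by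
    have := Nat.choose_mul_succ_eq (n + k + i) k
    have h3 : n + k + i + 1 - k = n + i + 1 := by omega
    rw [h3] at this
    have e : n + k + (i + 1) = n + k + i + 1 := by ring
    rw [e]
    exact_mod_cast this.symm
  have : ((-1 : ℝ)) ^ (k + (i + 1)) = - (-1) ^ (k + i) := by rw [← add_assoc, pow_succ]; ring
  rw [this]
  linear_combination (-(-1 : ℝ) ^ (k + i)) * ((n + k + (i + 1)).choose k * ((n : ℝ) + i + 1) * h1 + k.choose i * ((k : ℝ) - i) * h2)

noncomputable def lam (m k : ℕ) : ℝ := 4 * (k : ℝ) * (k + m + 1) + 2 * m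

lemma lam_nonneg (m k : ℕ) : 0 ≤ lam m k := by unfold lam; positivity

/-- disc polynomials with non-negative angular index -/
noncomputable def pho (m k : ℕ) (w : ℂ) : ℂ :=
  ∑ i ∈ Finset.range (k + 1), (qc m k i : ℂ) * mon (m + i) i w

noncomputable def phi (x : ℤ × ℕ) (w : ℂ) : ℂ :=
  if 0 ≤ x.1 then pho x.1.natAbs x.2 w else pho x.1.natAbs x.2 (starRingEnd ℂ w)

lemma mon_conj (a b : ℕ) (w : ℂ) : mon a b (starRingEnd ℂ w) = mon b a w := by
  simp [mon, mul_comm]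

lemma Lmon_conj (a b : ℕ) (w : ℂ) : Lmon a b (starRingEnd ℂ w) = Lmon b a w := by
  simp [Lmon, mon_conj]; ring

lemma qc_top (m k : ℕ) : qc m k (k + 1) = 0 := by simp [qc]

lemma pho_eigen (m k : ℕ) (w : ℂ) :
    ∑ i ∈ Finset.range (k + 1), (qc m k i : ℂ) * Lmon (m + i) i w = -(lam m k : ℂ) * pho m k w := by
  have h1 : ∀ i, Lmon (m + i) i w = 4 * (m + i) * i * (mon (m + i - 1) (i - 1) w) 
      - (4 * (m + i) * i + 2 * (m + 2 * i)) * mon (m + i) i w := by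
    intro i
    rcases i with _ | i
    · simp [Lmon]
    · simp only [Lmon, mon]
      have e1 : m + (i + 1) - 1 = m + i := rfl
      have e2 : i + 1 - 1 = i := rfl
      rw [e1, e2]
      push_cast
      ring
  have h2 : ∑ i ∈ Finset.range (k + 1), (qc m k i : ℂ) * (4 * (m + i) * i * (mon (m + i - 1) (i - 1) w))
      = ∑ i ∈ Finset.range (k + 1), (qc m k (i + 1) : ℂ) * (4 * (m + i + 1) * (i + 1) * (mon (m + i) i w)) := by
    rw [Finset.sum_range_succ', Finset.sum_range_succ _ k, qc_top]
    simp only [CharP.cast_eq_zero, mul_zero, zero_mul, add_zero, Complex.ofReal_zero]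
    apply Finset.sum_congr rfl
    intro i _
    have e1 : m + (i + 1) - 1 = m + i := rfl
    have e2 : i + 1 - 1 = i := rfl
    rw [e1, e2]
    push_cast
    ring
  simp only [h1, mul_sub, Finset.sum_sub_distrib]
  rw [h2, ← Finset.sum_sub_distrib, pho, Finset.mul_sum]
  apply Finset.sum_congr rfl
  intro i _
  have := congrArg (fun x : ℝ => (x : ℂ)) (qc_rec m k i)
  push_cast at this
  simp only [lam]
  push_cast
  linear_combination (4 * mon (m + i) i w) * this

lemma E2_phi (x : ℤ × ℕ) : E2 (phi x) (fun w => -(lam x.1.natAbs x.2 : ℂ) * phi x w) := by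
  unfold phi
  split_ifs with h
  · simp only [← pho_eigen]
    unfold pho
    exact E2_sum _ _ _ _ (fun i _ => E2_mon _ _)
  · simp only [← pho_eigen]
    unfold pho
    simp only [mon_conj, Lmon_conj]
    exact E2_sum _ _ _ _ (fun i _ => E2_mon _ _)

lemma continuous_mon (a b : ℕ) : Continuous (mon a b) := by
  have : Continuous (starRingEnd ℂ) := Complex.continuous_conj
  unfold mon; fun_prop

lemma continuous_pho (m k : ℕ) : Continuous (pho m k) := by
  have := continuous_mon
  unfold pho; fun_prop

lemma continuous_phi (x : ℤ × ℕ) : Continuous (phi x) := by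
  have : Continuous (starRingEnd ℂ) := Complex.continuous_conj
  have := continuous_pho x.1.natAbs x.2
  unfold phi; split_ifs <;> fun_prop

lemma resolvent_pos (S : Finset (ℤ × ℕ)) (c : ℤ × ℕ → ℂ) (s : ℝ) (hs : 0 ≤ s)
    (h : ∀ w : ℂ, ‖w‖ ≤ 1 → 0 ≤ (∑ x ∈ S, c x * phi x w).re) :
    ∀ w : ℂ, ‖w‖ ≤ 1 → 0 ≤ (∑ x ∈ S, (((1 + s * lam x.1.natAbs x.2)⁻¹ : ℝ) : ℂ) * c x * phi x w).re := by
  set d : ℤ × ℕ → ℂ := fun x => (((1 + s * lam x.1.natAbs x.2)⁻¹ : ℝ) : ℂ) * c x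
  set u : ℂ → ℂ := fun w => ∑ x ∈ S, d x * phi x w
  have hE : E2 u (fun w => ∑ x ∈ S, d x * (-(lam x.1.natAbs x.2 : ℂ) * phi x w)) :=
    E2_sum _ _ _ _ (fun i _ => E2_phi _)
  have hu : Continuous u := by
    have := continuous_phi
    fun_prop
  obtain ⟨w0, hw0, hmin⟩ := (isCompact_closedBall (0 : ℂ) 1).exists_isMinOn ⟨0, by simp⟩
    (Complex.continuous_re.comp hu).continuousOn
  have hw0' : ‖w0‖ ≤ 1 := by simpa using hw0
  have hm : ∀ z : ℂ, ‖z‖ ≤ 1 → (u w0).re ≤ (u z).re := fun z hz => hmin (show z ∈ _ by simpa using hz)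
  have hv := max_principle hE hw0' hm
  have e : u w0 = (s : ℂ) * (∑ x ∈ S, d x * (-(lam x.1.natAbs x.2 : ℂ) * phi x w0)) + ∑ x ∈ S, c x * phi x w0 := by
    simp only [u]
    rw [Finset.mul_sum, ← Finset.sum_add_distrib]
    apply Finset.sum_congr rfl
    intro x _
    have hne : (1 + s * lam x.1.natAbs x.2) ≠ 0 := by
      have := lam_nonneg x.1.natAbs x.2
      positivity
    have hne' : (1 + s * lam x.1.natAbs x.2 : ℂ) ≠ 0 := by exact_mod_cast hne
    simp only [d]
    push_cast
    field_simp
    ring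
  intro w hw
  refine le_trans ?_ (hm w hw)
  rw [e, Complex.add_re, Complex.re_ofReal_mul]
  have := h w0 hw0'
  positivity

lemma resolvent_pow_pos (S : Finset (ℤ × ℕ)) (c : ℤ × ℕ → ℂ) (s : ℝ) (hs : 0 ≤ s)
    (h : ∀ w : ℂ, ‖w‖ ≤ 1 → 0 ≤ (∑ x ∈ S, c x * phi x w).re) (N : ℕ) :
    ∀ w : ℂ, ‖w‖ ≤ 1 → 0 ≤ (∑ x ∈ S, ((((1 + s * lam x.1.natAbs x.2) ^ N)⁻¹ : ℝ) : ℂ) * c x * phi x w).re := by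
  induction N with
  | zero => simpa using h
  | succ N ih =>
    have := resolvent_pos S _ s hs ih
    intro w hw
    have := this w hw
    convert this using 4
    rw [pow_succ]
    push_cast
    rw [mul_inv]
    ring

lemma semigroup_pos (S : Finset (ℤ × ℕ)) (c : ℤ × ℕ → ℂ) (t : ℝ) (ht : 0 ≤ t)
    (h : ∀ w : ℂ, ‖w‖ ≤ 1 → 0 ≤ (∑ x ∈ S, c x * phi x w).re) (w : ℂ) (hw : ‖w‖ ≤ 1) :
    0 ≤ (∑ x ∈ S, ((Real.exp (-(lam x.1.natAbs x.2) * t) : ℝ) : ℂ) * c x * phi x w).re := by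
  have lim : Filter.Tendsto (fun N : ℕ => (∑ x ∈ S, ((((1 + t / N * lam x.1.natAbs x.2) ^ N)⁻¹ : ℝ) : ℂ) * c x * phi x w).re)
      Filter.atTop (nhds (∑ x ∈ S, ((Real.exp (-(lam x.1.natAbs x.2) * t) : ℝ) : ℂ) * c x * phi x w).re) := by
    refine (Complex.continuous_re.tendsto _).comp (tendsto_finsetSum _ fun x _ => ?_)
    refine Filter.Tendsto.mul (Filter.Tendsto.mul ?_ tendsto_const_nhds) tendsto_const_nhds
    refine (Complex.continuous_ofReal.tendsto _).comp ?_
    have h1 := Real.tendsto_one_add_div_pow_exp (t * lam x.1.natAbs x.2)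
    have h2 := h1.inv₀ (Real.exp_ne_zero _)
    rw [← Real.exp_neg] at h2
    convert h2 using 4
    · ring
    · ring
  exact ge_of_tendsto' lim (fun N => resolvent_pow_pos S c (t / N) (by positivity) h N w hw)


lemma qc_zero_of_lt {n k i : ℕ} (h : k < i) : qc n k i = 0 := by
  simp [qc, Nat.choose_eq_zero_of_lt h]

open Polynomial in
noncomputable def Qp (n k : ℕ) : ℝ[X] := ∑ i ∈ Finset.range (k + 1), C (qc n k i) * X ^ i

open Polynomial in
lemma Qp_coeff (n k i : ℕ) : (Qp n k).coeff i = qc n k i := by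
  unfold Qp
  simp only [finsetSum_coeff, coeff_C_mul_X_pow]
  rw [Finset.sum_ite_eq]
  split_ifs with h
  · rfl
  · rw [qc_zero_of_lt]; simpa using h

lemma Qp_eval (n k : ℕ) (s : ℝ) : (Qp n k).eval s = ∑ i ∈ Finset.range (k + 1), qc n k i * s ^ i := by
  simp [Qp, Polynomial.eval_finsetSum]

lemma Qp_eval_one (n k : ℕ) : (Qp n k).eval 1 = 1 := by
  rw [Qp_eval]
  have h := fwdDiff_iter_eq_sum_shift (1 : ℕ) (fun x : ℕ => (x.choose (k + 0) : ℤ)) k (n + k)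
  rw [fwdDiff_iter_choose] at h
  have h' := congrArg (fun x : ℤ => (x : ℝ)) h
  simp only [Nat.choose_zero_right] at h'
  push_cast at h'
  refine Eq.trans ?_ h'.symm
  apply Finset.sum_congr rfl
  intro i hi
  have hik : i ≤ k := by simpa [Nat.lt_succ_iff] using hi
  have e : ((-1 : ℝ)) ^ (k + i) = (-1) ^ (k - i) := by
    have : k + i = (k - i) + 2 * i := by omega
    rw [this, pow_add, pow_mul]; simp
  simp [qc, e]

lemma iteratedDeriv_jac (k m : ℕ) (x : ℝ) :
    iteratedDeriv k (fun y : ℝ => (1 + y) ^ m * (1 - y ^ 2) ^ k) x =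
    ∑ i ∈ Finset.range (k + 1), ((k.choose i : ℝ) * 2 ^ (k - i) * (-1) ^ i) *
      (((m + k + i).descFactorial k : ℝ) * (1 + x) ^ (m + i)) := by
  have e : (fun y : ℝ => (1 + y) ^ m * (1 - y ^ 2) ^ k) =
      fun y : ℝ => ∑ i ∈ Finset.range (k + 1), ((k.choose i : ℝ) * 2 ^ (k - i) * (-1) ^ i) * (1 + y) ^ (m + k + i) := by
    funext y
    have h1 : (1 - y ^ 2) = (1 + y) * (-(1 + y) + 2) := by ring
    rw [h1, mul_pow, add_pow (-(1 + y)), Finset.mul_sum, Finset.mul_sum]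
    apply Finset.sum_congr rfl
    intro i _
    rw [neg_pow]
    ring
  rw [e, iteratedDeriv_fun_sum]
  · apply Finset.sum_congr rfl
    intro i _
    rw [iteratedDeriv_const_mul_field]
    congr 1
    have := congrFun (iteratedDeriv_comp_const_add k (fun z : ℝ => z ^ (m + k + i)) 1) x
    rw [this]
    rw [iteratedDeriv_pow]
    rw [show m + k + i - k = m + i by omega]
  · intro i _
    fun_prop

lemma jacobiP_eq (k m : ℕ) (s : ℝ) (h : s ≠ 0 ∨ m = 0) :
    jacobiP k m (2 * s - 1) = (Qp m k).eval s := by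
  unfold jacobiP
  rw [iteratedDeriv_jac, Qp_eval, Finset.mul_sum]
  apply Finset.sum_congr rfl
  intro i hi
  have hik : i ≤ k := by simpa [Nat.lt_succ_iff] using hi
  have hs : s ^ m ≠ 0 := by
    rcases h with h | h
    · positivity
    · simp [h]
  rw [Nat.descFactorial_eq_factorial_mul_choose, qc]
  have h2 : (2 : ℝ) ^ k = 2 ^ (k - i) * 2 ^ i := by rw [← pow_add]; congr 1; omega
  have e1 : (1 + (2 * s - 1)) = 2 * s := by ring
  rw [e1, mul_pow, mul_pow, h2]
  have : (k.factorial : ℝ) ≠ 0 := by positivity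
  push_cast
  field_simp
  ring

noncomputable def Wp (r z : ℝ) : ℂ := (Real.cos r : ℂ) * Complex.exp (z * Complex.I)

lemma pho_eq (m k : ℕ) (ρ : ℝ) (e : ℂ) (he : e * starRingEnd ℂ e = 1) :
    pho m k (ρ * e) = ((ρ ^ m * (Qp m k).eval (ρ ^ 2) : ℝ) : ℂ) * e ^ m := by
  unfold pho
  rw [Qp_eval]
  push_cast
  rw [Finset.mul_sum, Finset.sum_mul]
  apply Finset.sum_congr rfl
  intro i _
  simp only [mon, map_mul, Complex.conj_ofReal]
  have : e ^ i * starRingEnd ℂ e ^ i = 1 := by rw [← mul_pow, he, one_pow]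
  calc _ = (qc m k i : ℂ) * ρ ^ m * ρ ^ (2 * i) * e ^ m * (e ^ i * starRingEnd ℂ e ^ i) := by ring
    _ = _ := by rw [this]; ring

lemma exp_conj (z : ℝ) : starRingEnd ℂ (Complex.exp (z * Complex.I)) = Complex.exp (-(z * Complex.I)) := by
  rw [← Complex.exp_conj]; simp

lemma exp_mul_conj (z : ℝ) : Complex.exp (z * Complex.I) * starRingEnd ℂ (Complex.exp (z * Complex.I)) = 1 := by
  rw [exp_conj, ← Complex.exp_add]; simp

lemma phi_W (x : ℤ × ℕ) (r z : ℝ) : phi x (Wp r z) =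
    ((Real.cos r ^ x.1.natAbs * (Qp x.1.natAbs x.2).eval (Real.cos r ^ 2) : ℝ) : ℂ) *
      Complex.exp ((x.1 : ℂ) * (z : ℂ) * Complex.I) := by
  unfold phi Wp
  split_ifs with h
  · rw [pho_eq _ _ _ _ (exp_mul_conj z), ← Complex.exp_nat_mul]
    congr 2
    have : ((x.1.natAbs : ℕ) : ℂ) = (x.1 : ℂ) := by
      have : ((x.1.natAbs : ℤ)) = x.1 := Int.natAbs_of_nonneg h
      rw [← Int.cast_natCast, this]; try push_cast; try rfl
    rw [this]; ring
  · rw [map_mul, Complex.conj_ofReal, pho_eq _ _ _ _ (by rw [Complex.conj_conj, mul_comm]; exact exp_mul_conj z),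
      exp_conj, ← Complex.exp_nat_mul]
    congr 2
    have : ((x.1.natAbs : ℕ) : ℂ) = -(x.1 : ℂ) := by
      have : ((x.1.natAbs : ℤ)) = -x.1 := by omega
      rw [← Int.cast_natCast, this]; try push_cast; try rfl
    rw [this]; ring

noncomputable def wt (t : ℝ) (x : ℤ × ℕ) : ℝ :=
  (2 * (x.2 : ℝ) + (x.1.natAbs : ℝ) + 1) * Real.exp (-(lam x.1.natAbs x.2) * t)

lemma heatTerm_eq (t r z : ℝ) (n : ℤ) (k : ℕ) :
    heatTerm t r z n k = (wt t (n, k) : ℂ) * phi (n, k) (Wp r z) := by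
  rw [phi_W, heatTerm, wt, lam]
  have hj : Real.cos r ^ n.natAbs * jacobiP k n.natAbs (Real.cos (2 * r)) =
      Real.cos r ^ n.natAbs * (Qp n.natAbs k).eval (Real.cos r ^ 2) := by
    by_cases h : Real.cos r ≠ 0 ∨ n.natAbs = 0
    · rw [Real.cos_two_mul, jacobiP_eq]
      rcases h with h | h
      · left; positivity
      · right; exact h
    · push Not at h
      rw [h.1, zero_pow h.2]; simp
  rw [← mul_assoc, ← Complex.ofReal_mul]
  congr 2
  rw [mul_assoc, hj]

open Polynomial in
lemma Qp_ode (n k : ℕ) : derivative (X ^ (n + 1) * (1 - X) * derivative (Qp n k)) =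
    C (-((k : ℝ) * (k + n + 1))) * (X ^ n * Qp n k) := by
  have h : X * derivative (derivative (Qp n k)) - X * (X * derivative (derivative (Qp n k)))
      + C ((n : ℝ) + 1) * derivative (Qp n k) - C ((n : ℝ) + 2) * (X * derivative (Qp n k)) =
      C (-((k : ℝ) * (k + n + 1))) * Qp n k := by
    ext i
    have hr := qc_rec n k i
    simp only [coeff_add, coeff_sub, coeff_C_mul]
    rcases i with _ | i
    · simp [coeff_derivative, Qp_coeff] at hr ⊢
      linear_combination hr
    · rcases i with _ | i
      · simp [coeff_X_mul, coeff_derivative, Qp_coeff] at hr ⊢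
        linear_combination hr
      · simp [coeff_X_mul, coeff_derivative, Qp_coeff] at hr ⊢
        linear_combination hr
  rw [derivative_mul, derivative_mul, derivative_X_pow]
  simp only [derivative_sub, derivative_one, derivative_X, Nat.add_sub_cancel]
  have e : (C ((n : ℝ) + 2)) = C ((n : ℝ) + 1) + (1 : ℝ[X]) := by
    rw [← C_1, ← C_add]; congr 1; ring
  rw [e] at h
  push_cast
  have e2 : ((n : ℝ[X]) + 1) = C ((n : ℝ) + 1) := by simp
  try rw [e2]
  linear_combination X ^ n * h

noncomputable def II (p : Polynomial ℝ) : ℝ := ∫ s in (0 : ℝ)..1, p.eval s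

open Polynomial in
lemma II_add (p q : ℝ[X]) : II (p + q) = II p + II q := by
  unfold II
  rw [← intervalIntegral.integral_add (p.continuous.intervalIntegrable _ _) (q.continuous.intervalIntegrable _ _)]
  simp

open Polynomial in
lemma II_C_mul (c : ℝ) (q : ℝ[X]) : II (C c * q) = c * II q := by
  unfold II
  rw [← intervalIntegral.integral_const_mul]
  simp

open Polynomial in
lemma II_derivative (p : ℝ[X]) : II (derivative p) = p.eval 1 - p.eval 0 := by
  unfold II
  exact intervalIntegral.integral_eq_sub_of_hasDerivAt (fun x _ => p.hasDerivAt x)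
    (p.derivative.continuous.intervalIntegrable _ _)

open Polynomial in
lemma II_orth (n k j : ℕ) (h : k ≠ j) : II (X ^ n * Qp n k * Qp n j) = 0 := by
  have e : derivative (X ^ (n + 1) * (1 - X) * derivative (Qp n k) * Qp n j - X ^ (n + 1) * (1 - X) * derivative (Qp n j) * Qp n k)
     = C ((j : ℝ) * (j + n + 1) - k * (k + n + 1)) * (X ^ n * Qp n k * Qp n j) := by
    rw [derivative_sub, derivative_mul, derivative_mul (g := Qp n k), Qp_ode, Qp_ode, C_sub, C_neg, C_neg]
    ring
  have h1 := II_derivative (X ^ (n + 1) * (1 - X) * derivative (Qp n k) * Qp n j - X ^ (n + 1) * (1 - X) * derivative (Qp n j) * Qp n k)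
  rw [e, II_C_mul] at h1
  simp at h1
  rcases h1 with h1 | h1
  · exfalso
    have : ((j : ℝ) - k) * (j + k + n + 1) = 0 := by linear_combination h1
    rcases mul_eq_zero.1 this with h2 | h2
    · apply h
      have : (j : ℝ) = k := by linarith
      exact_mod_cast this.symm
    · have : (0 : ℝ) < j + k + n + 1 := by positivity
      linarith
  · exact h1

lemma qc_lead (n k : ℕ) : qc n k k ≠ 0 := by
  unfold qc
  have : 0 < (n + k + k).choose k := Nat.choose_pos (by omega)
  simp
  omega

open Polynomial in
lemma mem_span_Qp (n d : ℕ) : ∀ p : ℝ[X], p.degree < d → p ∈ Submodule.span ℝ (Qp n '' Set.Iio d) := by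
  induction d with
  | zero =>
    intro p hp
    have : p = 0 := by
      rw [← degree_eq_bot]
      simpa using hp
    rw [this]; exact Submodule.zero_mem _
  | succ d ih =>
    intro p hp
    set a := p.coeff d / qc n d d
    have h1 : (p - a • Qp n d).degree < d := by
      rw [degree_lt_iff_coeff_zero]
      intro i hi
      rcases eq_or_lt_of_le hi with h | h
      · subst h
        have := qc_lead n d
        simp [Qp_coeff, a]
        field_simp
        simp
      · have h2 : p.coeff i = 0 := (degree_lt_iff_coeff_zero _ _).1 hp i (by omega)
        simp [Qp_coeff, qc_zero_of_lt h, h2]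
    have h2 := ih _ h1
    have h3 : Submodule.span ℝ (Qp n '' Set.Iio d) ≤ Submodule.span ℝ (Qp n '' Set.Iio (d + 1)) :=
      Submodule.span_mono (Set.image_mono (Set.Iio_subset_Iio (by omega)))
    have h4 : a • Qp n d ∈ Submodule.span ℝ (Qp n '' Set.Iio (d + 1)) :=
      Submodule.smul_mem _ _ (Submodule.subset_span ⟨d, by simp, rfl⟩)
    have := Submodule.add_mem _ (h3 h2) h4
    simpa using this

open Polynomial in
lemma II_lower (n k : ℕ) (p : ℝ[X]) (hp : p.degree < k) : II (X ^ n * Qp n k * p) = 0 := by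
  have := mem_span_Qp n k p hp
  clear hp
  induction this using Submodule.span_induction with
  | mem x hx =>
    obtain ⟨j, hj, rfl⟩ := hx
    have hj : j < k := hj
    exact II_orth n k j (by omega)
  | zero => simp [II]
  | add x y _ _ hx hy => rw [mul_add, II_add, hx, hy, add_zero]
  | smul a x _ hx =>
    have : X ^ n * Qp n k * a • x = C a * (X ^ n * Qp n k * x) := by rw [smul_eq_C_mul]; ring
    rw [this, II_C_mul, hx, mul_zero]

open Polynomial in
lemma II_norm (n k : ℕ) : II (X ^ n * Qp n k * Qp n k) = 1 / (2 * k + n + 1) := by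
  have hd : (X * derivative (Qp n k) - C (k : ℝ) * Qp n k).degree < (k : WithBot ℕ) := by
    rw [degree_lt_iff_coeff_zero]
    intro i hi
    have h1 : (X * derivative (Qp n k)).coeff i = i * qc n k i := by
      rcases i with _ | i
      · simp
      · rw [coeff_X_mul, coeff_derivative, Qp_coeff]; push_cast; ring
    rw [coeff_sub, h1, coeff_C_mul, Qp_coeff]
    rcases eq_or_lt_of_le hi with h | h
    · subst h; simp
    · simp [qc_zero_of_lt h]
  have h0 := II_lower n k _ hd
  have h1 := II_derivative (X ^ (n + 1) * Qp n k * Qp n k)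
  have e : derivative (X ^ (n + 1) * Qp n k * Qp n k) = C (2 * k + n + 1 : ℝ) * (X ^ n * Qp n k * Qp n k) + C 2 * (X ^ n * Qp n k * (X * derivative (Qp n k) - C (k : ℝ) * Qp n k)) := by
    rw [derivative_mul, derivative_mul, derivative_X_pow]
    simp only [Nat.add_sub_cancel, C_add, C_mul, C_1]
    have e2 : C ((n + 1 : ℕ) : ℝ) = C (n : ℝ) + 1 := by push_cast; rw [C_add, C_1]
    rw [e2]
    have e3 : (C (2 : ℝ)) = 2 := rfl
    rw [e3]
    ring
  rw [e, II_add, II_C_mul, II_C_mul, h0] at h1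
  simp [Qp_eval_one] at h1
  have : (2 * k + n + 1 : ℝ) ≠ 0 := by positivity
  field_simp
  linarith


lemma norm_mon_le (a b : ℕ) (w : ℂ) (hw : ‖w‖ ≤ 1) : ‖mon a b w‖ ≤ 1 := by
  unfold mon
  rw [norm_mul, norm_pow, norm_pow, RCLike.norm_conj]
  exact mul_le_one₀ (pow_le_one₀ (norm_nonneg _) hw) (by positivity) (pow_le_one₀ (norm_nonneg _) hw)

lemma norm_pho_le (m k : ℕ) (w : ℂ) (hw : ‖w‖ ≤ 1) : ‖pho m k w‖ ≤ (2 * (2 * k + m : ℝ)) ^ k := by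
  unfold pho
  calc _ ≤ ∑ i ∈ Finset.range (k + 1), ‖(qc m k i : ℂ) * mon (m + i) i w‖ := norm_sum_le _ _
    _ ≤ ∑ i ∈ Finset.range (k + 1), (k.choose i : ℝ) * (2 * k + m : ℝ) ^ k := by
      apply Finset.sum_le_sum
      intro i hi
      have hik : i ≤ k := by simpa [Nat.lt_succ_iff] using hi
      rw [norm_mul]
      have h1 := norm_mon_le (m + i) i w hw
      have h2 : ‖(qc m k i : ℂ)‖ ≤ (k.choose i : ℝ) * (2 * k + m : ℝ) ^ k := by
        rw [Complex.norm_real, Real.norm_eq_abs, qc, abs_mul, abs_mul, abs_pow]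
        simp only [abs_neg, abs_one, one_pow, one_mul, Nat.abs_cast]
        apply mul_le_mul_of_nonneg_left _ (by positivity)
        have h3 : (m + k + i).choose k ≤ (2 * k + m) ^ k :=
          (Nat.choose_le_choose k (by omega : m + k + i ≤ 2 * k + m)).trans (Nat.choose_le_pow _ _)
        exact_mod_cast h3
      calc _ ≤ ((k.choose i : ℝ) * (2 * k + m : ℝ) ^ k) * 1 :=
            mul_le_mul h2 h1 (norm_nonneg _) (by positivity)
        _ = _ := mul_one _
    _ = _ := by
      rw [← Finset.sum_mul, mul_pow]
      congr 1
      exact_mod_cast Nat.sum_range_choose k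

lemma norm_phi_le (x : ℤ × ℕ) (w : ℂ) (hw : ‖w‖ ≤ 1) :
    ‖phi x w‖ ≤ (2 * (2 * x.2 + x.1.natAbs : ℝ)) ^ x.2 := by
  unfold phi
  split_ifs
  · exact norm_pho_le _ _ _ hw
  · exact norm_pho_le _ _ _ (by rwa [RCLike.norm_conj])

lemma wt_nonneg (t : ℝ) (x : ℤ × ℕ) : 0 ≤ wt t x := by unfold wt; positivity

lemma bound_aux (t : ℝ) (ht : 0 < t) : ∃ C : ℝ, ∀ N k : ℕ, k ≤ N →
    (2 * (N : ℝ) * Real.exp (-2 * N * t)) ^ k ≤ C := by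
  obtain ⟨M, hM⟩ := exists_nat_ge (2 / t ^ 2)
  refine ⟨(2 * M + 1) ^ M, fun N k hk => ?_⟩
  have hone : (1 : ℝ) ≤ (2 * M + 1 : ℝ) := by
    have : (0 : ℝ) ≤ M := by positivity
    linarith
  rcases le_or_gt M N with h | h
  · have h1 : 2 * (N : ℝ) * Real.exp (-2 * N * t) ≤ 1 := by
      have h2 : (N : ℝ) * t + 1 ≤ Real.exp (N * t) := Real.add_one_le_exp _
      have h3 : Real.exp (-2 * N * t) * (Real.exp (N * t) * Real.exp (N * t)) = 1 := by
        rw [← Real.exp_add, ← Real.exp_add, ← Real.exp_zero]; congr 1; ring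
      have h4 : 2 / t ^ 2 ≤ N := hM.trans (by exact_mod_cast h)
      rw [div_le_iff₀ (by positivity)] at h4
      have h5 : 2 * (N : ℝ) ≤ Real.exp (N * t) * Real.exp (N * t) := by
        have hN : (0 : ℝ) ≤ N := by positivity
        calc 2 * (N : ℝ) ≤ (N * t ^ 2) * N := mul_le_mul_of_nonneg_right h4 hN
          _ = (N * t) * (N * t) := by ring
          _ ≤ _ := mul_le_mul (by linarith) (by linarith) (by positivity) (by positivity)
      calc _ ≤ (Real.exp (N * t) * Real.exp (N * t)) * Real.exp (-2 * N * t) :=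
            mul_le_mul_of_nonneg_right h5 (by positivity)
        _ = 1 := by rw [mul_comm]; exact h3
    calc _ ≤ (1 : ℝ) := pow_le_one₀ (by positivity) h1
      _ ≤ _ := one_le_pow₀ hone
  · have h1 : 2 * (N : ℝ) * Real.exp (-2 * N * t) ≤ 2 * M + 1 := by
      have h2 : Real.exp (-2 * N * t) ≤ 1 := by
        rw [Real.exp_le_one_iff]
        have : 0 ≤ (N : ℝ) * t := by positivity
        linarith
      have h3 : (N : ℝ) ≤ M := by exact_mod_cast h.le
      have h4 : 2 * (N : ℝ) * Real.exp (-2 * N * t) ≤ 2 * N * 1 := mul_le_mul_of_nonneg_left h2 (by positivity)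
      linarith
    calc _ ≤ (2 * M + 1 : ℝ) ^ k := pow_le_pow_left₀ (by positivity) h1 k
      _ ≤ _ := pow_le_pow_right₀ hone (by omega)

noncomputable def gb (t : ℝ) (x : ℤ × ℕ) : ℝ := Real.exp (-t) ^ x.1.natAbs * Real.exp (-(2 * t)) ^ x.2

lemma summable_gb (t : ℝ) (ht : 0 < t) : Summable (gb t) := by
  have h1 : Summable (fun n : ℤ => Real.exp (-t) ^ n.natAbs) := by
    have : Summable (fun n : ℕ => Real.exp (-t) ^ n) :=
      summable_geometric_of_lt_one (by positivity) (by rw [Real.exp_lt_one_iff]; linarith)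
    apply Summable.of_nat_of_neg <;> simpa using this
  have h2 : Summable (fun n : ℕ => Real.exp (-(2 * t)) ^ n) :=
    summable_geometric_of_lt_one (by positivity) (by rw [Real.exp_lt_one_iff]; linarith)
  exact h1.mul_of_nonneg h2 (fun n => by positivity) (fun n => by positivity)

lemma term_bound (t : ℝ) (ht : 0 < t) : ∃ C : ℝ, 0 ≤ C ∧ ∀ (x : ℤ × ℕ) (w : ℂ), ‖w‖ ≤ 1 →
    ‖(wt t x : ℂ) * phi x w‖ ≤ C * gb t x := by
  obtain ⟨C, hC⟩ := bound_aux t ht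
  have hC0 : 0 ≤ C := le_trans (by simp) (hC 0 0 le_rfl)
  refine ⟨(1 / t + 1) * C, by positivity, fun x w hw => ?_⟩
  obtain ⟨n, k⟩ := x
  have h1 := norm_phi_le (n, k) w hw
  simp only at h1
  rw [norm_mul, Complex.norm_real, Real.norm_of_nonneg (wt_nonneg _ _)]
  set m := n.natAbs with hm
  have h2 := hC (2 * k + m) k (by omega)
  push_cast at h2
  set N : ℝ := 2 * k + m with hN
  have hN0 : 0 ≤ N := by positivity
  have h3 : wt t (n, k) ≤ (N + 1) * (Real.exp (-2 * N * t) * Real.exp (-2 * N * t) ^ k) := by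
    unfold wt lam
    simp only [← hm, ← hN]
    apply mul_le_mul_of_nonneg_left _ (by positivity)
    rw [← Real.exp_nat_mul, ← Real.exp_add, Real.exp_le_exp]
    have : 0 ≤ 2 * (k : ℝ) * m * t := by positivity
    rw [hN]
    nlinarith
  have h4 : (N + 1) * Real.exp (-N * t) ≤ 1 / t + 1 := by
    have a1 : N * t + 1 ≤ Real.exp (N * t) := Real.add_one_le_exp _
    have a2 : Real.exp (-N * t) * Real.exp (N * t) = 1 := by
      rw [← Real.exp_add, ← Real.exp_zero]; congr 1; ring
    have a3 : N + 1 ≤ (1 / t + 1) * Real.exp (N * t) := by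
      have : (1 / t + 1) * (N * t + 1) = N + 1 + (1 / t + N * t) := by field_simp; ring
      have b : 0 ≤ 1 / t + N * t := by positivity
      calc N + 1 ≤ (1 / t + 1) * (N * t + 1) := by linarith
        _ ≤ _ := mul_le_mul_of_nonneg_left a1 (by positivity)
    calc _ ≤ (1 / t + 1) * Real.exp (N * t) * Real.exp (-N * t) := mul_le_mul_of_nonneg_right a3 (by positivity)
      _ = _ := by rw [mul_assoc, mul_comm (Real.exp (N * t)), a2, mul_one]
  have h5 : gb t (n, k) = Real.exp (-N * t) := by
    unfold gb
    rw [← Real.exp_nat_mul, ← Real.exp_nat_mul, ← Real.exp_add]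
    congr 1
    simp only [← hm]
    rw [hN]; ring
  rw [h5]
  calc _ ≤ ((N + 1) * (Real.exp (-2 * N * t) * Real.exp (-2 * N * t) ^ k)) * (2 * N) ^ k :=
        mul_le_mul h3 h1 (norm_nonneg _) (by positivity)
    _ = ((N + 1) * Real.exp (-N * t)) * (2 * N * Real.exp (-2 * N * t)) ^ k * Real.exp (-N * t) := by
        have : Real.exp (-2 * N * t) = Real.exp (-N * t) * Real.exp (-N * t) := by
          rw [← Real.exp_add]; congr 1; ring
        rw [mul_pow]
        nth_rewrite 1 [this]
        ring
    _ ≤ _ := by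
        apply mul_le_mul_of_nonneg_right _ (by positivity)
        exact mul_le_mul h4 h2 (by positivity) (by positivity)

noncomputable def Phi (t : ℝ) (w : ℂ) : ℂ := ∑' x : ℤ × ℕ, (wt t x : ℂ) * phi x w

lemma summable_term (t : ℝ) (ht : 0 < t) (w : ℂ) (hw : ‖w‖ ≤ 1) :
    Summable (fun x : ℤ × ℕ => (wt t x : ℂ) * phi x w) := by
  obtain ⟨C, _, hC⟩ := term_bound t ht
  exact Summable.of_norm_bounded ((summable_gb t ht).mul_left C) (fun x => hC x w hw)

lemma norm_Wp (r z : ℝ) : ‖Wp r z‖ ≤ 1 := by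
  unfold Wp
  rw [norm_mul, Complex.norm_exp_ofReal_mul_I, mul_one, Complex.norm_real]
  exact Real.abs_cos_le_one r

lemma heatP_eq (t : ℝ) (ht : 0 < t) (r z : ℝ) : heatP t r z = (Phi t (Wp r z)).re := by
  unfold heatP Phi
  rw [(summable_term t ht _ (norm_Wp r z)).tsum_prod]
  simp only [heatTerm_eq]

lemma continuousOn_Phi (t : ℝ) (ht : 0 < t) : ContinuousOn (Phi t) (Metric.closedBall 0 1) := by
  obtain ⟨C, _, hC⟩ := term_bound t ht
  refine continuousOn_tsum (u := fun x => C * gb t x) (fun x => ?_) ((summable_gb t ht).mul_left C) ?_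
  · exact (continuous_const.mul (continuous_phi x)).continuousOn
  · intro x w hw
    exact hC x w (by simpa using hw)

lemma conj_pho (m k : ℕ) (w : ℂ) : starRingEnd ℂ (pho m k w) = pho m k (starRingEnd ℂ w) := by
  simp [pho, mon]

lemma conj_phi (n : ℤ) (k : ℕ) (w : ℂ) : starRingEnd ℂ (phi (n, k) w) = phi (-n, k) w := by
  unfold phi
  simp only [Int.natAbs_neg]
  rcases lt_trichotomy n 0 with h | h | h
  · rw [if_neg (by omega), if_pos (by omega), conj_pho, Complex.conj_conj]
  · subst h
    simp only [neg_zero, le_refl, if_true, Int.natAbs_zero]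
    rw [conj_pho]
    simp [pho, mon_conj]
  · rw [if_pos (by omega), if_neg (by omega), conj_pho]

lemma Phi_real (t : ℝ) (w : ℂ) : starRingEnd ℂ (Phi t w) = Phi t w := by
  unfold Phi
  rw [Complex.conj_tsum]
  rw [← (Equiv.prodCongr (Equiv.neg ℤ) (Equiv.refl ℕ)).tsum_eq]
  congr 1
  funext x
  obtain ⟨n, k⟩ := x
  have e : wt t (-n, k) = wt t (n, k) := by simp only [wt, Int.natAbs_neg]
  change starRingEnd ℂ ((wt t (-n, k) : ℂ) * phi (-n, k) w) = (wt t (n, k) : ℂ) * phi (n, k) w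
  rw [map_mul, Complex.conj_ofReal, conj_phi, neg_neg, e]

lemma heatP_eq' (t : ℝ) (ht : 0 < t) (r z : ℝ) : (heatP t r z : ℂ) = Phi t (Wp r z) := by
  rw [heatP_eq t ht]
  exact Complex.conj_eq_iff_re.1 (Phi_real t _)

lemma continuous_Wp : Continuous (fun p : ℝ × ℝ => Wp p.1 p.2) := by
  unfold Wp; fun_prop

lemma continuous_heatP (t : ℝ) (ht : 0 < t) : Continuous (fun p : ℝ × ℝ => heatP t p.1 p.2) := by
  simp only [heatP_eq t ht]
  apply Complex.continuous_re.comp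
  exact (continuousOn_Phi t ht).comp_continuous continuous_Wp (fun p => by simpa using norm_Wp p.1 p.2)

/-! Integrals -/

def Bx : Set (ℝ × ℝ) := Set.Icc 0 (Real.pi / 2) ×ˢ Set.Icc 0 (2 * Real.pi)

lemma isCompact_Bx : IsCompact Bx := isCompact_Icc.prod isCompact_Icc

noncomputable def sg (p : ℝ × ℝ) : ℝ := Real.sin (2 * p.1) / (2 * Real.pi)

lemma continuous_sg : Continuous sg := by unfold sg; fun_prop

lemma sg_nonneg {p : ℝ × ℝ} (hp : p ∈ Bx) : 0 ≤ sg p := by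
  unfold sg
  have h := hp.1
  have := Real.sin_nonneg_of_nonneg_of_le_pi (x := 2 * p.1) (by linarith [h.1]) (by linarith [h.2])
  positivity

lemma integrableOn_Bx {E : Type*} [NormedAddCommGroup E] {F : ℝ × ℝ → E} (hF : ContinuousOn F Bx) :
    MeasureTheory.IntegrableOn F Bx := hF.integrableOn_compact isCompact_Bx

lemma radial (n k j : ℕ) : ∫ r in Set.Icc 0 (Real.pi / 2),
    (Real.cos r ^ n * (Qp n k).eval (Real.cos r ^ 2)) * (Real.cos r ^ n * (Qp n j).eval (Real.cos r ^ 2)) *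
      Real.sin (2 * r) = if k = j then 1 / (2 * (k : ℝ) + n + 1) else 0 := by
  have h1 : II (Polynomial.X ^ n * Qp n k * Qp n j) = if k = j then 1 / (2 * (k : ℝ) + n + 1) else 0 := by
    split_ifs with h
    · subst h; exact II_norm n k
    · exact II_orth n k j h
  rw [← h1, MeasureTheory.integral_Icc_eq_integral_Ioc, ← intervalIntegral.integral_of_le (by positivity)]
  have h2 := intervalIntegral.integral_comp_mul_deriv (a := 0) (b := Real.pi / 2)
    (f := fun r => Real.cos r ^ 2) (f' := fun r => -Real.sin (2 * r))
    (g := fun s => (Polynomial.X ^ n * Qp n k * Qp n j).eval s) (fun r _ => by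
      refine ((Real.hasDerivAt_cos r).fun_pow 2).congr_deriv ?_
      rw [Real.sin_two_mul]; push_cast; ring) (by fun_prop) (Polynomial.continuous _)
  simp only [Real.cos_zero, Real.cos_pi_div_two] at h2
  norm_num at h2
  rw [intervalIntegral.integral_symm 0 1] at h2
  unfold II
  have h3 := neg_inj.1 h2
  simp only [Polynomial.eval_mul, Polynomial.eval_pow, Polynomial.eval_X]
  rw [← h3]
  congr 1
  funext r
  ring

lemma angular (n : ℤ) : ∫ z in Set.Icc 0 (2 * Real.pi), Complex.exp ((n : ℂ) * (z : ℂ) * Complex.I) =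
    if n = 0 then 2 * (Real.pi : ℂ) else 0 := by
  rw [MeasureTheory.integral_Icc_eq_integral_Ioc, ← intervalIntegral.integral_of_le (by positivity)]
  split_ifs with h
  · subst h; simp
  · have hc : (n : ℂ) * Complex.I ≠ 0 := by simp [h]
    have := integral_exp_mul_complex (a := 0) (b := 2 * Real.pi) hc
    have e : ∀ z : ℝ, (n : ℂ) * (z : ℂ) * Complex.I = (n : ℂ) * Complex.I * z := fun z => by ring
    simp only [e]
    rw [this]
    have e2 : (n : ℂ) * Complex.I * ((2 * Real.pi : ℝ) : ℂ) = n * (2 * Real.pi * Complex.I) := by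
      push_cast; ring
    rw [e2, Complex.exp_int_mul_two_pi_mul_I]
    simp

lemma orth_phi (x y : ℤ × ℕ) : ∫ p in Bx, phi x (Wp p.1 p.2) * phi y (Wp p.1 p.2) * (sg p : ℂ) =
    if x = (-y.1, y.2) then 1 / (2 * (y.2 : ℂ) + y.1.natAbs + 1) else 0 := by
  have e : ∀ p : ℝ × ℝ, phi x (Wp p.1 p.2) * phi y (Wp p.1 p.2) * (sg p : ℂ) =
    ((((Real.cos p.1 ^ x.1.natAbs * (Qp x.1.natAbs x.2).eval (Real.cos p.1 ^ 2)) *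
      (Real.cos p.1 ^ y.1.natAbs * (Qp y.1.natAbs y.2).eval (Real.cos p.1 ^ 2)) * Real.sin (2 * p.1) : ℝ) : ℂ)) *
      ((1 / (2 * Real.pi) : ℂ) * Complex.exp (((x.1 + y.1 : ℤ) : ℂ) * (p.2 : ℂ) * Complex.I)) := by
    intro p
    rw [phi_W, phi_W, sg]
    have : Complex.exp (((x.1 + y.1 : ℤ) : ℂ) * (p.2 : ℂ) * Complex.I) = 
      Complex.exp ((x.1 : ℂ) * (p.2 : ℂ) * Complex.I) * Complex.exp ((y.1 : ℂ) * (p.2 : ℂ) * Complex.I) := by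
      rw [← Complex.exp_add]; congr 1; push_cast; ring
    rw [this]
    push_cast
    ring
  simp only [e, Bx]
  rw [MeasureTheory.Measure.volume_eq_prod, MeasureTheory.setIntegral_prod_mul (L := ℂ)
    (fun r : ℝ => ((((Real.cos r ^ x.1.natAbs * (Qp x.1.natAbs x.2).eval (Real.cos r ^ 2)) *
      (Real.cos r ^ y.1.natAbs * (Qp y.1.natAbs y.2).eval (Real.cos r ^ 2)) * Real.sin (2 * r) : ℝ) : ℂ)))
    (fun z : ℝ => ((1 / (2 * Real.pi) : ℂ) * Complex.exp (((x.1 + y.1 : ℤ) : ℂ) * (z : ℂ) * Complex.I)))]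
  rw [MeasureTheory.integral_const_mul, angular]
  obtain ⟨n, k⟩ := x
  obtain ⟨m, j⟩ := y
  simp only [Prod.mk.injEq]
  by_cases h : n + m = 0
  · have hn : n = -m := by omega
    subst hn
    rw [if_pos h, integral_complex_ofReal]
    simp only [Int.natAbs_neg]
    rw [radial]
    have hpi : (Real.pi : ℂ) ≠ 0 := by exact_mod_cast Real.pi_ne_zero
    by_cases hk : k = j
    · subst hk
      rw [if_pos rfl, if_pos (by simp)]
      simp only [Complex.ofReal_div, Complex.ofReal_add, Complex.ofReal_mul, Complex.ofReal_one, Complex.ofReal_natCast, Complex.ofReal_ofNat]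
      field_simp
    · simp [hk]
  · rw [if_neg h, if_neg (by omega)]
    simp

lemma Phi_pair (t : ℝ) (ht : 0 < t) (y : ℤ × ℕ) :
    ∫ p in Bx, Phi t (Wp p.1 p.2) * phi y (Wp p.1 p.2) * (sg p : ℂ) = (Real.exp (-(lam y.1.natAbs y.2) * t) : ℂ) := by
  obtain ⟨C, hC0, hC⟩ := term_bound t ht
  set F : ℤ × ℕ → ℝ × ℝ → ℂ := fun x p => ((wt t x : ℂ) * phi x (Wp p.1 p.2)) * (phi y (Wp p.1 p.2) * (sg p : ℂ)) with hF
  have hWc : ∀ x, Continuous (fun p : ℝ × ℝ => phi x (Wp p.1 p.2)) := fun x => (continuous_phi x).comp continuous_Wp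
  have hsc : Continuous (fun p : ℝ × ℝ => (sg p : ℂ)) := Complex.continuous_ofReal.comp continuous_sg
  have hcont : ∀ x, Continuous (F x) := fun x => (continuous_const.mul (hWc x)).mul ((hWc y).mul hsc)
  have hgc : Continuous (fun p : ℝ × ℝ => phi y (Wp p.1 p.2) * (sg p : ℂ)) := (hWc y).mul hsc
  have h1 : ∀ x, MeasureTheory.Integrable (F x) (MeasureTheory.volume.restrict Bx) :=
    fun x => integrableOn_Bx (hcont x).continuousOn
  have h2 : Summable fun x => ∫ p in Bx, ‖F x p‖ := by
    refine Summable.of_nonneg_of_le (fun x => MeasureTheory.integral_nonneg (fun p => norm_nonneg _)) (fun x => ?_)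
      ((summable_gb t ht).mul_left (C * ∫ p in Bx, ‖phi y (Wp p.1 p.2) * (sg p : ℂ)‖))
    calc _ ≤ ∫ p in Bx, C * gb t x * ‖phi y (Wp p.1 p.2) * (sg p : ℂ)‖ := by
          refine MeasureTheory.integral_mono (h1 x).norm ?_ ?_
          · exact integrableOn_Bx (continuous_const.mul hgc.norm).continuousOn
          · intro p
            simp only [hF]
            rw [norm_mul ((wt t x : ℂ) * _)]
            exact mul_le_mul_of_nonneg_right (hC x _ (norm_Wp _ _)) (norm_nonneg _)
      _ = _ := by rw [MeasureTheory.integral_const_mul]; ring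
  have h3 := MeasureTheory.hasSum_integral_of_summable_integral_norm h1 h2
  have h4 : ∀ p : ℝ × ℝ, Phi t (Wp p.1 p.2) * phi y (Wp p.1 p.2) * (sg p : ℂ) = ∑' x, F x p := by
    intro p
    simp only [hF]
    rw [tsum_mul_right, mul_assoc]; rfl
  simp only [h4]
  rw [← h3.tsum_eq]
  have h5 : ∀ x, ∫ p in Bx, F x p = (wt t x : ℂ) * (if x = (-y.1, y.2) then 1 / (2 * (y.2 : ℂ) + y.1.natAbs + 1) else 0) := by
    intro x
    rw [← orth_phi, ← MeasureTheory.integral_const_mul]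
    congr 1
    funext p
    simp only [hF]; ring
  simp only [h5]
  rw [tsum_eq_single (-y.1, y.2) (fun x hx => by rw [if_neg hx, mul_zero]), if_pos rfl]
  simp only [wt, Int.natAbs_neg]
  have hne : (2 * (y.2 : ℂ) + y.1.natAbs + 1) ≠ 0 := by
    have : (2 * (y.2 : ℝ) + y.1.natAbs + 1) ≠ 0 := by positivity
    exact_mod_cast this
  push_cast
  field_simp

lemma heat_pair (t : ℝ) (ht : 0 < t) (S : Finset (ℤ × ℕ)) (c : ℤ × ℕ → ℂ) :
    ∫ p in Bx, heatP t p.1 p.2 * (∑ x ∈ S, c x * phi x (Wp p.1 p.2)).re * sg p =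
      (∑ x ∈ S, (Real.exp (-(lam x.1.natAbs x.2) * t) : ℂ) * c x).re := by
  have hWc : ∀ x, Continuous (fun p : ℝ × ℝ => phi x (Wp p.1 p.2)) := fun x => (continuous_phi x).comp continuous_Wp
  have hsc : Continuous (fun p : ℝ × ℝ => (sg p : ℂ)) := Complex.continuous_ofReal.comp continuous_sg
  have hP : Continuous (fun p : ℝ × ℝ => Phi t (Wp p.1 p.2)) := by
    simp only [← heatP_eq' t ht]
    exact Complex.continuous_ofReal.comp (continuous_heatP t ht)
  have e : ∀ p : ℝ × ℝ, heatP t p.1 p.2 * (∑ x ∈ S, c x * phi x (Wp p.1 p.2)).re * sg p =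
      (∑ x ∈ S, c x * (Phi t (Wp p.1 p.2) * phi x (Wp p.1 p.2) * (sg p : ℂ))).re := by
    intro p
    have : ∑ x ∈ S, c x * (Phi t (Wp p.1 p.2) * phi x (Wp p.1 p.2) * (sg p : ℂ)) =
      ((heatP t p.1 p.2 * sg p : ℝ) : ℂ) * ∑ x ∈ S, c x * phi x (Wp p.1 p.2) := by
      rw [Finset.mul_sum]
      apply Finset.sum_congr rfl
      intro x _
      rw [← heatP_eq' t ht]; push_cast; ring
    rw [this, Complex.re_ofReal_mul]; ring
  simp only [e]
  have hInt : ∀ x, MeasureTheory.IntegrableOn (fun p : ℝ × ℝ => c x * (Phi t (Wp p.1 p.2) * phi x (Wp p.1 p.2) * (sg p : ℂ))) Bx :=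
    fun x => integrableOn_Bx (continuous_const.mul ((hP.mul (hWc x)).mul hsc)).continuousOn
  have h1 := Complex.reCLM.integral_comp_comm (MeasureTheory.integrable_finsetSum S (fun x _ => hInt x))
  simp only [Complex.reCLM_apply] at h1
  rw [h1, MeasureTheory.integral_finsetSum S (fun x _ => hInt x)]
  congr 1
  apply Finset.sum_congr rfl
  intro x _
  rw [MeasureTheory.integral_const_mul, Phi_pair t ht, mul_comm]

lemma phi_one (x : ℤ × ℕ) : phi x 1 = 1 := by
  have := phi_W x 0 0
  simpa [Wp, Qp_eval_one] using this

lemma heat_pair_nonneg (t : ℝ) (ht : 0 < t) (S : Finset (ℤ × ℕ)) (c : ℤ × ℕ → ℂ)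
    (h : ∀ w : ℂ, ‖w‖ ≤ 1 → 0 ≤ (∑ x ∈ S, c x * phi x w).re) :
    0 ≤ ∫ p in Bx, heatP t p.1 p.2 * (∑ x ∈ S, c x * phi x (Wp p.1 p.2)).re * sg p := by
  rw [heat_pair t ht]
  have := semigroup_pos S c t ht.le h 1 (by simp)
  simpa [phi_one] using this

lemma heat_pair_tendsto (S : Finset (ℤ × ℕ)) (c : ℤ × ℕ → ℂ) :
    Filter.Tendsto (fun t => ∫ p in Bx, heatP t p.1 p.2 * (∑ x ∈ S, c x * phi x (Wp p.1 p.2)).re * sg p)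
      (nhdsWithin 0 (Set.Ioi 0)) (nhds (∑ x ∈ S, c x * phi x 1).re) := by
  have h : Filter.Tendsto (fun t : ℝ => (∑ x ∈ S, (Real.exp (-(lam x.1.natAbs x.2) * t) : ℂ) * c x).re)
      (nhdsWithin 0 (Set.Ioi 0)) (nhds (∑ x ∈ S, c x * phi x 1).re) := by
    have hc : Continuous (fun t : ℝ => (∑ x ∈ S, (Real.exp (-(lam x.1.natAbs x.2) * t) : ℂ) * c x).re) := by
      apply Complex.continuous_re.comp
      fun_prop
    have := (hc.tendsto 0).mono_left (nhdsWithin_le_nhds (s := Set.Ioi 0))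
    simpa [phi_one] using this
  refine h.congr' ?_
  filter_upwards [self_mem_nhdsWithin] with t ht
  rw [heat_pair t ht]


/-! Density -/

noncomputable def VV : Submodule ℂ (ℂ → ℂ) := Submodule.span ℂ (Set.range phi)

lemma phi_mem (x : ℤ × ℕ) : phi x ∈ VV := Submodule.subset_span ⟨x, rfl⟩

lemma mon_mem_aux (m k : ℕ) : mon (m + k) k ∈ VV ∧ mon k (m + k) ∈ VV := by
  induction k using Nat.strong_induction_on with
  | _ k ih =>
    have hq : ((qc m k k : ℝ) : ℂ) ≠ 0 := by exact_mod_cast qc_lead m k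
    have e : ∀ w, mon (m + k) k w = ((qc m k k : ℝ) : ℂ)⁻¹ *
        (pho m k w - ∑ i ∈ Finset.range k, (qc m k i : ℂ) * mon (m + i) i w) := by
      intro w
      unfold pho
      rw [Finset.sum_range_succ]
      field_simp
      ring
    have h1 : (pho m k) ∈ VV := by
      have := phi_mem ((m : ℤ), k)
      have e : phi ((m : ℤ), k) = pho m k := by funext w; simp [phi]
      rwa [e] at this
    have h2 : (fun w => pho m k (starRingEnd ℂ w)) ∈ VV := by
      have := phi_mem (-(m : ℤ), k)
      have e : phi (-(m : ℤ), k) = fun w => pho m k (starRingEnd ℂ w) := by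
        funext w
        have := conj_phi (m : ℤ) k w
        rw [← this, ← conj_pho]
        simp [phi]
      rwa [e] at this
    constructor
    · have e1 : mon (m + k) k = ((qc m k k : ℝ) : ℂ)⁻¹ •
        (pho m k - ∑ i ∈ Finset.range k, (qc m k i : ℂ) • mon (m + i) i) := by
        funext w
        simp [e w]
      rw [e1]
      refine VV.smul_mem _ (VV.sub_mem h1 (VV.sum_mem fun i hi => VV.smul_mem _ (ih i (by simpa using hi)).1))
    · have e1 : mon k (m + k) = ((qc m k k : ℝ) : ℂ)⁻¹ •
        ((fun w => pho m k (starRingEnd ℂ w)) - ∑ i ∈ Finset.range k, (qc m k i : ℂ) • mon i (m + i)) := by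
        funext w
        have := e (starRingEnd ℂ w)
        simp only [mon_conj] at this
        simp [this]
      rw [e1]
      refine VV.smul_mem _ (VV.sub_mem h2 (VV.sum_mem fun i hi => VV.smul_mem _ (ih i (by simpa using hi)).2))

lemma mon_mem (a b : ℕ) : mon a b ∈ VV := by
  rcases le_total b a with h | h
  · obtain ⟨m, rfl⟩ := Nat.exists_eq_add_of_le h
    rw [add_comm]; exact (mon_mem_aux m b).1
  · obtain ⟨m, rfl⟩ := Nat.exists_eq_add_of_le h
    rw [add_comm]; exact (mon_mem_aux m a).2

lemma VV_eq : VV = Submodule.span ℂ (Set.range (fun ab : ℕ × ℕ => mon ab.1 ab.2)) := by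
  apply le_antisymm
  · unfold VV
    rw [Submodule.span_le]
    rintro _ ⟨x, rfl⟩
    set U := Submodule.span ℂ (Set.range (fun ab : ℕ × ℕ => mon ab.1 ab.2)) with hU
    have hm : ∀ a b, mon a b ∈ U := fun a b => Submodule.subset_span ⟨(a, b), rfl⟩
    change phi x ∈ U
    by_cases h : 0 ≤ x.1
    · have : phi x = ∑ i ∈ Finset.range (x.2 + 1), (qc x.1.natAbs x.2 i : ℂ) • mon (x.1.natAbs + i) i := by
        funext w; simp [phi, h, pho]
      rw [this]
      exact U.sum_mem fun i _ => U.smul_mem _ (hm _ _)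
    · have : phi x = ∑ i ∈ Finset.range (x.2 + 1), (qc x.1.natAbs x.2 i : ℂ) • mon i (x.1.natAbs + i) := by
        funext w; simp [phi, h, pho, mon_conj]
      rw [this]
      exact U.sum_mem fun i _ => U.smul_mem _ (hm _ _)
  · rw [Submodule.span_le]
    rintro _ ⟨x, rfl⟩
    exact mon_mem _ _

lemma VV_mul {u v : ℂ → ℂ} (hu : u ∈ VV) (hv : v ∈ VV) : u * v ∈ VV := by
  have : VV * VV ≤ VV := by
    conv_lhs => rw [VV_eq]
    rw [Submodule.span_mul_span, Submodule.span_le]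
    rintro _ ⟨_, ⟨x, rfl⟩, _, ⟨y, rfl⟩, rfl⟩
    have e : mon x.1 x.2 * mon y.1 y.2 = mon (x.1 + y.1) (x.2 + y.2) := by
      funext w; simp [mon, pow_add]; ring
    change mon x.1 x.2 * mon y.1 y.2 ∈ VV
    rw [e]; exact mon_mem _ _
  exact this (Submodule.mul_mem_mul hu hv)

lemma const_mem (c : ℂ) : (fun _ => c) ∈ VV := by
  have : (fun _ => c) = c • mon 0 0 := by funext w; simp [mon]
  rw [this]; exact VV.smul_mem _ (mon_mem 0 0)

lemma VV_repr {u : ℂ → ℂ} (hu : u ∈ VV) : ∃ (S : Finset (ℤ × ℕ)) (c : ℤ × ℕ → ℂ), ∀ w, u w = ∑ x ∈ S, c x * phi x w := by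
  obtain ⟨c, hc⟩ := (Finsupp.mem_span_range_iff_exists_finsupp).1 hu
  refine ⟨c.support, c, fun w => ?_⟩
  rw [← hc]
  simp [Finsupp.sum]

lemma approx (h : C(Metric.closedBall (0 : ℂ) 1, ℂ)) (ε : ℝ) (hε : 0 < ε) :
    ∃ u ∈ VV, ∀ w (hw : w ∈ Metric.closedBall (0 : ℂ) 1), ‖u w - h ⟨w, hw⟩‖ < ε := by
  have hcl : ∀ g ∈ (polynomialFunctions (Metric.closedBall (0 : ℂ) 1)).starClosure,
      ∃ u ∈ VV, ∀ w (hw : w ∈ Metric.closedBall (0 : ℂ) 1), u w = g ⟨w, hw⟩ := by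
    intro g hg
    rw [polynomialFunctions.starClosure_eq_adjoin_X] at hg
    induction hg using Algebra.adjoin_induction with
    | mem f hf =>
      rcases hf with hf | hf
      · refine ⟨mon 1 0, mon_mem _ _, fun w hw => ?_⟩
        rw [Set.mem_singleton_iff.1 hf]
        simp [mon]
      · refine ⟨mon 0 1, mon_mem _ _, fun w hw => ?_⟩
        have hf' : star f = _ := Set.mem_singleton_iff.1 hf
        rw [← star_star f, hf']
        simp [mon]
    | algebraMap r => exact ⟨fun _ => r, const_mem r, fun w hw => rfl⟩
    | add f g _ _ hf hg =>
      obtain ⟨u, hu, h1⟩ := hf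
      obtain ⟨v, hv, h2⟩ := hg
      exact ⟨u + v, VV.add_mem hu hv, fun w hw => by simp [h1 w hw, h2 w hw]⟩
    | mul f g _ _ hf hg =>
      obtain ⟨u, hu, h1⟩ := hf
      obtain ⟨v, hv, h2⟩ := hg
      exact ⟨u * v, VV_mul hu hv, fun w hw => by simp [h1 w hw, h2 w hw]⟩
  have : CompactSpace (Metric.closedBall (0 : ℂ) 1) := isCompact_iff_compactSpace.1 (isCompact_closedBall 0 1)
  have hm : h ∈ (polynomialFunctions (Metric.closedBall (0 : ℂ) 1)).starClosure.topologicalClosure := by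
    rw [polynomialFunctions.starClosure_topologicalClosure]; trivial
  rw [← SetLike.mem_coe, StarSubalgebra.topologicalClosure_coe, Metric.mem_closure_iff] at hm
  obtain ⟨g, hg, hd⟩ := hm ε hε
  obtain ⟨u, hu, hug⟩ := hcl g hg
  refine ⟨u, hu, fun w hw => ?_⟩
  rw [hug w hw, ← dist_eq_norm, dist_comm]
  exact (ContinuousMap.dist_apply_le_dist _).trans_lt hd

/-! Positivity -/

lemma heat_VV_nonneg (t : ℝ) (ht : 0 < t) {u : ℂ → ℂ} (hu : u ∈ VV) (h : ∀ w : ℂ, ‖w‖ ≤ 1 → 0 ≤ (u w).re) :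
    0 ≤ ∫ p in Bx, heatP t p.1 p.2 * (u (Wp p.1 p.2)).re * sg p := by
  obtain ⟨S, c, hS⟩ := VV_repr hu
  simp only [hS] at h ⊢
  exact heat_pair_nonneg t ht S c h

lemma heat_VV_tendsto {u : ℂ → ℂ} (hu : u ∈ VV) :
    Filter.Tendsto (fun t => ∫ p in Bx, heatP t p.1 p.2 * (u (Wp p.1 p.2)).re * sg p)
      (nhdsWithin 0 (Set.Ioi 0)) (nhds (u 1).re) := by
  obtain ⟨S, c, hS⟩ := VV_repr hu
  simp only [hS]
  exact heat_pair_tendsto S c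

lemma heat_mass (t : ℝ) (ht : 0 < t) : ∫ p in Bx, heatP t p.1 p.2 * sg p = 1 := by
  have := heat_pair t ht {(0, 0)} (fun _ => 1)
  have e : ∀ w, phi (0, 0) w = 1 := by intro w; simp [phi, pho, mon, qc]
  simpa [e, lam] using this

lemma VV_continuous {u : ℂ → ℂ} (hu : u ∈ VV) : Continuous u := by
  obtain ⟨S, c, hS⟩ := VV_repr hu
  have : u = fun w => ∑ x ∈ S, c x * phi x w := funext hS
  rw [this]
  exact continuous_finsetSum _ fun x _ => continuous_const.mul (continuous_phi x)

lemma Wp_mem (p : ℝ × ℝ) : Wp p.1 p.2 ∈ Metric.closedBall (0 : ℂ) 1 := by simpa using norm_Wp p.1 p.2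

/-- pairing with nonnegative continuous functions on the disc -/
lemma heat_cont_nonneg (t : ℝ) (ht : 0 < t) (h : C(Metric.closedBall (0 : ℂ) 1, ℝ)) (h0 : ∀ w, 0 ≤ h w) :
    0 ≤ ∫ p in Bx, heatP t p.1 p.2 * h ⟨Wp p.1 p.2, Wp_mem p⟩ * sg p := by
  have hg := continuous_heatP t ht
  have hs := continuous_sg
  have hhc : Continuous (fun p : ℝ × ℝ => h ⟨Wp p.1 p.2, Wp_mem p⟩) :=
    h.continuous.comp (continuous_Wp.subtype_mk _)
  set A := ∫ p in Bx, |heatP t p.1 p.2 * sg p| with hA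
  have hA0 : 0 ≤ A := MeasureTheory.integral_nonneg fun p => abs_nonneg _
  refine le_of_forall_pos_le_add fun δ hδ => ?_
  set ε := δ / (2 * (A + 1)) with hεd
  have hε : 0 < ε := by positivity
  obtain ⟨u, hu, hua⟩ := approx ⟨fun w => (h w : ℂ), Complex.continuous_ofReal.comp h.continuous⟩ ε hε
  have hre : ∀ w (hw : w ∈ Metric.closedBall (0 : ℂ) 1), |(u w).re - h ⟨w, hw⟩| < ε := by
    intro w hw
    have h1 := hua w hw
    have h2 := Complex.abs_re_le_norm (u w - (h ⟨w, hw⟩ : ℂ))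
    rw [Complex.sub_re, Complex.ofReal_re] at h2
    exact h2.trans_lt h1
  have huc : Continuous (fun p : ℝ × ℝ => (u (Wp p.1 p.2)).re) :=
    Complex.continuous_re.comp ((VV_continuous hu).comp continuous_Wp)
  have key := heat_VV_nonneg t ht (VV.add_mem hu (const_mem (ε : ℂ))) (fun w hw => by
    have := (abs_lt.1 (hre w (by simpa using hw))).1
    have := h0 ⟨w, by simpa using hw⟩
    simp only [Pi.add_apply, Complex.add_re, Complex.ofReal_re]; linarith)
  have hle : ∫ p in Bx, heatP t p.1 p.2 * ((u + fun _ => (ε : ℂ) : ℂ → ℂ) (Wp p.1 p.2)).re * sg p ≤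
      ∫ p in Bx, (heatP t p.1 p.2 * h ⟨Wp p.1 p.2, Wp_mem p⟩ * sg p + 2 * ε * |heatP t p.1 p.2 * sg p|) := by
    refine MeasureTheory.integral_mono ?_ ?_ ?_
    · refine integrableOn_Bx (Continuous.continuousOn ?_)
      simp only [Pi.add_apply, Complex.add_re, Complex.ofReal_re]
      exact (hg.mul (huc.add continuous_const)).mul hs
    · refine integrableOn_Bx (Continuous.continuousOn ?_)
      exact ((hg.mul hhc).mul hs).add (continuous_const.mul (hg.mul hs).abs)
    · intro p
      simp only [Pi.add_apply, Complex.add_re, Complex.ofReal_re]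
      have h1 := abs_lt.1 (hre _ (Wp_mem p))
      set a := heatP t p.1 p.2 * sg p
      have h2 : a * ((u (Wp p.1 p.2)).re + ε - h ⟨Wp p.1 p.2, Wp_mem p⟩) ≤ 2 * ε * |a| := by
        refine (le_abs_self _).trans ?_
        rw [abs_mul, mul_comm]
        refine mul_le_mul_of_nonneg_right ?_ (abs_nonneg _)
        rw [abs_le]; constructor <;> linarith
      simp only [a] at h2 ⊢
      linarith
  have h3 := key.trans hle
  have j1 : MeasureTheory.IntegrableOn (fun p : ℝ × ℝ => heatP t p.1 p.2 * h ⟨Wp p.1 p.2, Wp_mem p⟩ * sg p) Bx :=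
    integrableOn_Bx ((hg.mul hhc).mul hs).continuousOn
  have j2 : MeasureTheory.IntegrableOn (fun p : ℝ × ℝ => 2 * ε * |heatP t p.1 p.2 * sg p|) Bx :=
    integrableOn_Bx (continuous_const.mul (hg.mul hs).abs).continuousOn
  rw [MeasureTheory.integral_add j1 j2, MeasureTheory.integral_const_mul] at h3
  have h4 : 2 * ε * A ≤ δ := by
    rw [hεd]
    have : 2 * (δ / (2 * (A + 1))) * A = δ * (A / (A + 1)) := by field_simp
    rw [this]
    have : A / (A + 1) ≤ 1 := by rw [div_le_one (by positivity)]; linarith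
    nlinarith
  linarith

lemma heat_abs (t : ℝ) (ht : 0 < t) : ∀ᵐ p ∂(MeasureTheory.volume.restrict Bx), 0 ≤ heatP t p.1 p.2 * sg p := by
  have hg := continuous_heatP t ht
  have hs := continuous_sg
  let h : C(Metric.closedBall (0 : ℂ) 1, ℝ) := ⟨fun w => max (-(Phi t w).re) 0,
    ((Complex.continuous_re.comp (continuousOn_iff_continuous_domRestrict.1 (continuousOn_Phi t ht))).neg.max continuous_const)⟩
  have h1 := heat_cont_nonneg t ht h (fun w => le_max_right _ _)
  have e : ∀ p : ℝ × ℝ, heatP t p.1 p.2 * h ⟨Wp p.1 p.2, Wp_mem p⟩ * sg p =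
      -((max (-heatP t p.1 p.2) 0) ^ 2 * sg p) := by
    intro p
    have : h ⟨Wp p.1 p.2, Wp_mem p⟩ = max (-heatP t p.1 p.2) 0 := by rw [heatP_eq t ht]; rfl
    rw [this]
    rcases le_total (-heatP t p.1 p.2) 0 with h | h
    · rw [max_eq_right h]; ring
    · rw [max_eq_left h]; ring
  simp only [e] at h1
  rw [MeasureTheory.integral_neg] at h1
  have hnn : ∀ᵐ p ∂(MeasureTheory.volume.restrict Bx), 0 ≤ (max (-heatP t p.1 p.2) 0) ^ 2 * sg p := by
    refine (MeasureTheory.ae_restrict_iff' isCompact_Bx.measurableSet).2 (Filter.Eventually.of_forall fun p hp => ?_)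
    have := sg_nonneg hp
    positivity
  have h2 : ∫ p in Bx, (max (-heatP t p.1 p.2) 0) ^ 2 * sg p = 0 :=
    le_antisymm (by linarith) (MeasureTheory.integral_nonneg_of_ae hnn)
  have h3 := (MeasureTheory.integral_eq_zero_iff_of_nonneg_ae hnn
    (integrableOn_Bx (((hg.neg.max continuous_const).pow 2).mul hs).continuousOn)).1 h2
  filter_upwards [h3, (MeasureTheory.ae_restrict_iff' isCompact_Bx.measurableSet).2
    (Filter.Eventually.of_forall fun p hp => sg_nonneg hp)] with p hp hsp
  simp only [Pi.zero_apply, mul_eq_zero] at hp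
  rcases hp with hp | hp
  · have := pow_eq_zero_iff (two_ne_zero) |>.1 hp
    have : 0 ≤ heatP t p.1 p.2 := by
      have := le_max_left (-heatP t p.1 p.2) 0
      linarith
    positivity
  · rw [hp, mul_zero]


/-! Concentration -/

noncomputable def uD (w : ℂ) : ℂ := mon 1 1 w - mon 1 0 w - mon 0 1 w + 1

lemma uD_mem : uD ∈ VV :=
  VV.add_mem (VV.sub_mem (VV.sub_mem (mon_mem 1 1) (mon_mem 1 0)) (mon_mem 0 1)) (const_mem 1)

lemma uD_re (w : ℂ) : (uD w).re = Complex.normSq (w - 1) := by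
  simp [uD, mon, Complex.normSq_apply]; ring

noncomputable def DD (p : ℝ × ℝ) : ℝ := (uD (Wp p.1 p.2)).re

lemma DD_nonneg (p : ℝ × ℝ) : 0 ≤ DD p := by
  unfold DD; rw [uD_re]; exact Complex.normSq_nonneg _

lemma continuous_DD : Continuous DD :=
  Complex.continuous_re.comp ((VV_continuous uD_mem).comp continuous_Wp)

lemma DD_zero {p : ℝ × ℝ} (hp : p ∈ Bx) (h : DD p = 0) : p.1 = 0 ∧ (p.2 = 0 ∨ p.2 = 2 * Real.pi) := by
  unfold DD at h
  rw [uD_re, Complex.normSq_eq_zero, sub_eq_zero] at h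
  obtain ⟨⟨a1, a2⟩, b1, b2⟩ := hp
  have hpi := Real.pi_pos
  have h1 : Real.cos p.1 * Real.cos p.2 = 1 := by
    have := congrArg Complex.re h
    unfold Wp at this
    rwa [Complex.re_ofReal_mul, Complex.exp_ofReal_mul_I_re, Complex.one_re] at this
  have c0 : 0 ≤ Real.cos p.1 := Real.cos_nonneg_of_neg_pi_div_two_le_of_le (by linarith) a2
  have c1 := Real.cos_le_one p.1
  have c2 := Real.cos_le_one p.2
  have e1 : Real.cos p.1 = 1 := by nlinarith
  have e2 : Real.cos p.2 = 1 := by rwa [e1, one_mul] at h1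
  refine ⟨(Real.cos_eq_one_iff_of_lt_of_lt (by linarith) (by linarith)).1 e1, ?_⟩
  rcases b2.lt_or_eq with b | b
  · left; exact (Real.cos_eq_one_iff_of_lt_of_lt (by linarith) b).1 e2
  · right; exact b

lemma domination (F : ℝ × ℝ → ℝ) (hF : ContinuousOn F Bx) (h0 : ∀ p ∈ Bx, DD p = 0 → F p = 0) (ε : ℝ) (hε : 0 < ε) :
    ∃ C : ℝ, 0 ≤ C ∧ ∀ p ∈ Bx, |F p| ≤ ε + C * DD p := by
  have hFa : ContinuousOn (fun p => |F p|) Bx := hF.abs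
  have hK : IsCompact (Bx ∩ (fun p => |F p|) ⁻¹' Set.Ici ε) :=
    isCompact_Bx.of_isClosed_subset (hFa.preimage_isClosed_of_isClosed isCompact_Bx.isClosed isClosed_Ici)
      Set.inter_subset_left
  rcases (Bx ∩ (fun p => |F p|) ⁻¹' Set.Ici ε).eq_empty_or_nonempty with he | hne
  · refine ⟨0, le_rfl, fun p hp => ?_⟩
    by_contra hc
    have : p ∈ Bx ∩ (fun p => |F p|) ⁻¹' Set.Ici ε := ⟨hp, by
      simp only [Set.mem_preimage, Set.mem_Ici]; linarith⟩
    rw [he] at this; exact this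
  · obtain ⟨q, hq, hqm⟩ := hK.exists_isMinOn hne continuous_DD.continuousOn
    obtain ⟨s, hs, hsm⟩ := isCompact_Bx.exists_isMaxOn ⟨q, hq.1⟩ hFa
    have hd : 0 < DD q := by
      refine lt_of_le_of_ne (DD_nonneg q) (fun h => ?_)
      have := h0 q hq.1 h.symm
      have h2 : ε ≤ |F q| := hq.2
      rw [this, abs_zero] at h2; linarith
    refine ⟨|F s| / DD q, by positivity, fun p hp => ?_⟩
    by_cases hc : ε ≤ |F p|
    · have h1 : DD q ≤ DD p := hqm ⟨hp, hc⟩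
      have h2 : |F p| ≤ |F s| := hsm hp
      have h3 : |F s| ≤ |F s| / DD q * DD p := by
        rw [div_mul_eq_mul_div, le_div_iff₀ hd]
        exact mul_le_mul_of_nonneg_left h1 (abs_nonneg _)
      linarith
    · have := DD_nonneg p
      have : 0 ≤ |F s| / DD q * DD p := by positivity
      linarith

lemma heat_est (t : ℝ) (ht : 0 < t) (F : ℝ × ℝ → ℝ) (hF : ContinuousOn F Bx) (a ε C : ℝ)
    (h : ∀ p ∈ Bx, |F p - a| ≤ ε + C * DD p) :
    |(∫ p in Bx, heatP t p.1 p.2 * F p * sg p) - a| ≤ ε + C * ∫ p in Bx, heatP t p.1 p.2 * DD p * sg p := by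
  have hg := continuous_heatP t ht
  have hs := continuous_sg
  have hd := continuous_DD
  have hm := heat_mass t ht
  have i1 : MeasureTheory.IntegrableOn (fun p : ℝ × ℝ => heatP t p.1 p.2 * F p * sg p) Bx :=
    integrableOn_Bx ((hg.continuousOn.mul hF).mul hs.continuousOn)
  have i2 : MeasureTheory.IntegrableOn (fun p : ℝ × ℝ => heatP t p.1 p.2 * sg p) Bx :=
    integrableOn_Bx (hg.mul hs).continuousOn
  have i3 : MeasureTheory.IntegrableOn (fun p : ℝ × ℝ => heatP t p.1 p.2 * DD p * sg p) Bx :=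
    integrableOn_Bx ((hg.mul hd).mul hs).continuousOn
  have e1 : (∫ p in Bx, heatP t p.1 p.2 * F p * sg p) - a =
      ∫ p in Bx, (heatP t p.1 p.2 * F p * sg p - a * (heatP t p.1 p.2 * sg p)) := by
    rw [MeasureTheory.integral_sub i1 (i2.const_mul a), MeasureTheory.integral_const_mul, hm, mul_one]
  have e2 : ε + C * ∫ p in Bx, heatP t p.1 p.2 * DD p * sg p =
      ∫ p in Bx, (ε * (heatP t p.1 p.2 * sg p) + C * (heatP t p.1 p.2 * DD p * sg p)) := by
    rw [MeasureTheory.integral_add (i2.const_mul ε) (i3.const_mul C), MeasureTheory.integral_const_mul,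
      MeasureTheory.integral_const_mul, hm, mul_one]
  rw [e1, e2, ← Real.norm_eq_abs]
  refine MeasureTheory.norm_integral_le_of_norm_le ((i2.const_mul ε).add (i3.const_mul C)) ?_
  filter_upwards [heat_abs t ht, MeasureTheory.ae_restrict_mem isCompact_Bx.measurableSet] with p hp hpB
  have h1 := h p hpB
  have e3 : heatP t p.1 p.2 * F p * sg p - a * (heatP t p.1 p.2 * sg p) =
      (heatP t p.1 p.2 * sg p) * (F p - a) := by ring
  rw [e3, Real.norm_eq_abs, abs_mul, abs_of_nonneg hp]
  have := mul_le_mul_of_nonneg_left h1 hp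
  linarith

lemma heat_tendsto (F : ℝ × ℝ → ℝ) (hF : ContinuousOn F Bx) (a : ℝ) (h0 : ∀ p ∈ Bx, DD p = 0 → F p = a) :
    Filter.Tendsto (fun t => ∫ p in Bx, heatP t p.1 p.2 * F p * sg p) (nhdsWithin 0 (Set.Ioi 0)) (nhds a) := by
  rw [Metric.tendsto_nhds]
  intro ε hε
  obtain ⟨C, hC, hdom⟩ := domination (fun p => F p - a) (hF.sub continuousOn_const)
    (fun p hp h => by rw [h0 p hp h, sub_self]) (ε / 2) (by positivity)
  have hT := (heat_VV_tendsto uD_mem).const_mul C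
  have hz : C * (uD 1).re = 0 := by rw [uD_re]; simp
  rw [hz] at hT
  have hev := hT.eventually (gt_mem_nhds (show (0 : ℝ) < ε / 2 by positivity))
  filter_upwards [hev, self_mem_nhdsWithin] with t h1 ht
  rw [Real.dist_eq]
  have h2 := heat_est t ht F hF a (ε / 2) C hdom
  have h3 : C * ∫ p in Bx, heatP t p.1 p.2 * DD p * sg p < ε / 2 := h1
  linarith

lemma iter_eq (t : ℝ) (ht : 0 < t) (F : ℝ × ℝ → ℝ) (hF : ContinuousOn F Bx) :
    (1 / (2 * Real.pi)) * ∫ r in (0 : ℝ)..(Real.pi / 2), ∫ z in (0 : ℝ)..(2 * Real.pi),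
          heatP t r z * F (r, z) * Real.sin (2 * r) = ∫ p in Bx, heatP t p.1 p.2 * F p * sg p := by
  have hg := continuous_heatP t ht
  have i1 : MeasureTheory.IntegrableOn (fun p : ℝ × ℝ => heatP t p.1 p.2 * F p * Real.sin (2 * p.1))
      (Set.Icc 0 (Real.pi / 2) ×ˢ Set.Icc 0 (2 * Real.pi)) (MeasureTheory.volume.prod MeasureTheory.volume) :=
    integrableOn_Bx ((hg.continuousOn.mul hF).mul (Continuous.continuousOn (by fun_prop)))
  have h1 := MeasureTheory.setIntegral_prod _ i1
  rw [intervalIntegral.integral_of_le (by positivity), ← MeasureTheory.integral_Icc_eq_integral_Ioc]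
  have e : ∀ r : ℝ, ∫ z in (0 : ℝ)..(2 * Real.pi), heatP t r z * F (r, z) * Real.sin (2 * r) =
      ∫ z in Set.Icc 0 (2 * Real.pi), heatP t r z * F (r, z) * Real.sin (2 * r) := by
    intro r
    rw [intervalIntegral.integral_of_le (by positivity), ← MeasureTheory.integral_Icc_eq_integral_Ioc]
  simp only [e]
  simp only at h1
  rw [← h1, ← MeasureTheory.integral_const_mul]
  change ∫ p in Bx, _ = _
  congr 1
  funext p
  unfold sg
  ring


/-- For every smooth `f : [0, π/2] × ℝ → ℝ` that is `2π`-periodic in its second variable,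
`(1/2π) ∫₀^{π/2} ∫₀^{2π} p_t(r,z) f(r,z) sin(2r) dz dr → f(0,0)` as `t → 0⁺`. -/
theorem stmt_3 (f : ℝ → ℝ → ℝ)
    (hf : ContDiffOn ℝ (⊤ : ℕ∞) (fun p : ℝ × ℝ => f p.1 p.2)
      (Set.Icc 0 (Real.pi / 2) ×ˢ (Set.univ : Set ℝ)))
    (hper : ∀ r z : ℝ, f r (z + 2 * Real.pi) = f r z) :
    Filter.Tendsto
      (fun t : ℝ => (1 / (2 * Real.pi)) *
        ∫ r in (0 : ℝ)..(Real.pi / 2), ∫ z in (0 : ℝ)..(2 * Real.pi),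
          heatP t r z * f r z * Real.sin (2 * r))
      (nhdsWithin 0 (Set.Ioi 0)) (nhds (f 0 0)) := by
  have hF : ContinuousOn (fun p : ℝ × ℝ => f p.1 p.2) Bx :=
    hf.continuousOn.mono (Set.prod_mono_right (Set.subset_univ _))
  refine (heat_tendsto (fun p => f p.1 p.2) hF (f 0 0) ?_).congr' ?_
  · intro p hp h
    obtain ⟨h1, h2⟩ := DD_zero hp h
    rcases h2 with h2 | h2
    · simp only [h1, h2]
    · simp only [h1, h2]
      have := hper 0 0
      rwa [zero_add] at this
  · filter_upwards [self_mem_nhdsWithin] with t ht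
    exact (iter_eq t ht (fun p => f p.1 p.2) hF).symm
end

section
/- The function u(t, r, z) := q_t(cos r · cos z) satisfies the heat equation of the round 3-sphere in cylindric coordinates: ∂u/∂t = ∂²u/∂r² + 2·cot(2r)·∂u/∂r + (1/cos²r)·∂²u/∂z², for all t > 0, r ∈ (0, π/2), z ∈ ℝ. -/
open Real

/-- The heat kernel `q_t(x) = Σ_{m=0}^∞ (m+1) e^{-m(m+2)t} U_m(x)` of the round 3-sphere,
where `U_m` is the Chebyshev polynomial of the second kind. -/
noncomputable def qKer (t x : ℝ) : ℝ :=
  ∑' m : ℕ, ((m : ℝ) + 1) * Real.exp (-((m : ℝ) * ((m : ℝ) + 2)) * t) *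
    (Polynomial.Chebyshev.U ℝ (m : ℤ)).eval x


open Polynomial in
lemma cheb_bound (k : ℕ) (hk : k ≤ 2) (n : ℕ) : ∀ x : ℝ, |x| ≤ 2 →
    |(derivative^[k] (Chebyshev.U ℝ (n : ℤ))).eval x| ≤ 9 ^ n := by
  have h0 : ∀ n : ℕ, ∀ x : ℝ, |x| ≤ 2 → |(Chebyshev.U ℝ (n : ℤ)).eval x| ≤ 9 ^ n := by
    intro n x hx
    induction n using Nat.twoStepInduction with
    | zero => simp
    | one => simp [abs_mul]; linarith
    | more n h1 h2 =>
      push_cast at h2 ⊢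
      rw [Chebyshev.U_add_two]
      simp only [eval_sub, eval_mul, eval_X, eval_ofNat]
      refine (abs_sub _ _).trans ?_
      rw [abs_mul, abs_mul, abs_two]
      have := mul_le_mul hx h2 (abs_nonneg _) (by norm_num)
      rw [pow_succ] at this
      rw [pow_add]
      nlinarith [pow_pos (show (0:ℝ) < 9 by norm_num) n]
  have h1 : ∀ n : ℕ, ∀ x : ℝ, |x| ≤ 2 →
      |(derivative (Chebyshev.U ℝ (n : ℤ))).eval x| ≤ 9 ^ n := by
    intro n x hx
    induction n using Nat.twoStepInduction with
    | zero => simp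
    | one => norm_num
    | more n h1 h2 =>
      have h3 := h0 (n+1) x hx
      push_cast at h2 h3 ⊢
      rw [Chebyshev.U_add_two]
      simp only [eval_sub, eval_mul, eval_X, eval_ofNat, derivative_sub, derivative_mul,
        derivative_X, derivative_ofNat, eval_add, eval_zero, zero_mul, eval_one, zero_add, mul_one]
      refine (abs_sub _ _).trans ?_
      have h4 := abs_add_le (2 * (Chebyshev.U ℝ ((n:ℤ)+1)).eval x)
        (2 * x * (derivative (Chebyshev.U ℝ ((n:ℤ)+1))).eval x)
      rw [abs_mul, abs_mul, abs_mul, abs_two] at h4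
      have := mul_le_mul hx h2 (abs_nonneg _) (by norm_num)
      rw [pow_succ] at this h3
      rw [pow_add]
      nlinarith [pow_pos (show (0:ℝ) < 9 by norm_num) n]
  have h2' : ∀ n : ℕ, ∀ x : ℝ, |x| ≤ 2 →
      |(derivative (derivative (Chebyshev.U ℝ (n : ℤ)))).eval x| ≤ 9 ^ n := by
    intro n x hx
    induction n using Nat.twoStepInduction with
    | zero => simp
    | one => simp
    | more n h1' h2 =>
      have h3 := h1 (n+1) x hx
      push_cast at h2 h3 ⊢
      rw [Chebyshev.U_add_two]
      simp only [eval_sub, eval_mul, eval_X, eval_ofNat, derivative_sub, derivative_mul,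
        derivative_X, derivative_ofNat, derivative_add, derivative_zero, derivative_one,
        eval_add, eval_zero, zero_mul, mul_zero, eval_one, zero_add, mul_one, add_zero]
      refine (abs_sub _ _).trans ?_
      have h5 := abs_add_le (2 * (derivative (Chebyshev.U ℝ ((n:ℤ)+1))).eval x)
        (2 * (derivative (Chebyshev.U ℝ ((n:ℤ)+1))).eval x +
          2 * x * (derivative (derivative (Chebyshev.U ℝ ((n:ℤ)+1)))).eval x)
      have h4 := abs_add_le (2 * (derivative (Chebyshev.U ℝ ((n:ℤ)+1))).eval x)
        (2 * x * (derivative (derivative (Chebyshev.U ℝ ((n:ℤ)+1)))).eval x)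
      rw [abs_mul 2 (eval _ _)] at h4 h5
      rw [abs_mul, abs_mul, abs_two] at h4
      rw [abs_two] at h5
      have := mul_le_mul hx h2 (abs_nonneg _) (by norm_num)
      rw [pow_succ] at this h3
      rw [pow_add]
      nlinarith [pow_pos (show (0:ℝ) < 9 by norm_num) n]
  interval_cases k
  · exact h0 n
  · exact h1 n
  · exact h2' n

lemma summable_maj (s : ℝ) (hs : 0 < s) :
    Summable (fun m : ℕ => Real.exp (-((m : ℝ) * ((m : ℝ) + 2)) * s) * 72 ^ m) := by
  refine Summable.of_norm_bounded_eventually_nat (g := fun m : ℕ => (1/2 : ℝ) ^ m)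
    (summable_geometric_of_lt_one (by norm_num) (by norm_num)) ?_
  have h : Filter.Tendsto (fun m : ℕ => Real.exp (-((m : ℝ) * s))) Filter.atTop (nhds 0) := by
    refine Real.tendsto_exp_neg_atTop_nhds_zero.comp ?_
    exact tendsto_natCast_atTop_atTop.atTop_mul_const hs
  filter_upwards [h.eventually_lt_const (show (0:ℝ) < 1/144 by norm_num)] with m hm
  rw [Real.norm_of_nonneg (by positivity)]
  have h1 : Real.exp (-((m : ℝ) * ((m : ℝ) + 2)) * s) ≤ Real.exp (-((m : ℝ) * s)) ^ m := by
    rw [← Real.exp_nat_mul]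
    apply Real.exp_le_exp.mpr
    have : 0 ≤ (m:ℝ) * s := by positivity
    nlinarith
  calc _ ≤ Real.exp (-((m : ℝ) * s)) ^ m * 72 ^ m := by gcongr
    _ = (Real.exp (-((m : ℝ) * s)) * 72) ^ m := by rw [mul_pow]
    _ ≤ _ := by gcongr; linarith

lemma cube_le (m : ℕ) : ((m:ℝ) + 1) ^ 3 ≤ 8 ^ m := by
  have : (m:ℝ) + 1 ≤ 2 ^ m := by exact_mod_cast Nat.lt_two_pow_self
  calc _ ≤ ((2:ℝ) ^ m) ^ 3 := by gcongr
    _ = _ := by rw [← pow_mul, mul_comm, pow_mul]; norm_num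

noncomputable def qF (k : ℕ) (t x : ℝ) (m : ℕ) : ℝ :=
  ((m : ℝ) + 1) * Real.exp (-((m : ℝ) * ((m : ℝ) + 2)) * t) *
    (Polynomial.derivative^[k] (Polynomial.Chebyshev.U ℝ (m : ℤ))).eval x

lemma qF_bound (k : ℕ) (hk : k ≤ 2) (s t x : ℝ) (hst : s ≤ t) (hx : |x| ≤ 2) (m : ℕ) :
    ‖qF k t x m‖ ≤ Real.exp (-((m : ℝ) * ((m : ℝ) + 2)) * s) * 72 ^ m ∧
    ‖-((m : ℝ) * ((m : ℝ) + 2)) * qF k t x m‖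
      ≤ Real.exp (-((m : ℝ) * ((m : ℝ) + 2)) * s) * 72 ^ m := by
  have hb := cheb_bound k hk m x hx
  have hc := cube_le m
  have he : Real.exp (-((m : ℝ) * ((m : ℝ) + 2)) * t) ≤
      Real.exp (-((m : ℝ) * ((m : ℝ) + 2)) * s) := by
    apply Real.exp_le_exp.mpr
    have : 0 ≤ (m:ℝ) * ((m:ℝ) + 2) := by positivity
    nlinarith
  have h72 : (72:ℝ) ^ m = 8 ^ m * 9 ^ m := by rw [← mul_pow]; norm_num
  have hm : (0:ℝ) ≤ m := by positivity
  have hn : ‖qF k t x m‖ ≤ ((m : ℝ) + 1) *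
      Real.exp (-((m : ℝ) * ((m : ℝ) + 2)) * s) * 9 ^ m := by
    unfold qF
    rw [norm_mul, Real.norm_of_nonneg (by positivity), Real.norm_eq_abs]
    gcongr
  set E := Real.exp (-((m : ℝ) * ((m : ℝ) + 2)) * s)
  have hE : 0 < E := Real.exp_pos _
  constructor
  · calc _ ≤ _ := hn
      _ = E * (((m:ℝ) + 1) * 9 ^ m) := by ring
      _ ≤ E * (8 ^ m * 9 ^ m) := by
        gcongr
        refine le_trans ?_ hc
        nlinarith [pow_nonneg hm 2, pow_nonneg hm 3]
      _ = _ := by rw [h72]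
  · rw [norm_mul, norm_neg, Real.norm_of_nonneg (by positivity)]
    calc _ ≤ ((m : ℝ) * ((m : ℝ) + 2)) * (((m : ℝ) + 1) * E * 9 ^ m) := by gcongr
      _ = E * ((((m : ℝ) * ((m : ℝ) + 2)) * ((m:ℝ) + 1)) * 9 ^ m) := by ring
      _ ≤ E * (8 ^ m * 9 ^ m) := by
        gcongr
        refine le_trans ?_ hc
        nlinarith [pow_nonneg hm 2, pow_nonneg hm 3]
      _ = _ := by rw [h72]

lemma qF_summable (k : ℕ) (hk : k ≤ 2) (t x : ℝ) (ht : 0 < t) (hx : |x| ≤ 2) :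
    Summable (qF k t x) :=
  Summable.of_norm_bounded (summable_maj t ht)
    (fun m => (qF_bound k hk t t x le_rfl hx m).1)

lemma qF_hasDerivAt (k : ℕ) (hk : k ≤ 1) (t x : ℝ) (ht : 0 < t) (hx : |x| < 2) :
    HasDerivAt (fun y => ∑' m, qF k t y m) (∑' m, qF (k+1) t x m) x := by
  refine hasDerivAt_tsum_of_isPreconnected (g := fun m y => qF k t y m)
    (g' := fun m y => qF (k+1) t y m) (summable_maj t ht) (t := Set.Ioo (-2) 2) (y₀ := x)
    isOpen_Ioo isPreconnected_Ioo ?_ ?_ (abs_lt.mp hx)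
    (qF_summable k (by omega) t x ht hx.le) (abs_lt.mp hx)
  · intro m y _
    unfold qF
    rw [Function.iterate_succ_apply']
    exact (Polynomial.hasDerivAt _ _).const_mul _
  · intro m y hy
    exact (qF_bound (k+1) (by omega) t t y le_rfl (abs_lt.mpr hy).le m).1

lemma qF_hasDerivAt_time (t x : ℝ) (ht : 0 < t) (hx : |x| < 2) :
    HasDerivAt (fun s => ∑' m, qF 0 s x m)
      (∑' m : ℕ, -((m : ℝ) * ((m : ℝ) + 2)) * qF 0 t x m) t := by
  have hmem : t ∈ Set.Ioi (t/2) := by simp [ht]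
  refine hasDerivAt_tsum_of_isPreconnected (g := fun m s => qF 0 s x m)
    (g' := fun (m : ℕ) s => -((m : ℝ) * ((m : ℝ) + 2)) * qF 0 s x m)
    (summable_maj (t/2) (by positivity)) (t := Set.Ioi (t/2)) (y₀ := t)
    isOpen_Ioi isPreconnected_Ioi ?_ ?_ hmem
    (qF_summable 0 (by omega) t x ht hx.le) hmem
  · intro m s _
    unfold qF
    have h := ((((hasDerivAt_id s).const_mul (-((m : ℝ) * ((m : ℝ) + 2)))).exp).const_mul
      ((m:ℝ)+1)).mul_const ((Polynomial.derivative^[0] (Polynomial.Chebyshev.U ℝ (m : ℤ))).eval x)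
    refine h.congr_deriv ?_
    simp only [id]
    ring
  · intro m s hs
    exact (qF_bound 0 (by omega) (t/2) s x (le_of_lt hs) hx.le m).2

lemma qF_ode (t x : ℝ) (m : ℕ) :
    -((m : ℝ) * ((m : ℝ) + 2)) * qF 0 t x m =
      (1 - x ^ 2) * qF 2 t x m - 3 * x * qF 1 t x m := by
  have h := congrArg (Polynomial.eval x)
    (Polynomial.Chebyshev.one_sub_X_sq_mul_derivative_derivative_U_eq_poly_in_U (R := ℝ) (m : ℤ))
  simp at h
  simp only [qF, Function.iterate_succ_apply, Function.iterate_zero, id]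
  linear_combination (-((m : ℝ) + 1) * Real.exp (-((m : ℝ) * ((m : ℝ) + 2)) * t)) * h

/-- The function `u(t,r,z) = q_t(cos r cos z)` satisfies the heat equation of the round
3-sphere in cylindric coordinates:
`∂u/∂t = ∂²u/∂r² + 2 cot(2r) ∂u/∂r + (1/cos²r) ∂²u/∂z²`. -/
theorem stmt_4 (t : ℝ) (ht : 0 < t) (r : ℝ) (hr : r ∈ Set.Ioo 0 (Real.pi / 2)) (z : ℝ) :
    deriv (fun t' => qKer t' (Real.cos r * Real.cos z)) t =
      deriv (fun r' => deriv (fun r'' => qKer t (Real.cos r'' * Real.cos z)) r') r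
        + 2 * (Real.cos (2 * r) / Real.sin (2 * r)) *
            deriv (fun r' => qKer t (Real.cos r' * Real.cos z)) r
        + (1 / Real.cos r ^ 2) *
            deriv (fun z' => deriv (fun z'' => qKer t (Real.cos r * Real.cos z'')) z') z := by
  
  have hq : ∀ s x, qKer s x = ∑' m, qF 0 s x m := fun s x => rfl
  have hlt : ∀ a b : ℝ, |Real.cos a * Real.cos b| < 2 := by
    intro a b
    rw [abs_mul]
    have := mul_le_mul (Real.abs_cos_le_one a) (Real.abs_cos_le_one b) (abs_nonneg _) (by norm_num)
    linarith
  simp only [hq]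
  set f1 : ℝ → ℝ := fun y => ∑' m, qF 1 t y m with hf1
  set f2 : ℝ → ℝ := fun y => ∑' m, qF 2 t y m with hf2
  have hr1 : ∀ r' : ℝ, HasDerivAt (fun r'' => ∑' m, qF 0 t (Real.cos r'' * Real.cos z) m)
      (f1 (Real.cos r' * Real.cos z) * (-Real.sin r' * Real.cos z)) r' := by
    intro r'
    have h := (qF_hasDerivAt 0 (by omega) t _ ht (hlt r' z)).comp r'
      ((Real.hasDerivAt_cos r').mul_const (Real.cos z))
    exact h
  have hz1 : ∀ z' : ℝ, HasDerivAt (fun z'' => ∑' m, qF 0 t (Real.cos r * Real.cos z'') m)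
      (f1 (Real.cos r * Real.cos z') * (Real.cos r * -Real.sin z')) z' := by
    intro z'
    have h := (qF_hasDerivAt 0 (by omega) t _ ht (hlt r z')).comp z'
      ((Real.hasDerivAt_cos z').const_mul (Real.cos r))
    exact h
  have hr2 := ((qF_hasDerivAt 1 (by omega) t _ ht (hlt r z)).comp r
      ((Real.hasDerivAt_cos r).mul_const (Real.cos z))).mul
      ((Real.hasDerivAt_sin r).neg.mul_const (Real.cos z))
  have hz2 := ((qF_hasDerivAt 1 (by omega) t _ ht (hlt r z)).comp z
      ((Real.hasDerivAt_cos z).const_mul (Real.cos r))).mul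
      ((Real.hasDerivAt_sin z).neg.const_mul (Real.cos r))
  have er : (fun r' => deriv (fun r'' => ∑' m, qF 0 t (Real.cos r'' * Real.cos z) m) r') =
      fun r' => f1 (Real.cos r' * Real.cos z) * (-Real.sin r' * Real.cos z) :=
    funext fun r' => (hr1 r').deriv
  have ez : (fun z' => deriv (fun z'' => ∑' m, qF 0 t (Real.cos r * Real.cos z'') m) z') =
      fun z' => f1 (Real.cos r * Real.cos z') * (Real.cos r * -Real.sin z') :=
    funext fun z' => (hz1 z').deriv
  have er2 : deriv (fun r' => f1 (Real.cos r' * Real.cos z) * (-Real.sin r' * Real.cos z)) r =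
      f2 (Real.cos r * Real.cos z) * (-Real.sin r * Real.cos z) * (-Real.sin r * Real.cos z)
       + f1 (Real.cos r * Real.cos z) * (-Real.cos r * Real.cos z) := hr2.deriv
  have ez2 : deriv (fun z' => f1 (Real.cos r * Real.cos z') * (Real.cos r * -Real.sin z')) z =
      f2 (Real.cos r * Real.cos z) * (Real.cos r * -Real.sin z) * (Real.cos r * -Real.sin z)
       + f1 (Real.cos r * Real.cos z) * (Real.cos r * -Real.cos z) := hz2.deriv
  rw [(qF_hasDerivAt_time t _ ht (hlt r z)).deriv, er, ez, er2, ez2, (hr1 r).deriv]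
  have hs := hlt r z
  have hsum : (∑' m : ℕ, -((m : ℝ) * ((m : ℝ) + 2)) * qF 0 t (Real.cos r * Real.cos z) m) =
      (1 - (Real.cos r * Real.cos z) ^ 2) * f2 (Real.cos r * Real.cos z)
        - 3 * (Real.cos r * Real.cos z) * f1 (Real.cos r * Real.cos z) := by
    simp only [qF_ode, hf1, hf2]
    rw [Summable.tsum_sub ((qF_summable 2 (by omega) t _ ht hs.le).mul_left _)
      ((qF_summable 1 (by omega) t _ ht hs.le).mul_left _), tsum_mul_left, tsum_mul_left]
  rw [hsum]
  generalize f1 (Real.cos r * Real.cos z) = A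
  generalize f2 (Real.cos r * Real.cos z) = B
  have hsin : Real.sin r ≠ 0 := (Real.sin_pos_of_pos_of_lt_pi hr.1 (by linarith [hr.2, Real.pi_pos])).ne'
  have hcos : Real.cos r ≠ 0 := (Real.cos_pos_of_mem_Ioo ⟨by linarith [hr.1, Real.pi_pos], hr.2⟩).ne'
  rw [Real.cos_two_mul, Real.sin_two_mul]
  have h1 := Real.sin_sq_add_cos_sq r
  have h2 := Real.sin_sq_add_cos_sq z
  field_simp
  have h1' : Real.sin r ^ 2 = 1 - Real.cos r ^ 2 := by linarith
  have h2' : Real.sin z ^ 2 = 1 - Real.cos z ^ 2 := by linarith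
  ring_nf
  simp only [h1', h2']
  ring
end

section
/- For every t > 0 and every θ ∈ ℝ, one has the identity Σ_{m=0}^∞ (m+1) · e^{-m(m+2)t} · sin((m+1)θ) = (√π · e^t / (4 t^{3/2})) · Σ_{k∈ℤ} (θ + 2kπ) · e^{-(θ+2kπ)²/(4t)}. Equivalently, for sin θ ≠ 0, q_t(cos θ) = (√π · e^t / (4 t^{3/2})) · (1/sin θ) · Σ_{k∈ℤ} (θ + 2kπ) · e^{-(θ+2kπ)²/(4t)}. -/
open Real

theorem aux_first (t : ℝ) (ht : 0 < t) (θ : ℝ) :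
    (∑' m : ℕ, ((m : ℝ) + 1) * Real.exp (-((m : ℝ) * ((m : ℝ) + 2)) * t) *
        Real.sin (((m : ℝ) + 1) * θ)) =
      (Real.sqrt Real.pi * Real.exp t / (4 * t ^ ((3 : ℝ) / 2))) *
        ∑' k : ℤ, (θ + 2 * (k : ℝ) * Real.pi) *
          Real.exp (-(θ + 2 * (k : ℝ) * Real.pi) ^ 2 / (4 * t)) := by
  have hpi := Real.pi_pos
  have hs : 0 < t / Real.pi := by positivity
  have hx : 0 < Real.pi / t := by positivity
  have h1 := HurwitzZeta.hasSum_nat_sinKernel (θ / (2 * Real.pi)) hs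
  have h2 := HurwitzZeta.hasSum_int_oddKernel (θ / (2 * Real.pi)) hx
  have h3 := HurwitzZeta.oddKernel_functional_equation
    ((θ / (2 * Real.pi) : ℝ) : UnitAddCircle) (Real.pi / t)
  rw [one_div_div] at h3
  have h1' := (hasSum_nat_add_iff' 1).mpr h1
  simp only [Finset.sum_range_one, Nat.cast_zero, mul_zero, zero_mul, sub_zero] at h1'
  have e1 := (h1'.mul_left (Real.exp t / 2)).tsum_eq
  have e2 := (h2.mul_left (2 * Real.pi)).tsum_eq
  have l1 : (∑' m : ℕ, ((m : ℝ) + 1) * Real.exp (-((m : ℝ) * ((m : ℝ) + 2)) * t) *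
        Real.sin (((m : ℝ) + 1) * θ)) = Real.exp t / 2 *
          HurwitzZeta.sinKernel ((θ / (2 * Real.pi) : ℝ) : UnitAddCircle) (t / Real.pi) := by
    rw [← e1]
    refine tsum_congr fun m => ?_
    have a1 : Real.exp (-((m : ℝ) * ((m : ℝ) + 2)) * t)
        = Real.exp t * Real.exp (-Real.pi * ((m + 1 : ℕ) : ℝ) ^ 2 * (t / Real.pi)) := by
      rw [← Real.exp_add]
      congr 1
      push_cast
      field_simp
      ring
    have a2 : 2 * Real.pi * (θ / (2 * Real.pi)) * ((m + 1 : ℕ) : ℝ) = ((m : ℝ) + 1) * θ := by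
      push_cast
      field_simp
    rw [a1, a2]
    push_cast
    ring
  have l2 : (∑' k : ℤ, (θ + 2 * (k : ℝ) * Real.pi) *
          Real.exp (-(θ + 2 * (k : ℝ) * Real.pi) ^ 2 / (4 * t))) = 2 * Real.pi *
          HurwitzZeta.oddKernel ((θ / (2 * Real.pi) : ℝ) : UnitAddCircle) (Real.pi / t) := by
    rw [← e2]
    refine tsum_congr fun k => ?_
    have a1 : -(θ + 2 * (k : ℝ) * Real.pi) ^ 2 / (4 * t)
        = -Real.pi * ((k : ℝ) + θ / (2 * Real.pi)) ^ 2 * (Real.pi / t) := by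
      field_simp
      ring
    rw [a1, ← mul_assoc]
    congr 1
    field_simp
    ring
  rw [l1, l2, h3, Real.div_rpow hpi.le ht.le]
  have p1 : Real.pi ^ ((3 : ℝ) / 2) = Real.pi * Real.sqrt Real.pi := by
    rw [Real.sqrt_eq_rpow, ← Real.rpow_one_add' hpi.le (by norm_num)]
    norm_num
  have p2 : 0 < t ^ ((3 : ℝ) / 2) := by positivity
  have p3 : 0 < Real.sqrt Real.pi := by positivity
  rw [p1]
  field_simp
  ring

/-- Poisson-summation identity: for `t > 0` and `θ ∈ ℝ`,
`Σ_{m≥0} (m+1) e^{-m(m+2)t} sin((m+1)θ)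
  = (√π e^t/(4 t^{3/2})) Σ_{k∈ℤ} (θ+2kπ) e^{-(θ+2kπ)²/(4t)}`;
equivalently, for `sin θ ≠ 0`,
`q_t(cos θ) = (√π e^t/(4 t^{3/2})) (1/sin θ) Σ_{k∈ℤ} (θ+2kπ) e^{-(θ+2kπ)²/(4t)}`. -/
theorem stmt_6 (t : ℝ) (ht : 0 < t) (θ : ℝ) :
    (∑' m : ℕ, ((m : ℝ) + 1) * Real.exp (-((m : ℝ) * ((m : ℝ) + 2)) * t) *
        Real.sin (((m : ℝ) + 1) * θ)) =
      (Real.sqrt Real.pi * Real.exp t / (4 * t ^ ((3 : ℝ) / 2))) *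
        ∑' k : ℤ, (θ + 2 * (k : ℝ) * Real.pi) *
          Real.exp (-(θ + 2 * (k : ℝ) * Real.pi) ^ 2 / (4 * t)) ∧
    (Real.sin θ ≠ 0 → qKer t (Real.cos θ) =
      (Real.sqrt Real.pi * Real.exp t / (4 * t ^ ((3 : ℝ) / 2))) * (1 / Real.sin θ) *
        ∑' k : ℤ, (θ + 2 * (k : ℝ) * Real.pi) *
          Real.exp (-(θ + 2 * (k : ℝ) * Real.pi) ^ 2 / (4 * t))) := by
  have h := aux_first t ht θ
  refine ⟨h, fun hs => ?_⟩
  rw [mul_right_comm, ← h, qKer, ← tsum_mul_right]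
  refine tsum_congr fun m => ?_
  have hU := Polynomial.Chebyshev.U_real_cos θ (m : ℤ)
  push_cast at hU
  rw [← hU]
  field_simp
end
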